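/- arXiv:2604.01992 — 2 statements merged into one kernel-verified Lean document; each statement's English description precedes it below -/
import Mathlib

section
/- Let (K, v_K) be a field with a non-trivial real-valued valuation, let L be a finite separable field extension of K, and let v_L be a real-valued valuation on L extending v_K, with rings of integers K° and L°. Then H₁(𝕃_{L°/K°}) = 0, i.e. the L°-module Algebra.H1Cotangent K° L° is trivial. -/
set_option synthInstance.maxHeartbeats 800000
set_option maxHeartbeats 1600000

noncomputable section

/-- The unit ball (ring of integers) of a real-valued additive semi-valuation. -/
def AddValuation.unitBall {A : Type*} [CommRing A] (v : AddValuation A (WithTop ℝ)) :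
    Subring A where
  carrier := {a | 0 ≤ v a}
  zero_mem' := by simp only [Set.mem_setOf_eq, AddValuation.map_zero]; exact le_top
  one_mem' := by simp only [Set.mem_setOf_eq, AddValuation.map_one]; exact le_refl _
  add_mem' := by
    intro a b ha hb
    exact le_trans (le_min ha hb) (v.map_add a b)
  mul_mem' := by
    intro a b ha hb
    simp only [Set.mem_setOf_eq, AddValuation.map_mul]
    exact add_nonneg ha hb
  neg_mem' := by
    intro a ha
    simpa only [Set.mem_setOf_eq, AddValuation.map_neg] using ha

/-- A real-valued additive valuation on a field is *non-trivial* if it does not vanish on all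
of `K^×`. -/
def AddValuation.IsNontrivial {K : Type*} [Field K] (v : AddValuation K (WithTop ℝ)) : Prop :=
  ∃ x : K, x ≠ 0 ∧ v x ≠ 0

/-!
Present `B = L°` over `A = K°` as a quotient of a polynomial ring with relation ideal `I`. Then
`H₁(𝕃_{B/A})` vanishes as soon as every relation `F ∈ I`, all of whose partial derivatives lie in
`I`, belongs to `I²`.

If the value group of `K` is discrete, then `A` is a discrete valuation ring and `B` is a
localization of the integral closure of `A` in `L`, hence a quotient `R/J` of a localized
polynomial ring `R` over `A`. The number of generators of `J` is less than the embedding dimension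
of `R`, hence at most the rank of `Ω_{R/A}`, and `Ω_{B/A}` is torsion, so `J/J² → B ⊗ Ω_{R/A}` is
injective.

If the value group of `K` is dense, write `L = K(x)` and let the coefficients of the relations
range over subrings of `K[X]`, where `X` acts as `x`. Over the polynomials `g` with `w(g(x)) ≤ 1`,
separability of `x` makes `F` lie in the square of the relation ideal. These polynomials are
governed by the Gauss norms on small discs around `x`. As the radius grows, the unit ball of the
Gauss norm is generated by polynomials of degree less than that of a key polynomial `Q` together
with a multiple of `Q`, and passing from one radius to the next adjoins or removes a single
element, which does not affect membership of `F` in the square. In this way the degree of `Q`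
decreases until it is one; then the unit ball is `A[cQ]`, and `F` lies in the square over `A`
itself.
-/

open NNReal
open scoped Pointwise

section VanishingSq

open MvPolynomial

variable {σ E L : Type*} [CommRing E] [CommRing L] {φ : E →+* L} {y : σ → L}

theorem mem_range_map_subtype_iff {S : Subring E} {p : MvPolynomial σ E} :
    p ∈ (map S.subtype).range ↔ ∀ m, coeff m p ∈ S := by
  refine ⟨?_, fun hp => ?_⟩
  · rintro ⟨P, rfl⟩ m
    rw [coeff_map]
    exact (coeff m P).2
  · rw [RingHom.mem_range, ← Set.mem_range, mem_range_map_iff_coeffs_subset]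
    intro c hc
    obtain ⟨m, -, rfl⟩ := mem_coeffs_iff.mp hc
    exact ⟨⟨_, hp m⟩, rfl⟩

variable (φ y) in
/-- The polynomials with coefficients in `S` that vanish at the point `y` under `φ`: the ideal of
relations of the `S`-algebra generated by `y`, regarded inside `E[Y]` so that different coefficient
rings `S` can be compared. -/
def vanishing (S : Subring E) : AddSubmonoid (MvPolynomial σ E) where
  carrier := {p | p ∈ (map S.subtype).range ∧ eval₂ φ y p = 0}
  zero_mem' := ⟨zero_mem _, eval₂_zero φ y⟩
  add_mem' hp hq := ⟨add_mem hp.1 hq.1, by rw [eval₂_add, hp.2, hq.2, add_zero]⟩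

variable (φ y) in
/-- The square of the ideal `vanishing φ y S` of `S[Y]`. -/
def vanishingSq (S : Subring E) : AddSubmonoid (MvPolynomial σ E) :=
  vanishing φ y S * vanishing φ y S

theorem coeff_mem_of_mem_vanishing {S : Subring E} {p : MvPolynomial σ E}
    (hp : p ∈ vanishing φ y S) (m : σ →₀ ℕ) : coeff m p ∈ S :=
  mem_range_map_subtype_iff.mp hp.1 m

theorem vanishing_mono {S T : Subring E} (hST : S ≤ T) : vanishing φ y S ≤ vanishing φ y T :=
  fun _ hp => ⟨mem_range_map_subtype_iff.mpr fun m => hST (coeff_mem_of_mem_vanishing hp m), hp.2⟩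

theorem vanishingSq_mono {S T : Subring E} (hST : S ≤ T) :
    vanishingSq φ y S ≤ vanishingSq φ y T :=
  AddSubmonoid.mul_le_mul (vanishing_mono hST) (vanishing_mono hST)

theorem mul_mem_vanishing {S : Subring E} {p q : MvPolynomial σ E} (hq : q ∈ (map S.subtype).range)
    (hp : p ∈ vanishing φ y S) : q * p ∈ vanishing φ y S :=
  ⟨mul_mem hq hp.1, by rw [eval₂_mul, hp.2, mul_zero]⟩

theorem mul_mem_vanishingSq {S : Subring E} {p q : MvPolynomial σ E}
    (hq : q ∈ (map S.subtype).range) (hp : p ∈ vanishingSq φ y S) :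
    q * p ∈ vanishingSq φ y S := by
  refine AddSubmonoid.mul_induction_on hp (fun p₁ hp₁ p₂ hp₂ => ?_) fun p₁ p₂ hp₁ hp₂ => ?_
  · rw [← mul_assoc]
    exact AddSubmonoid.mul_mem_mul (mul_mem_vanishing hq hp₁) hp₂
  · rw [mul_add]
    exact add_mem hp₁ hp₂

theorem mem_vanishing_range_iff {R : Type*} [CommRing R] (θ : R →+* E) {p : MvPolynomial σ E} :
    p ∈ vanishing φ y θ.range ↔
      ∃ P ∈ RingHom.ker (eval₂Hom (φ.comp θ) y), map θ P = p := by
  constructor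
  · intro hp
    obtain ⟨P, rfl⟩ : p ∈ Set.range (map (σ := σ) θ) := by
      rw [mem_range_map_iff_coeffs_subset]
      intro c hc
      obtain ⟨m, -, rfl⟩ := mem_coeffs_iff.mp hc
      exact coeff_mem_of_mem_vanishing hp m
    exact ⟨P, (eval₂_map θ y φ P).symm.trans hp.2, rfl⟩
  · rintro ⟨P, hP, rfl⟩
    exact ⟨mem_range_map_subtype_iff.mpr fun m => ⟨coeff m P, (coeff_map θ P m).symm⟩,
      (eval₂_map θ y φ P).trans hP⟩

theorem mem_vanishingSq_range_iff {R : Type*} [CommRing R] (θ : R →+* E) {p : MvPolynomial σ E} :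
    p ∈ vanishingSq φ y θ.range ↔
      ∃ P ∈ RingHom.ker (eval₂Hom (φ.comp θ) y) ^ 2, map θ P = p := by
  constructor
  · intro hp
    refine AddSubmonoid.mul_induction_on hp (fun p hp q hq => ?_) fun p q hp hq => ?_
    · obtain ⟨P, hP, rfl⟩ := (mem_vanishing_range_iff θ).mp hp
      obtain ⟨Q, hQ, rfl⟩ := (mem_vanishing_range_iff θ).mp hq
      refine ⟨P * Q, ?_, map_mul _ P Q⟩
      rw [pow_two]
      exact Ideal.mul_mem_mul hP hQ
    · obtain ⟨P, hP, rfl⟩ := hp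
      obtain ⟨Q, hQ, rfl⟩ := hq
      exact ⟨P + Q, add_mem hP hQ, map_add _ P Q⟩
  · rintro ⟨P, hP, rfl⟩
    rw [pow_two] at hP
    induction hP using Submodule.mul_induction_on' with
    | mem_mul_mem P hP Q hQ =>
      rw [map_mul]
      exact AddSubmonoid.mul_mem_mul ((mem_vanishing_range_iff θ).mpr ⟨P, hP, rfl⟩)
        ((mem_vanishing_range_iff θ).mpr ⟨Q, hQ, rfl⟩)
    | add P _ Q _ hP hQ =>
      rw [map_add]
      exact add_mem hP hQ

/-- The elements of `E` that lie in `T i` for all `i` far along the filter `l`. -/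
def eventualSubring {ι : Type*} (l : Filter ι) (T : ι → Subring E) : Subring E where
  carrier := {g | ∀ᶠ i in l, g ∈ T i}
  zero_mem' := .of_forall fun i => zero_mem (T i)
  one_mem' := .of_forall fun i => one_mem (T i)
  add_mem' hg hh := by filter_upwards [hg, hh] with i using add_mem
  mul_mem' hg hh := by filter_upwards [hg, hh] with i using mul_mem
  neg_mem' hg := by filter_upwards [hg] with i using neg_mem

theorem eventually_mem_vanishing {ι : Type*} {l : Filter ι} {T : ι → Subring E}
    {p : MvPolynomial σ E} (hp : p ∈ vanishing φ y (eventualSubring l T)) :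
    ∀ᶠ i in l, p ∈ vanishing φ y (T i) := by
  filter_upwards [(Filter.eventually_all_finset p.support).mpr
    fun m _ => coeff_mem_of_mem_vanishing hp m] with i hi
  refine ⟨mem_range_map_subtype_iff.mpr fun m => ?_, hp.2⟩
  by_cases hm : m ∈ p.support
  · exact hi m hm
  · rw [notMem_support_iff.mp hm]
    exact zero_mem (T i)

theorem eventually_mem_vanishingSq {ι : Type*} {l : Filter ι} {T : ι → Subring E}
    {p : MvPolynomial σ E} (hp : p ∈ vanishingSq φ y (eventualSubring l T)) :
    ∀ᶠ i in l, p ∈ vanishingSq φ y (T i) := by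
  refine AddSubmonoid.mul_induction_on hp (fun p hp q hq => ?_) fun p q hp hq => ?_
  · filter_upwards [eventually_mem_vanishing hp, eventually_mem_vanishing hq] with i
    exact AddSubmonoid.mul_mem_mul
  · filter_upwards [hp, hq] with i using add_mem

theorem adjoin_eventualSubring_le {ι : Type*} (l : Filter ι) (T : ι → Subring E) (s : E) :
    (Algebra.adjoin (eventualSubring l T) {s}).toSubring ≤
      eventualSubring l fun i => (Algebra.adjoin (T i) {s}).toSubring := by
  intro g hg
  induction hg using Algebra.adjoin_induction with
  | mem g hg => exact .of_forall fun i => Algebra.subset_adjoin hg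
  | algebraMap g =>
    filter_upwards [g.2] with i hi
    exact (Algebra.adjoin (T i) {s}).algebraMap_mem ⟨g, hi⟩
  | add g h _ _ hg hh => exact add_mem hg hh
  | mul g h _ _ hg hh => exact mul_mem hg hh

theorem exists_C_mul_mem_vanishing {S T : Subring E} {M : Submonoid E} (hMT : M ≤ T.toSubmonoid)
    (hS : ∀ g ∈ S, ∃ u ∈ M, u * g ∈ T) {p : MvPolynomial σ E} (hp : p ∈ vanishing φ y S) :
    ∃ u ∈ M, C u * p ∈ vanishing φ y T := by
  classical
  choose! u hu huT using fun m => hS _ (coeff_mem_of_mem_vanishing hp m)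
  refine ⟨∏ m ∈ p.support, u m, prod_mem fun m _ => hu m,
    mem_range_map_subtype_iff.mpr fun m => ?_, by rw [eval₂_mul, hp.2, mul_zero]⟩
  rw [coeff_C_mul]
  by_cases hm : m ∈ p.support
  · rw [← Finset.prod_erase_mul _ _ hm, mul_assoc]
    exact mul_mem (prod_mem fun n _ => hMT (hu n)) (huT m)
  · rw [notMem_support_iff.mp hm, mul_zero]
    exact zero_mem T

theorem C_mem_range_map_subtype {S : Subring E} {u : E} (hu : u ∈ S) :
    (C u : MvPolynomial σ E) ∈ (map S.subtype).range :=
  ⟨C ⟨u, hu⟩, map_C _ _⟩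

theorem exists_C_mul_mem_vanishingSq {S T : Subring E} {M : Submonoid E} (hMT : M ≤ T.toSubmonoid)
    (hS : ∀ g ∈ S, ∃ u ∈ M, u * g ∈ T) {p : MvPolynomial σ E} (hp : p ∈ vanishingSq φ y S) :
    ∃ u ∈ M, C u * p ∈ vanishingSq φ y T := by
  refine AddSubmonoid.mul_induction_on hp (fun p hp q hq => ?_) fun p q hp hq => ?_
  · obtain ⟨u, hu, hup⟩ := exists_C_mul_mem_vanishing hMT hS hp
    obtain ⟨v, hv, hvq⟩ := exists_C_mul_mem_vanishing hMT hS hq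
    refine ⟨u * v, mul_mem hu hv, ?_⟩
    rw [C_mul, mul_mul_mul_comm]
    exact AddSubmonoid.mul_mem_mul hup hvq
  · obtain ⟨u, hu, hup⟩ := hp
    obtain ⟨v, hv, hvq⟩ := hq
    refine ⟨u * v, mul_mem hu hv, ?_⟩
    have huv : C (u * v) * (p + q) = C v * (C u * p) + C u * (C v * q) := by
      rw [C_mul]
      ring
    rw [huv]
    exact add_mem (mul_mem_vanishingSq (C_mem_range_map_subtype (hMT hv)) hup)
      (mul_mem_vanishingSq (C_mem_range_map_subtype (hMT hu)) hvq)

theorem mem_vanishingSq_of_localization {S T : Subring E} {M : Submonoid E}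
    (hMT : M ≤ T.toSubmonoid) (hM : ∀ u ∈ M, ∃ b, φ u * y b = 1)
    (hS : ∀ g ∈ S, ∃ u ∈ M, u * g ∈ T) {p : MvPolynomial σ E} (hpT : p ∈ vanishing φ y T)
    (hpS : p ∈ vanishingSq φ y S) : p ∈ vanishingSq φ y T := by
  -- A denominator `u` can be cleared because `1 - u X_b` is itself a relation over `T`.
  obtain ⟨u, hu, hup⟩ := exists_C_mul_mem_vanishingSq hMT hS hpS
  obtain ⟨b, hb⟩ := hM u hu
  have hX : (X b : MvPolynomial σ E) ∈ (map T.subtype).range := ⟨X b, map_X _ b⟩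
  have hu1 : (1 - C u * X b : MvPolynomial σ E) ∈ vanishing φ y T :=
    ⟨sub_mem (one_mem _) (mul_mem (C_mem_range_map_subtype (hMT hu)) hX), by
      rw [eval₂_sub, eval₂_mul, eval₂_one, eval₂_C, eval₂_X, hb, sub_self]⟩
  have hp : p = (1 - C u * X b) * p + X b * (C u * p) := by ring
  rw [hp]
  exact add_mem (AddSubmonoid.mul_mem_mul hu1 hpT) (mul_mem_vanishingSq hX hup)

end VanishingSq

section AdjoinStep

open MvPolynomial

theorem eval_derivative_mem_of_mem_sq {R : Type*} [CommRing R] {I : Ideal R} {r : R}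
    {g : Polynomial R} (hg : g ∈ I.comap (Polynomial.evalRingHom r) ^ 2) :
    g.derivative.eval r ∈ I := by
  rw [pow_two] at hg
  induction hg using Submodule.mul_induction_on' with
  | mem_mul_mem g hg h hh =>
    rw [Polynomial.derivative_mul, Polynomial.eval_add, Polynomial.eval_mul, Polynomial.eval_mul]
    exact add_mem (I.mul_mem_left _ hh) (I.mul_mem_right _ hg)
  | add g _ h _ hg hh =>
    rw [Polynomial.derivative_add, Polynomial.eval_add]
    exact add_mem hg hh

theorem mem_sq_of_C_mem_sup_span {R : Type*} [CommRing R] {I : Ideal R} [I.IsPrime] {r : R}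
    {p : Polynomial R} (hp : p.eval r ∈ I) (hp' : p = 0 ∨ p.derivative.eval r ∉ I) {a : R}
    (ha : Polynomial.C a ∈ I.comap (Polynomial.evalRingHom r) ^ 2 ⊔ Ideal.span {p}) :
    a ∈ I ^ 2 := by
  obtain ⟨g, hg, q, hq, hgq⟩ := Submodule.mem_sup.mp ha
  obtain ⟨t, rfl⟩ := Ideal.mem_span_singleton.mp hq
  have ha : a = g.eval r + p.eval r * t.eval r := by
    rw [← Polynomial.eval_mul, ← Polynomial.eval_add, hgq, Polynomial.eval_C]
  rw [ha]
  refine add_mem (Ideal.le_comap_pow (Polynomial.evalRingHom r) 2 hg) ?_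
  rcases hp' with rfl | hderiv_notMem
  · rw [Polynomial.eval_zero, zero_mul]
    exact zero_mem _
  · have hderiv : p.derivative.eval r * t.eval r =
        -(g.derivative.eval r + p.eval r * t.derivative.eval r) := by
      have h0 := congrArg (fun g => g.derivative.eval r) hgq
      simp only [Polynomial.derivative_add, Polynomial.derivative_mul, Polynomial.eval_add,
        Polynomial.eval_mul, Polynomial.derivative_C, Polynomial.eval_zero] at h0
      linear_combination h0
    have ht : p.derivative.eval r * t.eval r ∈ I :=
      hderiv ▸ neg_mem (add_mem (eval_derivative_mem_of_mem_sq hg) (I.mul_mem_right _ hp))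
    rw [pow_two]
    exact Ideal.mul_mem_mul hp ((Ideal.IsPrime.mem_or_mem ‹_› ht).resolve_left hderiv_notMem)

/-- The interchange `R[X][Y] → R[Y][X]` of the two layers of variables. -/
def interchange (σ R : Type*) [CommRing R] :
    MvPolynomial σ (Polynomial R) →+* Polynomial (MvPolynomial σ R) :=
  eval₂Hom (Polynomial.mapRingHom C) fun b => Polynomial.C (X b)

variable {σ R L : Type*} [CommRing R] [Field L]

theorem interchange_C (z : Polynomial R) : interchange σ R (C z) = z.map C :=
  eval₂Hom_C _ _ z

theorem interchange_map_C (F : MvPolynomial σ R) :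
    interchange σ R (map Polynomial.C F) = Polynomial.C F := by
  have : (interchange σ R).comp (map Polynomial.C) = Polynomial.C := by
    ext <;> simp [interchange]
  exact DFunLike.congr_fun this F

theorem eval₂Hom_eval_interchange (ψ : R →+* L) (y : σ → L) (b : σ)
    (W : MvPolynomial σ (Polynomial R)) :
    eval₂Hom ψ y ((interchange σ R W).eval (X b)) =
      eval₂Hom (Polynomial.eval₂RingHom ψ (y b)) y W := by
  have : (eval₂Hom ψ y).comp ((Polynomial.evalRingHom (X b)).comp (interchange σ R)) =
      eval₂Hom (Polynomial.eval₂RingHom ψ (y b)) y := by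
    ext <;> simp [interchange]
  exact DFunLike.congr_fun this W

theorem eval₂Hom_eval_map_C (ψ : R →+* L) (y : σ → L) (b : σ) (z : Polynomial R) :
    eval₂Hom ψ y ((z.map C).eval (X b)) = z.eval₂ ψ (y b) := by
  rw [← interchange_C, eval₂Hom_eval_interchange, eval₂Hom_C]
  rfl

theorem map_C_mem_sq_sup_span {ψ : R →+* L} {y : σ → L} {b c : σ} {e : R} {p z : Polynomial R}
    (hz : z.eval₂ ψ (y b) = 0) (hec : ψ e * y c = 1) (hpz : p ∣ Polynomial.C e * z) :
    z.map C ∈ (RingHom.ker (eval₂Hom ψ y)).comap (Polynomial.evalRingHom (X b)) ^ 2 ⊔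
      Ideal.span {p.map C} := by
  set J := (RingHom.ker (eval₂Hom ψ y)).comap (Polynomial.evalRingHom (X b))
  obtain ⟨q, hq⟩ := hpz
  have hzJ : z.map C ∈ J := (eval₂Hom_eval_map_C ψ y b z).trans hz
  have heJ : 1 - Polynomial.C (C e * X c) ∈ J := by
    change eval₂Hom ψ y ((1 - Polynomial.C (C e * X c)).eval (X b)) = 0
    rw [Polynomial.eval_sub, Polynomial.eval_one, Polynomial.eval_C, map_sub, map_one, map_mul,
      eval₂Hom_C, eval₂Hom_X', hec, sub_self]
  have hsplit : z.map C = z.map C * (1 - Polynomial.C (C e * X c)) +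
      p.map C * (Polynomial.C (X c) * q.map C) := by
    have hq' := congrArg (Polynomial.map (C : R →+* MvPolynomial σ R)) hq
    rw [Polynomial.map_mul, Polynomial.map_mul, Polynomial.map_C] at hq'
    rw [Polynomial.C_mul]
    linear_combination Polynomial.C (X c) * hq'
  rw [hsplit, pow_two]
  exact add_mem (Ideal.mem_sup_left (Ideal.mul_mem_mul hzJ heJ))
    (Ideal.mem_sup_right (Ideal.mul_mem_right _ _ (Ideal.mem_span_singleton_self _)))

theorem mem_sq_ker_eval₂Hom_of_adjoin {ψ : R →+* L} {y : σ → L} {b : σ} {Z : Ideal (Polynomial R)}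
    {p : Polynomial R} (hp : p.eval₂ ψ (y b) = 0)
    (hp' : p = 0 ∨ p.derivative.eval₂ ψ (y b) ≠ 0) (hZ : ∀ z ∈ Z, z.eval₂ ψ (y b) = 0)
    (hZp : ∀ z ∈ Z, ∃ e, (∃ c, ψ e * y c = 1) ∧ p ∣ Polynomial.C e * z)
    {F : MvPolynomial σ R} {W : MvPolynomial σ (Polynomial R)}
    (hW : W ∈ RingHom.ker (eval₂Hom (Polynomial.eval₂RingHom ψ (y b)) y) ^ 2)
    (hWF : W - map Polynomial.C F ∈ Z.map C) : F ∈ RingHom.ker (eval₂Hom ψ y) ^ 2 := by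
  set I := RingHom.ker (eval₂Hom ψ y)
  set J := I.comap (Polynomial.evalRingHom (X b))
  have : I.IsPrime := RingHom.ker_isPrime _
  have hWJ : interchange σ R W ∈ J ^ 2 :=
    Ideal.le_comap_pow (interchange σ R) 2 <| Ideal.pow_right_mono
      (fun V hV => (eval₂Hom_eval_interchange ψ y b V).trans hV) 2 hW
  have hZJ : Z.map C ≤ (J ^ 2 ⊔ Ideal.span {p.map C}).comap (interchange σ R) := by
    rw [Ideal.map_le_iff_le_comap]
    intro z hz
    obtain ⟨e, ⟨c, hec⟩, hpz⟩ := hZp z hz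
    rw [Ideal.mem_comap, Ideal.mem_comap, interchange_C]
    exact map_C_mem_sq_sup_span (hZ z hz) hec hpz
  refine mem_sq_of_C_mem_sup_span (r := X b) (p := p.map C) ?_ ?_ ?_
  · exact (eval₂Hom_eval_map_C ψ y b p).trans hp
  · refine hp'.imp (fun h => by rw [h, Polynomial.map_zero]) fun h hmem => h ?_
    rw [← eval₂Hom_eval_map_C, ← Polynomial.derivative_map]
    exact hmem
  · have hsub := sub_mem (Ideal.mem_sup_left hWJ) (hZJ hWF)
    rwa [← map_sub, sub_sub_cancel, interchange_map_C] at hsub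

variable {E : Type*} [CommRing E] {φ : E →+* L} {y : σ → L}

theorem mem_vanishingSq_of_mem_adjoin {S : Subring E} {s : E} (hs : ∃ b, y b = φ s)
    {p : Polynomial S} (hp : Polynomial.aeval s p = 0)
    (hp' : p = 0 ∨ φ (Polynomial.aeval s p.derivative) ≠ 0)
    (hker : ∀ z : Polynomial S, Polynomial.aeval s z = 0 →
      ∃ e : S, (∃ b, φ e * y b = 1) ∧ p ∣ Polynomial.C e * z)
    {F : MvPolynomial σ E} (hFS : F ∈ vanishing φ y S)
    (hF : F ∈ vanishingSq φ y (Algebra.adjoin S {s}).toSubring) : F ∈ vanishingSq φ y S := by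
  obtain ⟨b, hb⟩ := hs
  set θ : Polynomial S →+* E := (Polynomial.aeval s : Polynomial S →ₐ[S] E).toRingHom
  have eval₂_eq (z : Polynomial S) : z.eval₂ (φ.comp S.subtype) (y b) = φ (θ z) := by
    rw [hb, ← Polynomial.hom_eval₂]
    rfl
  have hcomp : φ.comp θ = Polynomial.eval₂RingHom (φ.comp S.subtype) (y b) :=
    RingHom.ext fun z => (eval₂_eq z).symm
  have hrange : (Algebra.adjoin S {s}).toSubring = θ.range := by
    rw [Algebra.adjoin_singleton_eq_range_aeval]
    rfl
  rw [hrange, mem_vanishingSq_range_iff, hcomp] at hF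
  rw [← S.range_subtype, mem_vanishing_range_iff] at hFS
  rw [← S.range_subtype, mem_vanishingSq_range_iff]
  obtain ⟨F₀, -, hF₀⟩ := hFS
  obtain ⟨W, hW, hWF⟩ := hF
  have hθC : θ.comp Polynomial.C = S.subtype := RingHom.ext fun r => Polynomial.aeval_C s r
  refine ⟨F₀, mem_sq_ker_eval₂Hom_of_adjoin (ψ := φ.comp S.subtype) (y := y)
    (Z := RingHom.ker θ) (p := p) ?_ ?_ ?_ hker hW ?_, hF₀⟩
  · rw [eval₂_eq]
    exact (congrArg φ hp).trans (map_zero φ)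
  · rwa [eval₂_eq]
  · intro z hz
    rw [eval₂_eq, RingHom.mem_ker.mp hz, map_zero]
  · rw [← ker_map, RingHom.mem_ker, map_sub, hWF, map_map, hθC, hF₀, sub_self]

end AdjoinStep

section ValuationStep

open MvPolynomial

variable {σ E L Γ₀ : Type*} [CommRing E] [Field L] [LinearOrderedCommGroupWithZero Γ₀]

theorem valuation_coeff_le_inv (N : Valuation E Γ₀) {s : E} (hs : 1 ≤ N s) {u : Polynomial E}
    (hu : ∀ k, N (((Polynomial.X - Polynomial.C s) * u).coeff k) ≤ 1) (k : ℕ) :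
    N (u.coeff k) ≤ (N s)⁻¹ := by
  have hs0 : 0 < N s := zero_lt_one.trans_le hs
  have le_inv {t : E} (ht : N (s * t) ≤ 1) : N t ≤ (N s)⁻¹ := by
    rwa [← one_div, le_div_iff₀ hs0, mul_comm, ← map_mul]
  induction k with
  | zero =>
    refine le_inv ?_
    simpa only [sub_mul, Polynomial.coeff_sub, Polynomial.coeff_C_mul, Polynomial.coeff_X_mul_zero,
      zero_sub, Valuation.map_neg] using hu 0
  | succ k ih =>
    refine le_inv ?_
    have hk : s * u.coeff (k + 1) =
        u.coeff k - ((Polynomial.X - Polynomial.C s) * u).coeff (k + 1) := by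
      rw [sub_mul, Polynomial.coeff_sub, Polynomial.coeff_X_mul, Polynomial.coeff_C_mul,
        sub_sub_cancel]
    rw [hk]
    exact N.map_sub_le (ih.trans (inv_le_one_of_one_le₀ hs)) (hu (k + 1))

theorem linear_dvd_C_mul_of_aeval_eq_zero {N : Valuation E Γ₀} {s h : E} (hs : 1 ≤ N s)
    (hh : N h = N s) {a b e : N.integer} (hb : (b : E) = a * s) (he : (e : E) = a * h)
    {z : Polynomial N.integer} (hz : Polynomial.aeval s z = 0) :
    Polynomial.C a * Polynomial.X - Polynomial.C b ∣ Polynomial.C e * z := by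
  obtain ⟨u, hu⟩ : Polynomial.X - Polynomial.C s ∣ z.map N.integer.subtype := by
    rw [Polynomial.dvd_iff_isRoot, Polynomial.IsRoot, Polynomial.eval_map]
    exact hz
  have hucoeff := valuation_coeff_le_inv N hs (u := u) fun k => by
    rw [← hu, Polynomial.coeff_map]
    exact (z.coeff k).2
  obtain ⟨q, hq⟩ : Polynomial.C h * u ∈ Polynomial.lifts N.integer.subtype := by
    rw [Polynomial.lifts_iff_coeff_lifts]
    intro k
    refine ⟨⟨h * u.coeff k, ?_⟩, (Polynomial.coeff_C_mul u).symm⟩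
    rw [Valuation.mem_integer_iff, map_mul, hh]
    exact (mul_le_mul_right (hucoeff k) _).trans_eq
      (mul_inv_cancel₀ (zero_lt_one.trans_le hs).ne')
  refine ⟨q, Polynomial.map_injective N.integer.subtype Subtype.coe_injective ?_⟩
  rw [Polynomial.coe_mapRingHom] at hq
  simp only [Polynomial.map_mul, Polynomial.map_sub, Polynomial.map_C, Polynomial.map_X, hq, hu,
    Subring.subtype_apply, hb, he, Polynomial.C_mul]
  ring

theorem mem_vanishingSq_integer_of_mem_adjoin {N : Valuation E Γ₀} {w : Valuation L Γ₀}
    {φ : E →+* L} {y : σ → L} (hy : ∀ z, w z ≤ 1 → ∃ b, y b = z) {s h h' : E}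
    (hs : 1 ≤ N s) (hws : w (φ s) ≤ 1) (hh : N h = (N s)⁻¹) (hwh : w (φ h) = (N s)⁻¹)
    (hh' : N h' = N s) (hwh' : w (φ h') = N s) {F : MvPolynomial σ E}
    (hFN : F ∈ vanishing φ y N.integer)
    (hF : F ∈ vanishingSq φ y (Algebra.adjoin N.integer {s}).toSubring) :
    F ∈ vanishingSq φ y N.integer := by
  have hs0 : N s ≠ 0 := (zero_lt_one.trans_le hs).ne'
  let hN : N.integer := ⟨h, hh.trans_le (inv_le_one_of_one_le₀ hs)⟩
  let hsN : N.integer := ⟨h * s, by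
    rw [Valuation.mem_integer_iff, map_mul, hh, inv_mul_cancel₀ hs0]⟩
  let e : N.integer := ⟨h * h', by
    rw [Valuation.mem_integer_iff, map_mul, hh, hh', inv_mul_cancel₀ hs0]⟩
  have hwe : w (φ (h * h')) = 1 := by rw [map_mul, map_mul, hwh, hwh', inv_mul_cancel₀ hs0]
  have hφe : φ (h * h') ≠ 0 := fun h0 => by rw [h0, map_zero] at hwe; exact zero_ne_one hwe
  obtain ⟨b, hb⟩ := hy (φ (h * h'))⁻¹ (by rw [map_inv₀, hwe, inv_one])
  refine mem_vanishingSq_of_mem_adjoin (hy _ hws)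
    (p := Polynomial.C hN * Polynomial.X - Polynomial.C hsN) ?_ (.inr ?_) (fun z hz =>
      ⟨e, ⟨b, hb ▸ mul_inv_cancel₀ hφe⟩,
        linear_dvd_C_mul_of_aeval_eq_zero hs hh' rfl rfl hz⟩) hFN hF
  · rw [map_sub, map_mul, Polynomial.aeval_C, Polynomial.aeval_C, Polynomial.aeval_X]
    exact sub_self _
  · rw [Polynomial.derivative_sub, Polynomial.derivative_C_mul, Polynomial.derivative_X, mul_one,
      Polynomial.derivative_C, sub_zero, Polynomial.aeval_C]
    intro h0
    exact inv_ne_zero hs0 (hwh.symm.trans ((congrArg w h0).trans (map_zero w)))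

end ValuationStep

section Criterion

open MvPolynomial
open scoped Polynomial

theorem subsingleton_h1Cotangent_of_mem_sq_ker {R S : Type*} [CommRing R] [CommRing S]
    [Algebra R S]
    (h : ∀ F : MvPolynomial S R, aeval (id : S → S) F = 0 →
      (∀ b, aeval (id : S → S) (pderiv b F) = 0) →
        F ∈ RingHom.ker (aeval (R := R) (id : S → S)) ^ 2) :
    Subsingleton (Algebra.H1Cotangent R S) := by
  let P := Algebra.Generators.self R S
  change Subsingleton P.toExtension.H1Cotangent
  rw [Algebra.Extension.subsingleton_h1Cotangent, injective_iff_map_eq_zero]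
  intro z hz
  obtain ⟨F, rfl⟩ := Algebra.Extension.Cotangent.mk_surjective z
  rw [Algebra.Extension.Cotangent.mk_eq_zero_iff]
  refine h F.1 F.2 fun b => ?_
  rw [Algebra.Extension.cotangentComplex_mk] at hz
  have hb := P.cotangentSpaceBasis_repr_one_tmul F.1 b
  erw [hz] at hb
  rw [map_zero, Finsupp.zero_apply] at hb
  exact hb.symm

theorem derivation_mem_of_pderiv_smul_mem {σ R M : Type*} [CommRing R] [AddCommGroup M]
    [Module R M] [Module (MvPolynomial σ R) M] [IsScalarTower R (MvPolynomial σ R) M]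
    (D : Derivation R (MvPolynomial σ R) M) {N : Submodule (MvPolynomial σ R) M}
    {F : MvPolynomial σ R} (hF : ∀ b, pderiv b F • D (X b) ∈ N) : D F ∈ N := by
  rw [← D.liftKaehlerDifferential_comp_D F,
    ← (KaehlerDifferential.mvPolynomialBasis R σ).linearCombination_repr
      (KaehlerDifferential.D R _ F),
    Finsupp.linearCombination_apply, map_finsuppSum]
  refine sum_mem fun b _ => ?_
  simp only [map_smul, KaehlerDifferential.mvPolynomialBasis_apply,
    Derivation.liftKaehlerDifferential_comp_D, KaehlerDifferential.mvPolynomialBasis_repr_apply]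
  exact hF b

theorem sub_C_eval_mem_sq_ker {σ R L : Type*} [CommRing R] [CommRing L]
    {e : MvPolynomial σ R →+* L} {g : σ → R} (hg : ∀ b, e (C (g b)) = e (X b))
    {F : MvPolynomial σ R} (hF : ∀ b, e (pderiv b F) = 0) :
    F - C (eval g F) ∈ RingHom.ker e ^ 2 := by
  set I := RingHom.ker e
  have sub_mem_ker (G : MvPolynomial σ R) : G - C (eval g G) ∈ I := by
    have : e = (e.comp C).comp (eval g) := by
      ext b
      · simp
      · simp [hg]
    rw [RingHom.mem_ker, map_sub, sub_eq_zero]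
    exact DFunLike.congr_fun this G
  let D : Derivation R (MvPolynomial σ R) (MvPolynomial σ R ⧸ I ^ 2) :=
    Derivation.mk' ((Ideal.Quotient.mkₐ R (I ^ 2)).toLinearMap ∘ₗ
      (LinearMap.id - Algebra.linearMap R _ ∘ₗ (aeval g).toLinearMap)) fun G H => by
      change Ideal.Quotient.mk _ (G * H - C (aeval g (G * H))) = Ideal.Quotient.mk _
        (G * (H - C (aeval g H))) + Ideal.Quotient.mk _ (H * (G - C (aeval g G)))
      rw [← map_add, Ideal.Quotient.eq, map_mul, C_mul, pow_two]
      convert neg_mem (Ideal.mul_mem_mul (sub_mem_ker G) (sub_mem_ker H)) using 1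
      simp only [aeval_eq_eval]
      ring
  have hD : D F ∈ (⊥ : Submodule (MvPolynomial σ R) (MvPolynomial σ R ⧸ I ^ 2)) := by
    refine derivation_mem_of_pderiv_smul_mem D fun b => ?_
    change Ideal.Quotient.mk _ (pderiv b F * (X b - C (eval g (X b)))) = 0
    rw [Ideal.Quotient.eq_zero_iff_mem, pow_two]
    exact Ideal.mul_mem_mul (hF b) (sub_mem_ker (X b))
  exact Ideal.Quotient.eq_zero_iff_mem.mp hD

theorem sub_C_eval_mem_vanishingSq {σ E L : Type*} [CommRing E] [CommRing L] {φ : E →+* L}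
    {S : Subring E} {y : σ → L} {g : σ → E} (hgS : ∀ b, g b ∈ S) (hg : ∀ b, φ (g b) = y b)
    {F : MvPolynomial σ E} (hFS : ∀ m, coeff m F ∈ S) (hF : ∀ b, eval₂ φ y (pderiv b F) = 0) :
    F - C (eval g F) ∈ vanishingSq φ y S := by
  obtain ⟨F₀, hF₀⟩ := mem_range_map_subtype_iff.mpr hFS
  let gS (b : σ) : S := ⟨g b, hgS b⟩
  rw [← S.range_subtype, mem_vanishingSq_range_iff]
  refine ⟨F₀ - C (eval gS F₀), sub_C_eval_mem_sq_ker (g := gS) ?_ ?_, ?_⟩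
  · intro b
    rw [coe_eval₂Hom, eval₂_C, eval₂_X]
    exact hg b
  · intro b
    rw [coe_eval₂Hom, ← eval₂_map, ← pderiv_map, hF₀]
    exact hF b
  · rw [map_sub, map_C, hF₀, eval₂_comp, ← eval_map, hF₀]
    rfl

theorem aeval_derivative_aeval_eq_zero {σ K L : Type*} [Field K] [Field L] [Algebra K L] {x : L}
    {g : σ → K[X]} {F : MvPolynomial σ K}
    (hF : ∀ b, Polynomial.aeval x (aeval g (pderiv b F)) = 0) :
    Polynomial.aeval x (Polynomial.derivative (aeval g F)) = 0 := by
  let := (aeval (R := K) g).toAlgebra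
  have := IsScalarTower.of_algebraMap_eq (R := K) (S := MvPolynomial σ K) (A := K[X])
    fun c => (algHom_C _ c).symm
  exact derivation_mem_of_pderiv_smul_mem
    (Polynomial.derivative'.compAlgebraMap (MvPolynomial σ K))
    (N := (RingHom.ker (Polynomial.aeval (R := K) x)).restrictScalars (MvPolynomial σ K))
    fun b => Ideal.mul_mem_right _ _ (hF b)

theorem C_mem_vanishingSq_comap {σ K L : Type*} [Field K] [Field L] [Algebra K L] {x : L}
    (hsep : Polynomial.aeval x (minpoly K x).derivative ≠ 0) (T : Subring L) (y : σ → L) {q : K[X]}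
    (hq : Polynomial.aeval x q = 0) (hq' : Polynomial.aeval x q.derivative = 0) :
    C q ∈ vanishingSq (Polynomial.eval₂RingHom (algebraMap K L) x) y
      (T.comap (Polynomial.eval₂RingHom (algebraMap K L) x)) := by
  have C_mem {r : K[X]} (hr : Polynomial.aeval x r = 0) :
      C r ∈ vanishing (Polynomial.eval₂RingHom (algebraMap K L) x) y
        (T.comap (Polynomial.eval₂RingHom (algebraMap K L) x)) :=
    ⟨C_mem_range_map_subtype (show Polynomial.aeval x r ∈ T from hr ▸ zero_mem T),
      (eval₂_C _ _ _).trans hr⟩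
  obtain ⟨k, rfl⟩ := minpoly.dvd K x hq
  rw [Polynomial.derivative_mul, map_add, map_mul, map_mul, minpoly.aeval, zero_mul, add_zero]
    at hq'
  rw [C_mul]
  exact AddSubmonoid.mul_mem_mul (C_mem (minpoly.aeval K x))
    (C_mem ((mul_eq_zero.mp hq').resolve_left hsep))

theorem map_C_mem_vanishingSq_comap {σ K L : Type*} [Field K] [Field L] [Algebra K L] {x : L}
    (hsep : Polynomial.aeval x (minpoly K x).derivative ≠ 0)
    (hx : Function.Surjective (Polynomial.aeval (R := K) x)) {T : Subring L} {y : σ → L}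
    (hy : ∀ b, y b ∈ T) {F : MvPolynomial σ K} (hFT : ∀ m, algebraMap K L (coeff m F) ∈ T)
    (hF : aeval y F = 0) (hF' : ∀ b, aeval y (pderiv b F) = 0) :
    map Polynomial.C F ∈ vanishingSq (Polynomial.eval₂RingHom (algebraMap K L) x) y
      (T.comap (Polynomial.eval₂RingHom (algebraMap K L) x)) := by
  set φ := Polynomial.eval₂RingHom (algebraMap K L) x
  have hφC (c : K) : φ (Polynomial.C c) = algebraMap K L c := Polynomial.eval₂_C _ _
  have hcomp : φ.comp Polynomial.C = algebraMap K L := RingHom.ext hφC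
  choose g hg using fun b => hx (y b)
  have hφg (G : MvPolynomial σ K) : φ (aeval g G) = aeval y G := by
    have : (Polynomial.aeval x).comp (aeval g) = aeval (R := K) y := by
      ext b
      simp [hg]
    exact DFunLike.congr_fun this G
  have hsub : map Polynomial.C F - C (aeval g F) ∈ vanishingSq φ y (T.comap φ) := by
    have heval : aeval g F = eval g (map Polynomial.C F) := (eval_map _ _ _).symm
    rw [heval]
    refine sub_C_eval_mem_vanishingSq (φ := φ) (fun b => ?_) hg (fun m => ?_) fun b => ?_
    · exact show φ (g b) ∈ T from (hg b).symm ▸ hy b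
    · rw [coeff_map]
      exact show φ _ ∈ T from (hφC _).symm ▸ hFT m
    · rw [pderiv_map, eval₂_map, hcomp]
      exact hF' b
  rw [← sub_add_cancel (map Polynomial.C F) (C (aeval g F))]
  exact add_mem hsub (C_mem_vanishingSq_comap hsep T y ((hφg F).trans hF)
    (aeval_derivative_aeval_eq_zero fun b => (hφg _).trans (hF' b)))

end Criterion

section DiscValuation

open Polynomial
open scoped Topology

/-- A valuation with values in `ℝ≥0`, as a real absolute value. -/
def realAbs {L : Type*} [Field L] (w : Valuation L ℝ≥0) : AbsoluteValue L ℝ where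
  toFun z := w z
  map_mul' a b := by rw [map_mul, NNReal.coe_mul]
  nonneg' z := (w z).coe_nonneg
  eq_zero' z := by rw [NNReal.coe_eq_zero, map_eq_zero]
  add_le' a b := NNReal.coe_le_coe.mpr <|
    (w.map_add a b).trans (max_le (le_add_of_nonneg_right zero_le) (le_add_of_nonneg_left zero_le))

theorem isNonarchimedean_realAbs {L : Type*} [Field L] (w : Valuation L ℝ≥0) :
    IsNonarchimedean (realAbs w) :=
  fun a b => (NNReal.coe_le_coe.mpr (w.map_add a b)).trans_eq (NNReal.coe_max _ _)

/-- The Gauss valuation `∑ aᵢ Xⁱ ↦ max w(aᵢ) ρⁱ`; it is `p ↦ w (p 0)` for `ρ = 0`. -/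
def gaussValuation {L : Type*} [Field L] (w : Valuation L ℝ≥0) (ρ : ℝ≥0) :
    Valuation L[X] ℝ≥0 where
  toFun p := ⟨p.gaussNorm (realAbs w) ρ, p.gaussNorm_nonneg _ ρ.coe_nonneg⟩
  map_zero' := NNReal.eq (gaussNorm_zero (realAbs w) (ρ : ℝ))
  map_one' := NNReal.eq <| show (1 : L[X]).gaussNorm (realAbs w) ρ = 1 by
    rw [← C_1, gaussNorm_C, map_one]
  map_mul' p q := by
    refine NNReal.eq <| show (p * q).gaussNorm (realAbs w) ρ =
      p.gaussNorm (realAbs w) ρ * q.gaussNorm (realAbs w) ρ from ?_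
    rcases eq_zero_or_pos ρ with rfl | hρ
    · simp only [NNReal.coe_zero, gaussNorm_zero_right, mul_coeff_zero, map_mul]
    · exact gaussNorm_mul (isNonarchimedean_realAbs w) (NNReal.coe_pos.mpr hρ) p q
  map_add_le_max' p q := isNonarchimedean_gaussNorm _ (isNonarchimedean_realAbs w) ρ.coe_nonneg p q

theorem le_gaussValuation {L : Type*} [Field L] (w : Valuation L ℝ≥0) (ρ : ℝ≥0) (p : L[X]) (i : ℕ) :
    w (p.coeff i) * ρ ^ i ≤ gaussValuation w ρ p :=
  p.le_gaussNorm (realAbs w) ρ.coe_nonneg i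

theorem exists_gaussValuation_eq {L : Type*} [Field L] (w : Valuation L ℝ≥0) (ρ : ℝ≥0) (p : L[X]) :
    ∃ i, gaussValuation w ρ p = w (p.coeff i) * ρ ^ i :=
  (p.exists_eq_gaussNorm (realAbs w) ρ).imp fun _ hi => NNReal.eq hi

theorem continuous_gaussValuation {L : Type*} [Field L] (w : Valuation L ℝ≥0) (p : L[X]) :
    Continuous fun ρ => gaussValuation w ρ p := by
  refine Continuous.subtype_mk ?_ _
  unfold gaussNorm
  split_ifs with h
  · exact Continuous.finset_sup'_apply h fun i _ => by fun_prop
  · exact continuous_const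

variable {K L : Type*} [Field K] [Field L] [Algebra K L]

/-- The valuation on `K[X]` attached to the disc of radius `ρ` around `x : L`: the Gauss valuation
of the Taylor expansion at `x`. For `ρ = 0` it is `g ↦ w (g x)`. -/
def discValuation (w : Valuation L ℝ≥0) (x : L) (ρ : ℝ≥0) : Valuation K[X] ℝ≥0 :=
  (gaussValuation w ρ).comap ((taylorAlgHom x).toRingHom.comp (mapRingHom (algebraMap K L)))

variable {w : Valuation L ℝ≥0} {x : L}

theorem discValuation_zero (w : Valuation L ℝ≥0) (x : L) (g : K[X]) :
    discValuation w x 0 g = w (eval₂RingHom (algebraMap K L) x g) := by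
  refine NNReal.eq ((gaussNorm_zero_right _ _).trans ?_)
  change (w ((taylor x (g.map (algebraMap K L))).coeff 0) : ℝ) = w (g.eval₂ (algebraMap K L) x)
  rw [taylor_coeff_zero, eval_map]

theorem discValuation_C (w : Valuation L ℝ≥0) (x : L) (ρ : ℝ≥0) (c : K) :
    discValuation w x ρ (C c) = w (algebraMap K L c) :=
  NNReal.eq <| show (taylor x ((C c).map (algebraMap K L))).gaussNorm (realAbs w) ρ = _ by
    rw [map_C, taylor_C, gaussNorm_C]
    rfl

theorem discValuation_mono (w : Valuation L ℝ≥0) (x : L) (g : K[X]) :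
    Monotone fun ρ => discValuation w x ρ g := by
  intro ρ ρ' h
  obtain ⟨i, hi⟩ := exists_gaussValuation_eq w ρ (taylor x (g.map (algebraMap K L)))
  exact hi.trans_le <| (mul_le_mul_right (pow_le_pow_left₀ zero_le h i) _).trans
    (le_gaussValuation w ρ' _ i)

theorem continuous_discValuation (w : Valuation L ℝ≥0) (x : L) (g : K[X]) :
    Continuous fun ρ => discValuation w x ρ g :=
  continuous_gaussValuation w _

theorem discValuation_ne_zero (w : Valuation L ℝ≥0) (x : L) {ρ : ℝ≥0} (hρ : ρ ≠ 0) {g : K[X]}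
    (hg : g ≠ 0) : discValuation w x ρ g ≠ 0 := by
  have hg' : taylor x (g.map (algebraMap K L)) ≠ 0 := by
    rwa [Ne, map_eq_zero_iff _ (taylor_injective x), Polynomial.map_eq_zero]
  refine fun h0 => leadingCoeff_ne_zero.mpr hg' ((map_eq_zero w).mp ?_)
  have h := le_gaussValuation w ρ (taylor x (g.map (algebraMap K L)))
    (taylor x (g.map (algebraMap K L))).natDegree
  exact (mul_eq_zero.mp (le_antisymm (h.trans_eq h0) zero_le)).resolve_right (pow_ne_zero _ hρ)

theorem le_discValuation_X (w : Valuation L ℝ≥0) (x : L) (ρ : ℝ≥0) :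
    ρ ≤ discValuation w x ρ (X : K[X]) := by
  have h := le_gaussValuation w ρ (taylor x ((X : K[X]).map (algebraMap K L))) 1
  rw [map_X, taylor_X, coeff_add, coeff_X_one, coeff_C_of_ne_zero one_ne_zero, add_zero, map_one,
    one_mul, pow_one] at h
  refine h.trans_eq ?_
  simp [discValuation]

theorem discValuation_eq_discValuation_zero {ρ ρ' : ℝ≥0} (h : ρ < ρ') {g : K[X]}
    (hg : discValuation w x ρ' g = discValuation w x ρ g) :
    discValuation w x ρ' g = discValuation w x 0 g := by
  refine le_antisymm ?_ (discValuation_mono w x g zero_le)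
  obtain ⟨i, hi⟩ := exists_gaussValuation_eq w ρ (taylor x (g.map (algebraMap K L)))
  set t := taylor x (g.map (algebraMap K L))
  have hi' : w (t.coeff i) * ρ' ^ i ≤ w (t.coeff i) * ρ ^ i :=
    (le_gaussValuation w ρ' t i).trans_eq (hg.trans hi)
  have hg0 : discValuation w x ρ g ≤ discValuation w x 0 g := by
    refine hi.trans_le (le_trans ?_ (le_gaussValuation w 0 t i))
    rcases eq_or_ne (w (t.coeff i)) 0 with h0 | h0
    · simp only [h0, zero_mul, le_refl]
    rcases eq_or_ne i 0 with rfl | hi0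
    · simp only [pow_zero, le_refl]
    exact absurd hi' (mul_lt_mul_of_pos_left (pow_lt_pow_left₀ h zero_le hi0)
      (pos_iff_ne_zero.mpr h0)).not_ge
  exact hg.trans_le hg0

variable (K) in
theorem eventually_discValuation_lt {α : ℝ≥0} {g : K[X]} {r : ℝ≥0}
    (hg : discValuation w x α g < r) : ∀ᶠ ρ in 𝓝[>] α, discValuation w x ρ g < r :=
  ((continuous_discValuation w x g).tendsto α).eventually_lt_const hg |>.filter_mono
    nhdsWithin_le_nhds

/-- The polynomials over `K` without a root in the closed disc of radius `ρ` around `x`.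
As `L` need not contain the roots, this is expressed by the constancy of the disc valuation up to a
radius exceeding `ρ`. -/
def rootFree (K : Type*) {L : Type*} [Field K] [Field L] [Algebra K L] (w : Valuation L ℝ≥0) (x : L)
    (ρ : ℝ≥0) : Submonoid K[X] where
  carrier := {g | g ≠ 0 ∧ ∃ ρ' > ρ, discValuation w x ρ' g = discValuation w x 0 g}
  one_mem' := ⟨one_ne_zero, ρ + 1, lt_add_one ρ, by rw [map_one, map_one]⟩
  mul_mem' := by
    rintro g h ⟨hg0, r, hr, hg⟩ ⟨hh0, s, hs, hh⟩
    refine ⟨mul_ne_zero hg0 hh0, min r s, lt_min hr hs, ?_⟩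
    rw [map_mul, map_mul]
    congr 1
    · exact le_antisymm ((discValuation_mono w x g (min_le_left r s)).trans_eq hg)
        (discValuation_mono w x g zero_le)
    · exact le_antisymm ((discValuation_mono w x h (min_le_right r s)).trans_eq hh)
        (discValuation_mono w x h zero_le)

variable {ρ ρ' : ℝ≥0} {g h : K[X]}

theorem rootFree_antitone (w : Valuation L ℝ≥0) (x : L) : Antitone (rootFree K w x) :=
  fun _ _ hρ _ ⟨hg0, r, hr, hg⟩ => ⟨hg0, r, hρ.trans_lt hr, hg⟩

theorem discValuation_eq_of_mem_rootFree (hg : g ∈ rootFree K w x ρ) :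
    discValuation w x ρ g = discValuation w x 0 g := by
  obtain ⟨-, r, hr, hg⟩ := hg
  exact le_antisymm ((discValuation_mono w x g hr.le).trans_eq hg)
    (discValuation_mono w x g zero_le)

theorem discValuation_zero_ne_zero_of_mem_rootFree (hg : g ∈ rootFree K w x ρ) :
    discValuation w x 0 g ≠ 0 := by
  obtain ⟨hg0, r, hr, hg⟩ := hg
  exact hg ▸ discValuation_ne_zero w x (pos_of_gt hr).ne' hg0

theorem eventually_mem_rootFree (hg : g ∈ rootFree K w x ρ) :
    ∀ᶠ ρ' in 𝓝[>] ρ, g ∈ rootFree K w x ρ' := by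
  obtain ⟨hg0, r, hr, hg⟩ := hg
  filter_upwards [Ioo_mem_nhdsGT hr] with ρ' hρ' using ⟨hg0, r, hρ'.2, hg⟩

theorem C_mem_rootFree (w : Valuation L ℝ≥0) (x : L) (ρ : ℝ≥0) {c : K} (hc : c ≠ 0) :
    C c ∈ rootFree K w x ρ :=
  ⟨C_ne_zero.mpr hc, ρ + 1, lt_add_one ρ, by rw [discValuation_C, discValuation_C]⟩

theorem left_mem_rootFree_of_mul_mem (hgh : g * h ∈ rootFree K w x ρ) : g ∈ rootFree K w x ρ := by
  have hne := discValuation_zero_ne_zero_of_mem_rootFree hgh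
  obtain ⟨h0, r, hr, heq⟩ := hgh
  refine ⟨left_ne_zero_of_mul h0, r, hr,
    (eq_of_le_of_not_lt (discValuation_mono w x g zero_le) fun hlt => ?_).symm⟩
  rw [map_mul] at hne
  rw [map_mul, map_mul] at heq
  exact heq.not_gt (mul_lt_mul hlt (discValuation_mono w x h zero_le)
    (pos_iff_ne_zero.mpr (right_ne_zero_of_mul hne)) zero_le)

theorem discValuation_lt_of_notMem_rootFree (hρ : ρ < ρ') (hg0 : g ≠ 0)
    (hg : g ∉ rootFree K w x ρ) : discValuation w x ρ g < discValuation w x ρ' g :=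
  (discValuation_mono w x g hρ.le).lt_of_ne fun heq =>
    hg ⟨hg0, ρ', hρ, discValuation_eq_discValuation_zero hρ heq.symm⟩

theorem add_mem_rootFree (hg : g ∈ rootFree K w x ρ)
    (hh : discValuation w x ρ h < discValuation w x 0 g) : g + h ∈ rootFree K w x ρ := by
  have hne := discValuation_zero_ne_zero_of_mem_rootFree hg
  obtain ⟨r, ⟨hr, hgr⟩, hρr⟩ := ((eventually_discValuation_lt K hh).and
    (eventually_mem_rootFree hg) |>.and eventually_mem_nhdsWithin).exists
  have hgr := discValuation_eq_of_mem_rootFree hgr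
  have hr0 : discValuation w x r (g + h) = discValuation w x 0 g :=
    hgr ▸ Valuation.map_add_eq_of_lt_left _ (hgr.symm ▸ hr)
  have h0 : discValuation w x 0 (g + h) = discValuation w x 0 g :=
    Valuation.map_add_eq_of_lt_left _ ((discValuation_mono w x h zero_le).trans_lt hr)
  refine ⟨?_, r, hρr, hr0.trans h0.symm⟩
  rintro h00
  rw [h00, map_zero] at h0
  exact hne h0.symm

end DiscValuation

section KeyPolynomial

open Polynomial

theorem exists_pow_valuation_eq_algebraMap {K L Γ₀ : Type*} [Field K] [Field L] [Algebra K L]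
    [LinearOrderedCommGroupWithZero Γ₀] (w : Valuation L Γ₀) {y : L} (hy : IsAlgebraic K y)
    (hy0 : y ≠ 0) : ∃ k ≠ 0, ∃ c : K, w y ^ k = w (algebraMap K L c) := by
  classical
  obtain ⟨p, hp0, hpy⟩ := hy
  let t (i : ℕ) : L := algebraMap K L (p.coeff i) * y ^ i
  have hcoeff {i : ℕ} (hi : i ∈ p.support) : w (algebraMap K L (p.coeff i)) ≠ 0 := by
    simpa using hi
  have hlt {i j : ℕ} (hij : i < j) (hj : j ∈ p.support) (h : w (t i) = w (t j)) :
      w y ^ (j - i) = w (algebraMap K L (p.coeff i / p.coeff j)) := by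
    simp only [t, map_mul, map_pow] at h
    rw [map_div₀, map_div₀, eq_div_iff (hcoeff hj)]
    refine mul_right_cancel₀ (pow_ne_zero i ((Valuation.ne_zero_iff w).mpr hy0)) ?_
    rw [h, mul_right_comm, pow_sub_mul_pow _ hij.le, mul_comm]
  obtain ⟨i, hi, hmax⟩ := p.support.exists_max_image (fun i => w (t i)) (by simpa using hp0)
  obtain ⟨j, hj, hji, hwj⟩ : ∃ j ∈ p.support, j ≠ i ∧ w (t j) = w (t i) := by
    by_contra! hne
    have hti : w (t i) ≠ 0 := by
      rw [map_mul]
      exact mul_ne_zero (hcoeff hi) ((Valuation.ne_zero_iff w).mpr (pow_ne_zero i hy0))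
    have hsum : w (∑ j ∈ p.support, t j) = w (t i) :=
      w.map_sum_eq_of_lt hi fun j hj =>
        (hmax j (Finset.mem_sdiff.mp hj).1).lt_of_ne
          (hne j (Finset.mem_sdiff.mp hj).1 (by simpa using (Finset.mem_sdiff.mp hj).2))
    have ht : ∑ j ∈ p.support, t j = 0 := by
      rw [← hpy, aeval_def, eval₂_eq_sum, Polynomial.sum]
    rw [ht, map_zero] at hsum
    exact hti hsum.symm
  rcases hji.lt_or_gt with h | h
  · exact ⟨i - j, Nat.sub_ne_zero_of_lt h, _, hlt h hi hwj⟩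
  · exact ⟨j - i, Nat.sub_ne_zero_of_lt h, _, hlt h hj hwj.symm⟩

variable {K L : Type*} [Field K] [Field L] [Algebra K L] {w : Valuation L ℝ≥0} {x : L} {ρ : ℝ≥0}
  {P g h : K[X]}

theorem exists_rootFree_discValuation_eq_inv [Algebra.IsAlgebraic K L]
    (hg : g ∈ rootFree K w x ρ) :
    ∃ h ∈ rootFree K w x ρ, discValuation w x 0 h = (discValuation w x 0 g)⁻¹ := by
  have hne := discValuation_zero_ne_zero_of_mem_rootFree hg
  have hg0 := hne
  rw [discValuation_zero, Valuation.ne_zero_iff] at hg0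
  obtain ⟨k, hk, c, hc⟩ := exists_pow_valuation_eq_algebraMap (K := K) w
    (Algebra.IsAlgebraic.isAlgebraic _) hg0
  rw [← discValuation_zero] at hc
  have hc0 : c ≠ 0 := by
    rintro rfl
    rw [map_zero, map_zero] at hc
    exact pow_ne_zero k hne hc
  refine ⟨C c⁻¹ * g ^ (k - 1), mul_mem (C_mem_rootFree w x ρ (inv_ne_zero hc0)) (pow_mem hg _), ?_⟩
  rw [map_mul, discValuation_C, map_inv₀, map_inv₀, ← hc, map_pow, inv_mul_eq_iff_eq_mul₀
    (pow_ne_zero k hne), ← div_eq_mul_inv, eq_div_iff hne, pow_sub_one_mul hk]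

theorem discValuation_add_mul_eq_max (hg : g ∈ rootFree K w x ρ) (hP : P ∉ rootFree K w x ρ)
    (h : K[X]) : discValuation w x ρ (g + P * h) =
      max (discValuation w x ρ g) (discValuation w x ρ (P * h)) := by
  rcases eq_or_ne (discValuation w x ρ g) (discValuation w x ρ (P * h)) with heq | hne
  · refine le_antisymm (Valuation.map_add _ _ _) (not_lt.mp fun hlt => hP ?_)
    rw [← heq, max_self, discValuation_eq_of_mem_rootFree hg] at hlt
    have hneg : -g ∈ rootFree K w x ρ := by
      rw [← neg_one_mul, ← C_1, ← C_neg]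
      exact mul_mem (C_mem_rootFree w x ρ (neg_ne_zero.mpr one_ne_zero)) hg
    rw [← Valuation.map_neg _ g] at hlt
    have := add_mem_rootFree hneg hlt
    rw [neg_add_cancel_left] at this
    exact left_mem_rootFree_of_mul_mem this
  · exact Valuation.map_add_of_distinct_val _ hne

/-- A polynomial of least degree among those with a root in the disc of radius `ρ` around `x`. -/
structure IsKeyPolynomial (w : Valuation L ℝ≥0) (x : L) (ρ : ℝ≥0) (P : K[X]) : Prop where
  monic : P.Monic
  notMem_rootFree : P ∉ rootFree K w x ρ
  mem_rootFree : ∀ g : K[X], g ≠ 0 → g.natDegree < P.natDegree → g ∈ rootFree K w x ρ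

/-- A key polynomial whose disc valuation is the valuation of an element of the base field. -/
structure IsRationalKeyPolynomial (w : Valuation L ℝ≥0) (x : L) (ρ : ℝ≥0) (P : K[X]) : Prop
    extends IsKeyPolynomial w x ρ P where
  exists_eq_algebraMap : ∃ c : K, c ≠ 0 ∧ discValuation w x ρ P = w (algebraMap K L c)

theorem IsKeyPolynomial.natDegree_ne_zero (hP : IsKeyPolynomial w x ρ P) : P.natDegree ≠ 0 :=
  fun h => hP.notMem_rootFree (hP.monic.natDegree_eq_zero.mp h ▸ one_mem _)

theorem IsKeyPolynomial.natDegree_modByMonic_lt (hP : IsKeyPolynomial w x ρ P) (g : K[X]) :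
    (g %ₘ P).natDegree < P.natDegree :=
  Polynomial.natDegree_modByMonic_lt g hP.monic fun h =>
    hP.natDegree_ne_zero (h ▸ natDegree_one)

theorem IsKeyPolynomial.discValuation_eq_max (hP : IsKeyPolynomial w x ρ P) (g : K[X]) :
    discValuation w x ρ g =
      max (discValuation w x ρ (g %ₘ P)) (discValuation w x ρ (P * (g /ₘ P))) := by
  nth_rw 1 [← modByMonic_add_div g P]
  rcases eq_or_ne (g %ₘ P) 0 with h0 | h0
  · rw [h0, map_zero, zero_add, max_eq_right zero_le]
  · exact discValuation_add_mul_eq_max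
      (hP.mem_rootFree _ h0 (hP.natDegree_modByMonic_lt g)) hP.notMem_rootFree _

theorem IsKeyPolynomial.induction (hP : IsKeyPolynomial w x ρ P) {motive : K[X] → Prop}
    (lt : ∀ g, g.natDegree < P.natDegree → motive g)
    (divMod : ∀ g, motive (g %ₘ P) → motive (g /ₘ P) → motive g) (g : K[X]) : motive g := by
  induction hn : g.natDegree using Nat.strong_induction_on generalizing g with
  | _ n ih =>
    by_cases hlt : g.natDegree < P.natDegree
    · exact lt g hlt
    · refine divMod g (lt _ (hP.natDegree_modByMonic_lt g)) (ih _ ?_ _ rfl)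
      have := hP.natDegree_ne_zero
      rw [natDegree_divByMonic g hP.monic]
      omega

theorem IsKeyPolynomial.mem_addSubmonoid (hP : IsKeyPolynomial w x ρ P) {W : AddSubmonoid K[X]}
    (hW : ∀ (g : K[X]) (i : ℕ), g ≠ 0 → g.natDegree < P.natDegree →
      discValuation w x 0 g * discValuation w x ρ P ^ i ≤ 1 → g * P ^ i ∈ W)
    (hg : discValuation w x ρ g ≤ 1) : g ∈ W := by
  suffices key : ∀ i, discValuation w x ρ g * discValuation w x ρ P ^ i ≤ 1 → g * P ^ i ∈ W by
    simpa only [pow_zero, mul_one, hg, true_imp_iff] using key 0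
  clear hg
  induction g using hP.induction with
  | lt g hlt =>
    intro i hi
    rcases eq_or_ne g 0 with rfl | h0
    · rw [zero_mul]
      exact zero_mem _
    · rw [discValuation_eq_of_mem_rootFree (hP.mem_rootFree g h0 hlt)] at hi
      exact hW g i h0 hlt hi
  | divMod g hmod hdiv =>
    intro i hi
    rw [hP.discValuation_eq_max g, max_mul_of_nonneg _ _ zero_le, max_le_iff, map_mul,
      mul_right_comm, ← pow_succ', mul_comm (_ ^ (i + 1))] at hi
    have hgi : g * P ^ i = (g %ₘ P) * P ^ i + (g /ₘ P) * P ^ (i + 1) := by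
      nth_rw 1 [← modByMonic_add_div g P]
      ring
    rw [hgi]
    exact add_mem (hmod i hi.1) (hdiv (i + 1) hi.2)

theorem IsKeyPolynomial.integer_le_adjoin (hP : IsKeyPolynomial w x ρ P) {c : K} (hc : c ≠ 0)
    (hPc : discValuation w x ρ P = w (algebraMap K L c)) {T : Subring K[X]}
    (hT : ∀ g : K[X], g ≠ 0 → g.natDegree < P.natDegree → discValuation w x 0 g ≤ 1 → g ∈ T) :
    (discValuation w x ρ).integer ≤ (Algebra.adjoin T {C c⁻¹ * P}).toSubring := by
  refine fun f hf => hP.mem_addSubmonoid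
    (W := (Algebra.adjoin T {C c⁻¹ * P}).toSubring.toAddSubgroup.toAddSubmonoid)
    (fun g i hg0 hg hgi => ?_) hf
  have hgP : g * P ^ i = g * C (c ^ i) * (C c⁻¹ * P) ^ i := by
    rw [C_pow, mul_assoc, ← mul_pow, ← mul_assoc, ← C_mul, mul_inv_cancel₀ hc, C_1, one_mul]
  have hgT : g * C (c ^ i) ∈ T := by
    refine hT _ (mul_ne_zero hg0 (C_ne_zero.mpr (pow_ne_zero i hc))) ?_ ?_
    · rwa [natDegree_mul_C (pow_ne_zero i hc)]
    · rwa [map_mul, discValuation_C, map_pow, map_pow, ← hPc]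
  rw [hgP]
  exact (Algebra.adjoin T {C c⁻¹ * P}).mul_mem
    (Subalgebra.algebraMap_mem (Algebra.adjoin T {C c⁻¹ * P}) (⟨_, hgT⟩ : T))
    (pow_mem (Algebra.self_mem_adjoin_singleton T (C c⁻¹ * P)) i)

theorem IsRationalKeyPolynomial.exists_rootFree_discValuation_eq
    (hP : IsRationalKeyPolynomial w x ρ P) (hg : discValuation w x ρ g ≠ 0) :
    ∃ h ∈ rootFree K w x ρ, discValuation w x 0 h = discValuation w x ρ g := by
  induction g using hP.toIsKeyPolynomial.induction with
  | lt g hlt =>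
    have hg' := hP.mem_rootFree g (fun h => hg (h ▸ map_zero _)) hlt
    exact ⟨g, hg', (discValuation_eq_of_mem_rootFree hg').symm⟩
  | divMod g hmod hdiv =>
    obtain ⟨c, hc, hPc⟩ := hP.exists_eq_algebraMap
    rw [hP.discValuation_eq_max g] at hg ⊢
    rcases max_choice (discValuation w x ρ (g %ₘ P)) (discValuation w x ρ (P * (g /ₘ P))) with h | h
    · rw [h] at hg ⊢
      exact hmod hg
    · rw [h, map_mul] at hg
      obtain ⟨q, hq, hqg⟩ := hdiv (right_ne_zero_of_mul hg)
      exact ⟨C c * q, mul_mem (C_mem_rootFree w x ρ hc) hq, by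
        rw [h, map_mul, map_mul, discValuation_C, hqg, hPc]⟩

theorem exists_isKeyPolynomial (hg0 : g ≠ 0) (hg : g ∉ rootFree K w x ρ) :
    ∃ P : K[X], IsKeyPolynomial w x ρ P ∧ P.natDegree ≤ g.natDegree := by
  obtain ⟨q, ⟨hq0, hq⟩, hmin⟩ := exists_minimalFor_of_wellFoundedLT
    (fun q : K[X] => q ≠ 0 ∧ q ∉ rootFree K w x ρ) natDegree ⟨g, hg0, hg⟩
  have hdeg : (q * C q.leadingCoeff⁻¹).natDegree = q.natDegree :=
    natDegree_mul_C (inv_ne_zero (leadingCoeff_ne_zero.mpr hq0))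
  refine ⟨q * C q.leadingCoeff⁻¹, ⟨monic_mul_leadingCoeff_inv hq0,
    fun h => hq (left_mem_rootFree_of_mul_mem h), fun f hf0 hf => ?_⟩, ?_⟩
  · by_contra hfρ
    exact (hmin ⟨hf0, hfρ⟩ (hf.le.trans_eq hdeg)).not_gt (hf.trans_eq hdeg)
  · exact hdeg.trans_le ((le_total _ _).elim id (hmin ⟨hg0, hg⟩))

theorem exists_isRationalKeyPolynomial (hw : DenseRange (w.comap (algebraMap K L))) {r s : ℝ≥0}
    (hrs : r < s) (hg0 : g ≠ 0) (hg : g ∉ rootFree K w x r) :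
    ∃ ρ ∈ Set.Ioo r s, ∃ P : K[X], IsRationalKeyPolynomial w x ρ P ∧
      P.natDegree ≤ g.natDegree := by
  obtain ⟨P₀, hP₀, hP₀g⟩ := exists_isKeyPolynomial hg0 hg
  obtain ⟨⟨ρ, P⟩, ⟨⟨hrρ, hρs⟩, hP⟩, hmin⟩ := exists_minimalFor_of_wellFoundedLT
    (fun z : ℝ≥0 × K[X] => z.1 ∈ Set.Ico r s ∧ IsKeyPolynomial w x z.1 z.2) (fun z => z.2.natDegree)
    ⟨(r, P₀), ⟨le_rfl, hrs⟩, hP₀⟩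
  have hP' {ρ' : ℝ≥0} (hρ' : ρ' ∈ Set.Ico ρ s) : IsKeyPolynomial w x ρ' P := by
    refine ⟨hP.monic, fun h => hP.notMem_rootFree (rootFree_antitone w x hρ'.1 h), ?_⟩
    intro f hf0 hf
    by_contra hfρ
    obtain ⟨P', hP', hP'f⟩ := exists_isKeyPolynomial hf0 hfρ
    have hlt := hP'f.trans_lt hf
    exact (hmin (j := (ρ', P')) ⟨⟨hrρ.trans hρ'.1, hρ'.2⟩, hP'⟩ hlt.le).not_gt hlt
  obtain ⟨t, hρt, hts⟩ := exists_between hρs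
  obtain ⟨c, hPc, hcP⟩ := hw.exists_mem_open isOpen_Ioo (Set.nonempty_Ioo.mpr
    (discValuation_lt_of_notMem_rootFree hρt hP.monic.ne_zero hP.notMem_rootFree))
  obtain ⟨ρ', ⟨hρρ', hρ't⟩, hρ'⟩ := intermediate_value_Ioo hρt.le
    (continuous_discValuation w x P).continuousOn ⟨hPc, hcP⟩
  refine ⟨ρ', ⟨hrρ.trans_lt hρρ', hρ't.trans hts⟩, P,
    ⟨hP' ⟨hρρ'.le, hρ't.trans hts⟩, c, ?_, hρ'⟩, ?_⟩
  · rintro rfl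
    rw [map_zero] at hPc
    exact not_lt_zero hPc
  · exact ((le_total _ _).elim id (hmin (j := (r, P₀)) ⟨⟨le_rfl, hrs⟩, hP₀⟩)).trans hP₀g

end KeyPolynomial

section Descent

open Polynomial Filter Topology

variable {K L : Type*} [Field K] [Field L] [Algebra K L] {w : Valuation L ℝ≥0} {x : L} {α ρ : ℝ≥0}

/-- The polynomials whose disc valuation is at most one for all radii slightly larger than `α`. -/
def germIntegers (K : Type*) {L : Type*} [Field K] [Field L] [Algebra K L] (w : Valuation L ℝ≥0)
    (x : L) (α : ℝ≥0) : Subring K[X] :=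
  eventualSubring (𝓝[>] α) fun ρ => (discValuation w x ρ).integer

theorem mem_germIntegers_of_lt {g : K[X]} (hg : discValuation w x α g < 1) :
    g ∈ germIntegers K w x α :=
  (eventually_discValuation_lt K hg).mono fun _ h => h.le

theorem mem_germIntegers_of_mem_rootFree {g : K[X]} (hg : g ∈ rootFree K w x α)
    (hg1 : discValuation w x 0 g ≤ 1) : g ∈ germIntegers K w x α :=
  (eventually_mem_rootFree hg).mono fun _ h => (discValuation_eq_of_mem_rootFree h).trans_le hg1

theorem discValuation_le_max (w : Valuation L ℝ≥0) (x : L) (hρ : ρ ≤ 1) (g : K[X]) :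
    discValuation w x ρ g ≤ max (discValuation w x 0 g) (discValuation w x 1 g * ρ) := by
  obtain ⟨i, hi⟩ := exists_gaussValuation_eq w ρ (taylor x (g.map (algebraMap K L)))
  refine hi.trans_le ?_
  rcases eq_or_ne i 0 with rfl | hi0
  · rw [pow_zero, ← pow_zero 0]
    exact le_max_of_le_left (le_gaussValuation w 0 (taylor x (g.map (algebraMap K L))) 0)
  · have h1 := le_gaussValuation w 1 (taylor x (g.map (algebraMap K L))) i
    rw [one_pow, mul_one] at h1
    exact le_max_of_le_right (mul_le_mul' h1 (pow_le_of_le_one zero_le hρ hi0))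

theorem integer_discValuation_zero_le_germIntegers (w : Valuation L ℝ≥0) (x : L) :
    (discValuation w x 0).integer ≤ germIntegers K w x 0 := by
  intro g hg
  have hlim : ∀ᶠ ρ in 𝓝 (0 : ℝ≥0), discValuation w x 1 g * ρ < 1 :=
    (Continuous.tendsto (by fun_prop) 0).eventually_lt_const (by rw [mul_zero]; exact one_pos)
  have hsmall : ∀ᶠ ρ in 𝓝 (0 : ℝ≥0), ρ < 1 := eventually_lt_nhds one_pos
  filter_upwards [nhdsWithin_le_nhds hlim, nhdsWithin_le_nhds hsmall] with ρ hlim hsmall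
  exact (discValuation_le_max w x hsmall.le g).trans (max_le hg hlim.le)

/-- The radii `ρ` such that some nonzero polynomial over `K` of degree less than `d` has a root in
the disc of radius `ρ` around `x`. -/
def rootRadii (K : Type*) {L : Type*} [Field K] [Field L] [Algebra K L] (w : Valuation L ℝ≥0)
    (x : L) (d : ℕ) : Set ℝ≥0 :=
  {ρ | ∃ g : K[X], g ≠ 0 ∧ g.natDegree < d ∧ g ∉ rootFree K w x ρ}

theorem isUpperSet_rootRadii (w : Valuation L ℝ≥0) (x : L) (d : ℕ) :
    IsUpperSet (rootRadii K w x d) :=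
  fun _ _ hρ ⟨g, hg0, hgd, hg⟩ => ⟨g, hg0, hgd, fun h => hg (rootFree_antitone w x hρ h)⟩

theorem nonempty_rootRadii (K : Type*) {L : Type*} [Field K] [Field L] [Algebra K L]
    (w : Valuation L ℝ≥0) (x : L) {d : ℕ} (hd : 1 < d) : (rootRadii K w x d).Nonempty := by
  refine ⟨w x + 1, X, X_ne_zero, natDegree_X.trans_lt hd, fun h => ?_⟩
  have hX := discValuation_eq_of_mem_rootFree h
  rw [discValuation_zero, coe_eval₂RingHom, eval₂_X] at hX
  exact (lt_add_one (w x)).not_ge ((le_discValuation_X w x _).trans_eq hX)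

theorem mem_rootRadii_of_natDegree_minpoly_lt {d : ℕ} (hx : IsIntegral K x)
    (hd : (minpoly K x).natDegree < d) (ρ : ℝ≥0) : ρ ∈ rootRadii K w x d := by
  refine ⟨minpoly K x, minpoly.ne_zero hx, hd, fun h => ?_⟩
  refine discValuation_zero_ne_zero_of_mem_rootFree h ?_
  rw [discValuation_zero, coe_eval₂RingHom, ← aeval_def, minpoly.aeval, map_zero]

variable {σ : Type*} {y : σ → L} {F : MvPolynomial σ K[X]}

local notation "φ" => eval₂RingHom (algebraMap K L) x

theorem mem_vanishingSq_discValuation_integer_of_mem_adjoin [Algebra.IsAlgebraic K L]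
    (hy : ∀ z, w z ≤ 1 → ∃ b, y b = z) {s h : K[X]} (hs : 1 ≤ discValuation w x ρ s)
    (hs0 : discValuation w x 0 s ≤ 1) (hh : h ∈ rootFree K w x ρ)
    (hhs : discValuation w x 0 h = discValuation w x ρ s)
    (hFN : F ∈ vanishing φ y (discValuation w x ρ).integer)
    (hF : F ∈ vanishingSq φ y
      (Algebra.adjoin (discValuation (K := K) w x ρ).integer {s}).toSubring) :
    F ∈ vanishingSq φ y (discValuation w x ρ).integer := by
  obtain ⟨h', hh', hhh'⟩ := exists_rootFree_discValuation_eq_inv hh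
  rw [hhs] at hhh'
  rw [discValuation_zero] at hs0
  refine mem_vanishingSq_integer_of_mem_adjoin (h := h') (h' := h) hy hs hs0 ?_ ?_ ?_ ?_ hFN hF
  · rw [discValuation_eq_of_mem_rootFree hh', hhh']
  · rw [← discValuation_zero, hhh']
  · rw [discValuation_eq_of_mem_rootFree hh, hhs]
  · rw [← discValuation_zero, hhs]

theorem map_C_integer_le_discValuation_integer (w : Valuation L ℝ≥0) (x : L) (ρ : ℝ≥0) :
    (w.comap (algebraMap K L)).integer.map C ≤ (discValuation w x ρ).integer := by
  rintro _ ⟨c, hc, rfl⟩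
  exact (discValuation_C w x ρ c).trans_le hc

theorem exists_isRationalKeyPolynomial_mem_vanishingSq_integer [Algebra.IsAlgebraic K L]
    (hw : DenseRange (w.comap (algebraMap K L))) (hy : ∀ z, w z ≤ 1 → ∃ b, y b = z)
    (hF : F ∈ vanishing φ y ((w.comap (algebraMap K L)).integer.map C)) {d : ℕ}
    (hd : Set.Ioi α ⊆ rootRadii K w x d) {s : K[X]} (hs : 1 ≤ discValuation w x α s)
    (hs0 : discValuation w x 0 s ≤ 1)
    (hFs : F ∈ vanishingSq φ y (Algebra.adjoin (germIntegers K w x α) {s}).toSubring) :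
    ∃ (ρ : ℝ≥0) (P : K[X]), IsRationalKeyPolynomial w x ρ P ∧ P.natDegree < d ∧
      F ∈ vanishingSq φ y (discValuation w x ρ).integer := by
  obtain ⟨β, hαβ, hβ⟩ := mem_nhdsGT_iff_exists_Ioo_subset.mp
    (eventually_mem_vanishingSq (vanishingSq_mono (adjoin_eventualSubring_le _ _ s) hFs))
  obtain ⟨r, hαr, hrβ⟩ := exists_between (Set.mem_Ioi.mp hαβ)
  obtain ⟨g, hg0, hgd, hg⟩ := hd hαr
  obtain ⟨ρ, ⟨hrρ, hρβ⟩, P, hP, hPg⟩ := exists_isRationalKeyPolynomial hw hrβ hg0 hg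
  have hαρ := hαr.trans hrρ
  have hsρ : 1 ≤ discValuation w x ρ s := hs.trans (discValuation_mono w x s hαρ.le)
  obtain ⟨h, hh, hhs⟩ := hP.exists_rootFree_discValuation_eq (zero_lt_one.trans_le hsρ).ne'
  exact ⟨ρ, P, hP, hPg.trans_lt hgd, mem_vanishingSq_discValuation_integer_of_mem_adjoin hy hsρ hs0
    hh hhs (vanishing_mono (map_C_integer_le_discValuation_integer w x ρ) hF) (hβ ⟨hαρ, hρβ⟩)⟩

theorem discValuation_C_inv_mul_eq_one {c : K} (hc : c ≠ 0) {g : K[X]}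
    (hg : discValuation w x ρ g = w (algebraMap K L c)) :
    discValuation w x ρ (C c⁻¹ * g) = 1 := by
  have hwc : w (algebraMap K L c) ≠ 0 :=
    w.ne_zero_iff.mpr ((map_ne_zero (algebraMap K L)).mpr hc)
  rw [map_mul, discValuation_C, hg, map_inv₀, map_inv₀, inv_mul_cancel₀ hwc]

theorem IsKeyPolynomial.discValuation_eq_modByMonic {P Q : K[X]} (hP : IsKeyPolynomial w x α P)
    (hρα : ρ < α) (hQ0 : Q ≠ 0) (hQ : Q ∉ rootFree K w x ρ) (hPQ : P.natDegree < Q.natDegree)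
    (hconst : ∀ g : K[X], g.natDegree < Q.natDegree →
      discValuation w x α g = discValuation w x 0 g) :
    discValuation w x α Q = discValuation w x α (Q %ₘ P) := by
  have hdiv : (Q /ₘ P).natDegree < Q.natDegree := by
    have := hP.natDegree_ne_zero
    rw [natDegree_divByMonic Q hP.monic]
    omega
  have hmul : discValuation w x α (P * (Q /ₘ P)) = discValuation w x 0 (P * (Q /ₘ P)) := by
    rw [map_mul, map_mul, hconst P hPQ, hconst _ hdiv]
  rw [hP.discValuation_eq_max Q, max_eq_left_iff]
  by_contra! hlt
  have h0 : discValuation w x 0 Q = discValuation w x 0 (P * (Q /ₘ P)) := by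
    nth_rw 1 [← modByMonic_add_div Q P]
    exact Valuation.map_add_eq_of_lt_right _
      (((discValuation_mono w x _ zero_le).trans_lt hlt).trans_eq hmul)
  refine hQ ⟨hQ0, α, hρα, ?_⟩
  rw [hP.discValuation_eq_max Q, max_eq_right hlt.le, hmul, h0]

theorem IsRationalKeyPolynomial.mem_vanishingSq_integer_of_lt [Algebra.IsAlgebraic K L]
    (hy : ∀ z, w z ≤ 1 → ∃ b, y b = z)
    (hF : F ∈ vanishing φ y ((w.comap (algebraMap K L)).integer.map C)) {P Q : K[X]}
    (hQ : IsRationalKeyPolynomial w x ρ Q) (hP : IsKeyPolynomial w x α P)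
    (hρα : ρ < α) (hPQ : P.natDegree < Q.natDegree)
    (hconst : ∀ g : K[X], g.natDegree < Q.natDegree →
      discValuation w x α g = discValuation w x 0 g)
    (hFρ : F ∈ vanishingSq φ y (discValuation w x ρ).integer) :
    F ∈ vanishingSq φ y (discValuation w x α).integer := by
  obtain ⟨c, hc, hQc⟩ := hQ.exists_eq_algebraMap
  have hQα := hP.discValuation_eq_modByMonic hρα hQ.monic.ne_zero hQ.notMem_rootFree hPQ hconst
  have hs := discValuation_C_inv_mul_eq_one hc hQc
  have hmod : Q %ₘ P ∈ rootFree K w x α := by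
    refine hP.mem_rootFree _ (fun h => ?_) (hP.natDegree_modByMonic_lt Q)
    rw [h, map_zero] at hQα
    exact discValuation_ne_zero w x (pos_of_gt hρα).ne' hQ.monic.ne_zero hQα
  refine mem_vanishingSq_discValuation_integer_of_mem_adjoin hy (s := C c⁻¹ * Q)
    (h := C c⁻¹ * (Q %ₘ P)) (hs.ge.trans (discValuation_mono w x _ hρα.le))
    ((discValuation_mono w x _ zero_le).trans hs.le)
    (mul_mem (C_mem_rootFree w x α (inv_ne_zero hc)) hmod) ?_
    (vanishing_mono (map_C_integer_le_discValuation_integer w x α) hF)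
    (vanishingSq_mono (hQ.integer_le_adjoin hc hQc fun g _ hg hg1 => ?_) hFρ)
  · rw [map_mul, map_mul, hQα, discValuation_C, discValuation_C,
      discValuation_eq_of_mem_rootFree hmod]
  · exact (hconst g hg).trans_le hg1

theorem exists_ramificationIndex [Algebra.IsAlgebraic K L] {P : K[X]}
    (hP : discValuation w x 0 P ≠ 0) (α : ℝ≥0) :
    ∃ (e : ℕ), ∃ g ∈ rootFree K w x α, discValuation w x 0 (g * P ^ e) = 1 ∧
      ∀ q ∈ rootFree K w x α, ∀ i, discValuation w x 0 (q * P ^ i) = 1 → e ∣ i := by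
  let H : AddSubgroup ℤ :=
    { carrier := {i | ∃ q ∈ rootFree K w x α,
        discValuation w x 0 q * discValuation w x 0 P ^ i = 1}
      zero_mem' := ⟨1, one_mem _, by rw [map_one, zpow_zero, one_mul]⟩
      add_mem' := by
        rintro i j ⟨q, hq, hqi⟩ ⟨r, hr, hrj⟩
        refine ⟨q * r, mul_mem hq hr, ?_⟩
        rw [map_mul, zpow_add₀ hP, mul_mul_mul_comm, hqi, hrj, one_mul]
      neg_mem' := by
        rintro i ⟨q, hq, hqi⟩
        obtain ⟨r, hr, hrq⟩ := exists_rootFree_discValuation_eq_inv hq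
        refine ⟨r, hr, ?_⟩
        rw [hrq, zpow_neg, ← mul_inv, hqi, inv_one] }
  obtain ⟨e, he⟩ := Int.subgroup_cyclic H
  rw [← AddSubgroup.zmultiples_eq_closure, ← Int.zmultiples_natAbs] at he
  obtain ⟨g, hg, hge⟩ : (e.natAbs : ℤ) ∈ H := he ▸ AddSubgroup.mem_zmultiples _
  refine ⟨e.natAbs, g, hg, by rwa [map_mul, map_pow, ← zpow_natCast], fun q hq i hqi => ?_⟩
  have hi : (i : ℤ) ∈ H := ⟨q, hq, by rwa [zpow_natCast, ← map_pow, ← map_mul]⟩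
  rw [he, Int.mem_zmultiples_iff] at hi
  exact Int.natCast_dvd_natCast.mp hi

theorem discValuation_mul_pow_eq_one {P g h q : K[X]} {e k : ℕ} (hg : discValuation w x ρ g ≠ 0)
    (hhg : discValuation w x ρ (h * g) = 1) (hge : discValuation w x ρ (g * P ^ e) = 1)
    (hq : discValuation w x ρ (q * P ^ (e * k)) = 1) : discValuation w x ρ (q * h ^ k) = 1 := by
  rw [map_mul] at hhg hge hq
  rw [pow_mul, map_pow] at hq
  have hhP : discValuation w x ρ h = discValuation w x ρ (P ^ e) :=
    mul_right_cancel₀ hg (hhg.trans (hge.symm.trans (mul_comm _ _)))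
  rw [map_mul, map_pow, hhP, hq]

theorem IsKeyPolynomial.exists_pow_mul_mem_adjoin_germIntegers {P g h f : K[X]}
    (hP : IsKeyPolynomial w x α P) (hPα : discValuation w x α P = discValuation w x 0 P)
    (hg : g ∈ rootFree K w x α) (hh : h ∈ rootFree K w x α)
    (hhg : discValuation w x 0 (h * g) = 1) {e : ℕ}
    (hge : discValuation w x 0 (g * P ^ e) = 1)
    (he : ∀ q ∈ rootFree K w x α, ∀ i, discValuation w x 0 (q * P ^ i) = 1 → e ∣ i)
    (hf : discValuation w x α f ≤ 1) :
    ∃ n, (h * g) ^ n * f ∈ Algebra.adjoin (germIntegers K w x α) {g * P ^ e} := by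
  set T := Algebra.adjoin (germIntegers K w x α) {g * P ^ e}
  have le_T {q : K[X]} (hq : q ∈ germIntegers K w x α) : q ∈ T := T.algebraMap_mem ⟨q, hq⟩
  have hu (n : ℕ) : (h * g) ^ n ∈ T :=
    pow_mem (le_T (mem_germIntegers_of_mem_rootFree (mul_mem hh hg) hhg.le)) n
  let W : AddSubmonoid K[X] :=
    { carrier := {f | ∃ n, (h * g) ^ n * f ∈ T}
      zero_mem' := ⟨0, by rw [mul_zero]; exact zero_mem T⟩
      add_mem' := by
        rintro a b ⟨m, ha⟩ ⟨n, hb⟩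
        refine ⟨m + n, ?_⟩
        have hab : (h * g) ^ (m + n) * (a + b) =
            (h * g) ^ n * ((h * g) ^ m * a) + (h * g) ^ m * ((h * g) ^ n * b) := by ring
        rw [hab]
        exact add_mem (mul_mem (hu n) ha) (mul_mem (hu m) hb) }
  refine hP.mem_addSubmonoid (W := W) (fun q i hq0 hq hqi => ?_) hf
  have hqα := hP.mem_rootFree q hq0 hq
  rw [hPα, ← map_pow, ← map_mul] at hqi
  rcases hqi.lt_or_eq with hlt | heq
  · refine ⟨0, le_T (mem_germIntegers_of_lt ?_)⟩
    rwa [pow_zero, one_mul, map_mul, map_pow, discValuation_eq_of_mem_rootFree hqα, hPα, ← map_pow,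
      ← map_mul]
  · obtain ⟨k, rfl⟩ := he q hqα i heq
    have hqh := discValuation_mul_pow_eq_one (discValuation_zero_ne_zero_of_mem_rootFree hg)
      hhg hge heq
    refine ⟨k, ?_⟩
    have hk : (h * g) ^ k * (q * P ^ (e * k)) = q * h ^ k * (g * P ^ e) ^ k := by ring
    rw [hk]
    exact mul_mem (le_T (mem_germIntegers_of_mem_rootFree (mul_mem hqα (pow_mem hh k)) hqh.le))
      (pow_mem (Algebra.self_mem_adjoin_singleton _ _) k)

theorem IsKeyPolynomial.exists_mem_vanishingSq_adjoin_germIntegers [Algebra.IsAlgebraic K L]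
    (hy : ∀ z, w z ≤ 1 → ∃ b, y b = z) {P : K[X]} (hP : IsKeyPolynomial w x α P)
    (hPα : discValuation w x α P = discValuation w x 0 P) (hα : α ≠ 0)
    (hF : F ∈ vanishing φ y (germIntegers K w x α))
    (hFα : F ∈ vanishingSq φ y (discValuation w x α).integer) :
    ∃ s : K[X], discValuation w x α s = 1 ∧
      F ∈ vanishingSq φ y (Algebra.adjoin (germIntegers K w x α) {s}).toSubring := by
  obtain ⟨e, g, hg, hge, he⟩ := exists_ramificationIndex (w := w) (x := x)
    (hPα ▸ discValuation_ne_zero w x hα hP.monic.ne_zero) α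
  obtain ⟨h, hh, hhg⟩ := exists_rootFree_discValuation_eq_inv hg
  have hhg : discValuation w x 0 (h * g) = 1 := by
    rw [map_mul, hhg, inv_mul_cancel₀ (discValuation_zero_ne_zero_of_mem_rootFree hg)]
  have hu : h * g ∈ germIntegers K w x α :=
    mem_germIntegers_of_mem_rootFree (mul_mem hh hg) hhg.le
  have le_adjoin : germIntegers K w x α ≤
      (Algebra.adjoin (germIntegers K w x α) {g * P ^ e}).toSubring := fun q hq =>
    (Algebra.adjoin (germIntegers K w x α) {g * P ^ e}).algebraMap_mem ⟨q, hq⟩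
  refine ⟨g * P ^ e, ?_, mem_vanishingSq_of_localization (M := Submonoid.powers (h * g))
    (S := (discValuation w x α).integer) ?_ ?_ ?_ (vanishing_mono le_adjoin hF) hFα⟩
  · rw [map_mul, map_pow, discValuation_eq_of_mem_rootFree hg, hPα, ← map_pow, ← map_mul, hge]
  · exact Submonoid.powers_le.mpr (le_adjoin hu)
  · rintro _ ⟨n, rfl⟩
    have hw1 : w (φ ((h * g) ^ n)) = 1 := by
      rw [← discValuation_zero, map_pow, hhg, one_pow]
    obtain ⟨b, hb⟩ := hy (φ ((h * g) ^ n))⁻¹ (by rw [map_inv₀, hw1, inv_one])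
    exact ⟨b, by rw [hb, mul_inv_cancel₀ (w.ne_zero_iff.mp (hw1 ▸ one_ne_zero))]⟩
  · intro f hf
    obtain ⟨n, hn⟩ := hP.exists_pow_mul_mem_adjoin_germIntegers hPα hg hh hhg hge he hf
    exact ⟨_, ⟨n, rfl⟩, hn⟩

theorem discValuation_eq_of_forall_lt_notMem_rootRadii {d : ℕ}
    (hα : ∀ r < α, r ∉ rootRadii K w x d) {g : K[X]} (hg : g.natDegree < d) :
    discValuation w x α g = discValuation w x 0 g := by
  rcases eq_or_ne g 0 with rfl | hg0
  · rw [map_zero, map_zero]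
  rcases eq_or_ne α 0 with rfl | hα0
  · rfl
  have heq : Set.EqOn (fun r => discValuation w x r g) (fun _ => discValuation w x 0 g)
      (Set.Iio α) := fun r hr =>
    discValuation_eq_of_mem_rootFree (by_contra fun h => hα r hr ⟨g, hg0, hg, h⟩)
  refine heq.closure (continuous_discValuation w x g) continuous_const ?_
  rw [closure_Iio' ⟨0, pos_iff_ne_zero.mpr hα0⟩]
  exact Set.self_mem_Iic

theorem map_C_integer_le_germIntegers (w : Valuation L ℝ≥0) (x : L) (α : ℝ≥0) :
    (w.comap (algebraMap K L)).integer.map C ≤ germIntegers K w x α :=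
  fun g hg => show ∀ᶠ ρ in 𝓝[>] α, g ∈ (discValuation w x ρ).integer from
    .of_forall fun ρ => map_C_integer_le_discValuation_integer w x ρ hg

theorem IsRationalKeyPolynomial.exists_mem_vanishingSq_adjoin_of_mem_rootRadii
    [Algebra.IsAlgebraic K L] (hy : ∀ z, w z ≤ 1 → ∃ b, y b = z)
    (hF : F ∈ vanishing φ y ((w.comap (algebraMap K L)).integer.map C)) {Q : K[X]}
    (hQ : IsRationalKeyPolynomial w x ρ Q) (hρα : ρ < α)
    (hlt : ∀ r < α, r ∉ rootRadii K w x Q.natDegree) (hα : α ∈ rootRadii K w x Q.natDegree)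
    (hFρ : F ∈ vanishingSq φ y (discValuation w x ρ).integer) :
    ∃ s : K[X], discValuation w x α s = 1 ∧
      F ∈ vanishingSq φ y (Algebra.adjoin (germIntegers K w x α) {s}).toSubring := by
  have hconst (g : K[X]) := discValuation_eq_of_forall_lt_notMem_rootRadii (g := g) hlt
  obtain ⟨g, hg0, hgQ, hg⟩ := hα
  obtain ⟨P, hP, hPg⟩ := exists_isKeyPolynomial hg0 hg
  have hPQ := hPg.trans_lt hgQ
  exact hP.exists_mem_vanishingSq_adjoin_germIntegers hy (hconst P hPQ) (pos_of_gt hρα).ne'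
    (vanishing_mono (map_C_integer_le_germIntegers w x α) hF)
    (hQ.mem_vanishingSq_integer_of_lt hy hF hP hρα hPQ hconst hFρ)

theorem IsRationalKeyPolynomial.exists_mem_vanishingSq_adjoin_of_notMem_rootRadii {Q : K[X]}
    (hQ : IsRationalKeyPolynomial w x ρ Q) (hα : α ∉ rootRadii K w x Q.natDegree)
    (hFρ : F ∈ vanishingSq φ y (discValuation w x ρ).integer) :
    ∃ s : K[X], discValuation w x ρ s = 1 ∧
      F ∈ vanishingSq φ y (Algebra.adjoin (germIntegers K w x α) {s}).toSubring := by
  obtain ⟨c, hc, hQc⟩ := hQ.exists_eq_algebraMap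
  refine ⟨C c⁻¹ * Q, discValuation_C_inv_mul_eq_one hc hQc,
    vanishingSq_mono (hQ.integer_le_adjoin hc hQc fun g hg0 hg hg1 => ?_) hFρ⟩
  exact mem_germIntegers_of_mem_rootFree (by_contra fun h => hα ⟨g, hg0, hg, h⟩) hg1

theorem IsRationalKeyPolynomial.exists_natDegree_lt [Algebra.IsAlgebraic K L]
    (hw : DenseRange (w.comap (algebraMap K L))) (hy : ∀ z, w z ≤ 1 → ∃ b, y b = z)
    (hF : F ∈ vanishing φ y ((w.comap (algebraMap K L)).integer.map C)) {Q : K[X]}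
    (hQ : IsRationalKeyPolynomial w x ρ Q) (hQ1 : 1 < Q.natDegree)
    (hFρ : F ∈ vanishingSq φ y (discValuation w x ρ).integer) :
    ∃ (ρ' : ℝ≥0) (P : K[X]), IsRationalKeyPolynomial w x ρ' P ∧ P.natDegree < Q.natDegree ∧
      F ∈ vanishingSq φ y (discValuation w x ρ').integer := by
  have hne := nonempty_rootRadii K w x hQ1
  have hupper := isUpperSet_rootRadii (K := K) w x Q.natDegree
  -- Below `α` polynomials of degree less than `Q.natDegree` have constant disc valuation; just
  -- above `α` one of them has a root in the disc, and this yields the new key polynomial.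
  set α := sInf (rootRadii K w x Q.natDegree)
  have hIoi : Set.Ioi α ⊆ rootRadii K w x Q.natDegree := fun r hr => by
    obtain ⟨t, ht, htr⟩ := exists_lt_of_csInf_lt hne hr
    exact hupper htr.le ht
  have hρ : ρ ∉ rootRadii K w x Q.natDegree := fun ⟨g, hg0, hgQ, hg⟩ =>
    hg (hQ.mem_rootFree g hg0 hgQ)
  have hρα : ρ ≤ α := le_csInf hne fun t ht => le_of_not_ge fun h => hρ (hupper h ht)
  by_cases hα : α ∈ rootRadii K w x Q.natDegree
  · obtain ⟨s, hs, hFs⟩ := hQ.exists_mem_vanishingSq_adjoin_of_mem_rootRadii hy hF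
      (hρα.lt_of_ne fun h => hρ (h ▸ hα)) (fun r hr => notMem_of_lt_csInf' hr) hα hFρ
    exact exists_isRationalKeyPolynomial_mem_vanishingSq_integer hw hy hF hIoi hs.ge
      ((discValuation_mono w x s zero_le).trans hs.le) hFs
  · obtain ⟨s, hs, hFs⟩ := hQ.exists_mem_vanishingSq_adjoin_of_notMem_rootRadii hα hFρ
    exact exists_isRationalKeyPolynomial_mem_vanishingSq_integer hw hy hF hIoi
      (hs.ge.trans (discValuation_mono w x s hρα))
      ((discValuation_mono w x s zero_le).trans hs.le) hFs

theorem eq_zero_of_aeval_eq_zero_of_natDegree_ne_zero {K : Type*} [Field K] {T : Subring K}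
    {s : K[X]} (hs : s.natDegree ≠ 0) {z : Polynomial (T.map (C : K →+* K[X]))}
    (hz : aeval s z = 0) : z = 0 := by
  obtain ⟨u, hu⟩ : z.map (T.map C).subtype ∈ Polynomial.lifts C := by
    rw [lifts_iff_coeff_lifts]
    intro n
    obtain ⟨a, -, ha⟩ := (z.coeff n).2
    exact ⟨a, by rw [coeff_map]; exact ha⟩
  rw [coe_mapRingHom] at hu
  have hus : u.comp s = 0 := by
    rw [comp, eval₂_eq_eval_map, hu, eval_map]
    exact hz
  have hu0 : u = 0 := (comp_eq_zero_iff.mp hus).resolve_right fun h =>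
    hs (h.2 ▸ natDegree_C _)
  rw [hu0, Polynomial.map_zero] at hu
  exact Polynomial.map_injective _ Subtype.coe_injective
    (hu.symm.trans (Polynomial.map_zero _).symm)

theorem IsRationalKeyPolynomial.mem_vanishingSq_of_natDegree_eq_one
    (hy : ∀ z, w z ≤ 1 → ∃ b, y b = z)
    (hF : F ∈ vanishing φ y ((w.comap (algebraMap K L)).integer.map C)) {Q : K[X]}
    (hQ : IsRationalKeyPolynomial w x ρ Q) (hQ1 : Q.natDegree = 1)
    (hFρ : F ∈ vanishingSq φ y (discValuation w x ρ).integer) :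
    F ∈ vanishingSq φ y ((w.comap (algebraMap K L)).integer.map C) := by
  obtain ⟨c, hc, hQc⟩ := hQ.exists_eq_algebraMap
  have hs := discValuation_C_inv_mul_eq_one hc hQc
  have hdeg : (C c⁻¹ * Q).natDegree ≠ 0 := by
    rw [natDegree_C_mul (inv_ne_zero hc), hQ1]
    exact one_ne_zero
  refine mem_vanishingSq_of_mem_adjoin (s := C c⁻¹ * Q) (p := 0) (hy _ ?_) (map_zero _)
    (.inl rfl) (fun z hz => ⟨1, ?_, ?_⟩) hF
    (vanishingSq_mono (hQ.integer_le_adjoin hc hQc fun g _ hg hg1 => ?_) hFρ)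
  · rw [← discValuation_zero]
    exact (discValuation_mono w x _ zero_le).trans hs.le
  · obtain ⟨b, hb⟩ := hy 1 (map_one w).le
    exact ⟨b, by rw [hb, mul_one]; exact map_one φ⟩
  · rw [eq_zero_of_aeval_eq_zero_of_natDegree_ne_zero hdeg hz, mul_zero]
  · rw [hQ1, Nat.lt_one_iff] at hg
    rw [eq_C_of_natDegree_eq_zero hg] at hg1 ⊢
    exact ⟨_, (discValuation_C w x 0 _).symm.trans_le hg1, rfl⟩

theorem IsRationalKeyPolynomial.mem_vanishingSq [Algebra.IsAlgebraic K L]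
    (hw : DenseRange (w.comap (algebraMap K L))) (hy : ∀ z, w z ≤ 1 → ∃ b, y b = z)
    (hF : F ∈ vanishing φ y ((w.comap (algebraMap K L)).integer.map C)) {Q : K[X]}
    (hQ : IsRationalKeyPolynomial w x ρ Q)
    (hFρ : F ∈ vanishingSq φ y (discValuation w x ρ).integer) :
    F ∈ vanishingSq φ y ((w.comap (algebraMap K L)).integer.map C) := by
  induction hn : Q.natDegree using Nat.strong_induction_on generalizing ρ Q with
  | _ n ih =>
    rcases (Nat.one_le_iff_ne_zero.mpr hQ.natDegree_ne_zero).eq_or_lt with hQ1 | hQ1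
    · exact hQ.mem_vanishingSq_of_natDegree_eq_one hy hF hQ1.symm hFρ
    · obtain ⟨ρ', P, hP, hPQ, hFP⟩ := hQ.exists_natDegree_lt hw hy hF hQ1 hFρ
      exact ih _ (hPQ.trans_eq hn) hP hFP rfl

theorem mem_vanishingSq_of_mem_vanishingSq_comap [Algebra.IsAlgebraic K L]
    (hw : DenseRange (w.comap (algebraMap K L))) (hy : ∀ z, w z ≤ 1 → ∃ b, y b = z)
    (hF : F ∈ vanishing φ y ((w.comap (algebraMap K L)).integer.map C))
    (hFx : F ∈ vanishingSq φ y (w.integer.comap φ)) :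
    F ∈ vanishingSq φ y ((w.comap (algebraMap K L)).integer.map C) := by
  have hle : w.integer.comap φ ≤
      (Algebra.adjoin (germIntegers K w x 0) {(1 : K[X])}).toSubring := by
    intro g hg
    refine (Algebra.adjoin _ _).algebraMap_mem
      (⟨g, integer_discValuation_zero_le_germIntegers w x ?_⟩ : germIntegers K w x 0)
    rw [Valuation.mem_integer_iff, discValuation_zero]
    exact hg
  obtain ⟨ρ, P, hP, -, hFP⟩ := exists_isRationalKeyPolynomial_mem_vanishingSq_integer hw hy hF
    (fun ρ _ => mem_rootRadii_of_natDegree_minpoly_lt (Algebra.IsIntegral.isIntegral x)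
      (Nat.lt_succ_self _) ρ)
    (map_one _).ge (map_one _).le (vanishingSq_mono hle hFx)
  exact hP.mem_vanishingSq hw hy hF hFP

end Descent

section Dense

open MvPolynomial

variable {A K B L : Type*} [CommRing A] [Field K] [Algebra A K] [Field L] [Algebra K L]
  [Algebra.IsSeparable K L] [Algebra A L] [IsScalarTower A K L]
  [CommRing B] [Algebra B L] [Algebra A B] [IsScalarTower A B L]

theorem range_C_comp_algebraMap {v : Valuation K ℝ≥0} (hA : v.Integers A) :
    (Polynomial.C.comp (algebraMap A K)).range = v.integer.map Polynomial.C := by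
  rw [← RingHom.map_range]
  congr 1
  exact le_antisymm (by rintro _ ⟨a, rfl⟩; exact hA.map_le_one a)
    fun _ hc => hA.exists_of_le_one hc

theorem exists_surjective_aeval (K L : Type*) [Field K] [Field L] [Algebra K L]
    [FiniteDimensional K L] [Algebra.IsSeparable K L] :
    ∃ x : L, Function.Surjective (Polynomial.aeval (R := K) x) := by
  obtain ⟨x, hx⟩ := Field.exists_primitive_element K L
  refine ⟨x, AlgHom.range_eq_top _ |>.mp ?_⟩
  rw [← Algebra.adjoin_singleton_eq_range_aeval,
    ← IntermediateField.adjoin_simple_toSubalgebra_of_isAlgebraic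
      (Algebra.IsAlgebraic.isAlgebraic x), hx, IntermediateField.top_toSubalgebra]

theorem ker_eval₂Hom_algebraMap {A B L : Type*} [CommRing A] [CommRing B] [CommRing L]
    [Algebra A B] [Algebra A L] [Algebra B L] [IsScalarTower A B L]
    (hBL : Function.Injective (algebraMap B L)) :
    RingHom.ker (eval₂Hom (algebraMap A L) (algebraMap B L)) =
      RingHom.ker (aeval (R := A) (id : B → B)) := by
  ext G
  rw [RingHom.mem_ker, RingHom.mem_ker, ← map_eq_zero_iff _ hBL]
  exact Eq.congr_left (aeval_algebraMap_apply L id G)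

theorem map_C_comp_algebraMap_mem_vanishingSq_comap {w : Valuation L ℝ≥0}
    (hA : (w.comap (algebraMap K L)).Integers A) (hB : w.Integers B) {x : L}
    (hx : Function.Surjective (Polynomial.aeval (R := K) x)) {F : MvPolynomial B A}
    (hF : aeval (id : B → B) F = 0) (hF' : ∀ b, aeval id (pderiv b F) = 0) :
    map (Polynomial.C.comp (algebraMap A K)) F ∈
      vanishingSq (Polynomial.eval₂RingHom (algebraMap K L) x) (algebraMap B L)
        (w.integer.comap (Polynomial.eval₂RingHom (algebraMap K L) x)) := by
  have aeval_eq_zero {G : MvPolynomial B A} (hG : aeval id G = 0) :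
      aeval (algebraMap B L) (map (algebraMap A K) G) = 0 := by
    rw [aeval_map_algebraMap, ← map_zero (algebraMap B L), ← hG]
    exact aeval_algebraMap_apply L id G
  rw [← map_map]
  refine map_C_mem_vanishingSq_comap
    ((Algebra.IsSeparable.isSeparable K x).aeval_derivative_ne_zero (minpoly.aeval K x)) hx
    hB.map_le_one (fun m => ?_) (aeval_eq_zero hF) fun b => ?_
  · rw [coeff_map]
    exact hA.map_le_one _
  · rw [pderiv_map]
    exact aeval_eq_zero (hF' b)

theorem subsingleton_h1Cotangent_of_denseRange [FiniteDimensional K L] (w : Valuation L ℝ≥0)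
    (hw : DenseRange (w.comap (algebraMap K L)))
    (hA : (w.comap (algebraMap K L)).Integers A) (hB : w.Integers B) :
    Subsingleton (Algebra.H1Cotangent A B) := by
  refine subsingleton_h1Cotangent_of_mem_sq_ker fun F hF hF' => ?_
  obtain ⟨x, hx⟩ := exists_surjective_aeval K L
  set θ : A →+* Polynomial K := Polynomial.C.comp (algebraMap A K)
  have hθinj : Function.Injective θ := Polynomial.C_injective.comp hA.hom_inj
  have hφθ : (Polynomial.eval₂RingHom (algebraMap K L) x).comp θ = algebraMap A L := by
    ext a
    exact (Polynomial.eval₂_C _ _).trans (IsScalarTower.algebraMap_apply A K L a).symm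
  have hker := ker_eval₂Hom_algebraMap (A := A) hB.hom_inj
  have hFvan : map θ F ∈ vanishing (Polynomial.eval₂RingHom (algebraMap K L) x)
      (algebraMap B L) θ.range := by
    rw [mem_vanishing_range_iff, hφθ, hker]
    exact ⟨F, hF, rfl⟩
  have hFsq := mem_vanishingSq_of_mem_vanishingSq_comap hw (fun z hz => hB.exists_of_le_one hz)
    (range_C_comp_algebraMap hA ▸ hFvan)
    (map_C_comp_algebraMap_mem_vanishingSq_comap hA hB hx hF hF')
  rw [← range_C_comp_algebraMap hA, mem_vanishingSq_range_iff, hφθ, hker] at hFsq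
  obtain ⟨P, hP, hPF⟩ := hFsq
  exact map_injective θ hθinj hPF ▸ hP

end Dense

section Discrete

open IsLocalRing MvPolynomial

theorem injective_of_spanFinrank_le_finrank {R M N : Type*} [CommRing R] [IsDomain R]
    [AddCommGroup M] [Module R M] [Module.Finite R M] [AddCommGroup N] [Module R N]
    [Module.Finite R N] (f : M →ₗ[R] N)
    (hrank : (⊤ : Submodule R M).spanFinrank ≤ Module.finrank R N)
    (hcoker : Module.IsTorsion R (N ⧸ LinearMap.range f)) : Function.Injective f := by
  obtain ⟨s, hcard, hspan⟩ :=
    (Module.Finite.fg_top (R := R) (M := M)).exists_span_finset_card_eq_spanFinrank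
  let g : (s → R) →ₗ[R] M := Fintype.linearCombination R Subtype.val
  have hg : LinearMap.range g = ⊤ := by
    rw [Fintype.range_linearCombination, Subtype.range_coe, hspan]
  have hrange : Module.finrank R (LinearMap.range (f ∘ₗ g)) = Module.finrank R N := by
    have := (LinearMap.range f).finrank_quotient_add_finrank
    rwa [Module.finrank_eq_zero_iff_isTorsion.mpr hcoker, zero_add,
      ← LinearMap.range_comp_of_range_eq_top f hg] at this
  have hker : Module.finrank R (LinearMap.ker (f ∘ₗ g)) = 0 := by
    have := (LinearMap.ker (f ∘ₗ g)).finrank_quotient_add_finrank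
    rw [(f ∘ₗ g).quotKerEquivRange.finrank_eq, Module.finrank_fintype_fun_eq_card,
      Fintype.card_coe, hrange, hcard] at this
    omega
  have hinj : Function.Injective (f ∘ₗ g) := by
    rw [← LinearMap.ker_eq_bot, ← Submodule.rank_eq_zero]
    refine ((Cardinal.toNat_eq_zero.mp hker).resolve_right (not_le.mpr ?_))
    exact (Submodule.rank_le _).trans_lt (Module.rank_lt_aleph0 R _)
  rw [LinearMap.coe_comp] at hinj
  exact hinj.of_comp_right (LinearMap.range_eq_top.mp hg)

theorem inf_maximalIdeal_sq_le {T : Type*} [CommRing T] [IsLocalRing T]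
    (I : Ideal T) [I.IsPrime] {t : T} (ht : t ∈ maximalIdeal T) (htI : t ∉ I)
    (hmax : maximalIdeal T ≤ I ⊔ Ideal.span {t}) :
    I ⊓ maximalIdeal T ^ 2 ≤ maximalIdeal T * I := by
  have hsq : maximalIdeal T ^ 2 ≤ maximalIdeal T * I ⊔ maximalIdeal T * Ideal.span {t} := by
    rw [pow_two, ← Ideal.mul_sup]
    exact Ideal.mul_mono_right hmax
  rintro y ⟨hyI, hy⟩
  obtain ⟨z, hz, w, hw, hzw⟩ := Submodule.mem_sup.mp (hsq hy)
  obtain ⟨c, -, rfl⟩ := Ideal.mem_mul_span_singleton.mp hw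
  have hctI : c * t ∈ I := by
    rw [← hzw] at hyI
    exact (I.add_mem_iff_right (Ideal.mul_le_right hz)).mp hyI
  have hcI : c ∈ I := (Ideal.IsPrime.mem_or_mem ‹_› hctI).resolve_right htI
  rw [← hzw, mul_comm c t]
  exact add_mem hz (Ideal.mul_mem_mul ht hcI)

theorem notMem_sup_maximalIdeal_sq {T : Type*} [CommRing T] [IsLocalRing T]
    (I : Ideal T) {t : T} (htI : t ∉ I)
    (hmax : maximalIdeal T ≤ I ⊔ Ideal.span {t}) : t ∉ I ⊔ maximalIdeal T ^ 2 := by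
  intro h
  have hle : I ⊔ maximalIdeal T ^ 2 ≤ I ⊔ maximalIdeal T * Ideal.span {t} := by
    rw [pow_two]
    refine sup_le le_sup_left ((Ideal.mul_mono_right hmax).trans ?_)
    rw [Ideal.mul_sup]
    exact sup_le_sup_right Ideal.mul_le_right _
  obtain ⟨y, hy, w, hw, hyw⟩ := Submodule.mem_sup.mp (hle h)
  obtain ⟨c, hc, rfl⟩ := Ideal.mem_mul_span_singleton.mp hw
  have hunit : IsUnit (1 - c) :=
    (isUnit_or_isUnit_one_sub_self c).resolve_left ((mem_maximalIdeal c).mp hc)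
  refine htI ((Ideal.unit_mul_mem_iff_mem I hunit).mp ?_)
  rwa [show (1 - c) * t = y by linear_combination -hyw]

theorem spanFinrank_lt_of_maximalIdeal_le_sup {T : Type*} [CommRing T] [IsLocalRing T]
    [IsNoetherianRing T] (I : Ideal T) [I.IsPrime] {t : T} (ht : t ∈ maximalIdeal T) (htI : t ∉ I)
    (hmax : maximalIdeal T ≤ I ⊔ Ideal.span {t}) :
    I.spanFinrank < Module.finrank (ResidueField T) (CotangentSpace T) := by
  have hI : I ≤ maximalIdeal T := le_maximalIdeal (Ideal.IsPrime.ne_top inferInstance)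
  let k := ResidueField T
  let φ : I →ₗ[T] CotangentSpace T := (maximalIdeal T).toCotangent ∘ₗ Submodule.inclusion hI
  let φk : TensorProduct T k I →ₗ[k] CotangentSpace T := φ.liftBaseChange k
  have hφk (y : I) : φk (TensorProduct.mk T k I 1 y) = φ y := by
    simp only [φk, TensorProduct.mk_apply, LinearMap.liftBaseChange_tmul, one_smul]
  have hsurj := TensorProduct.mk_surjective T I k residue_surjective
  have hzero : maximalIdeal T • (⊤ : Submodule T I) ≤ LinearMap.ker (TensorProduct.mk T k I 1) :=
    Submodule.smul_le.mpr fun r hr y _ => by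
      rw [LinearMap.mem_ker, map_smul, TensorProduct.mk_apply, TensorProduct.smul_tmul',
        Algebra.smul_def, ResidueField.algebraMap_eq, (residue_eq_zero_iff r).mpr hr, zero_mul,
        TensorProduct.zero_tmul]
  have hinj : Function.Injective φk := by
    refine (injective_iff_map_eq_zero _).mpr fun x hx => ?_
    obtain ⟨y, rfl⟩ := hsurj x
    refine hzero ((Submodule.mem_smul_top_iff _ _ _).mpr ?_)
    rw [hφk] at hx
    exact inf_maximalIdeal_sq_le I ht htI hmax ⟨y.2, ((maximalIdeal T).toCotangent_eq_zero _).mp hx⟩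
  rw [← TensorProduct.spanFinrank_top_eq_of_residueField I I.fg_of_isNoetherianRing,
    ← Module.finrank_eq_spanFinrank_of_free, ← LinearMap.finrank_range_of_inj hinj]
  refine Submodule.finrank_lt fun htop => notMem_sup_maximalIdeal_sq I htI hmax ?_
  obtain ⟨x, hy⟩ := LinearMap.range_eq_top.mp htop ((maximalIdeal T).toCotangent ⟨t, ht⟩)
  obtain ⟨y, rfl⟩ := hsurj x
  have : (y : T) - t ∈ maximalIdeal T ^ 2 := (Ideal.toCotangent_eq _).mp ((hφk y).symm.trans hy)
  rw [← sub_sub_cancel (y : T) t]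
  exact sub_mem (Ideal.mem_sup_left y.2) (Ideal.mem_sup_right this)

theorem finite_cotangent {R S : Type*} [CommRing R] [CommRing S] [Algebra R S]
    (P : Algebra.Extension R S) (h : P.ker.FG) : Module.Finite S P.Cotangent :=
  have : Module.Finite P.Ring P.ker := Module.Finite.iff_fg.mpr h
  have : Module.Finite P.Ring P.Cotangent :=
    .of_surjective _ Algebra.Extension.Cotangent.mk_surjective
  .of_restrictScalars_finite P.Ring S P.Cotangent

theorem spanFinrank_cotangent_le {R S : Type*} [CommRing R] [CommRing S] [Algebra R S]
    (P : Algebra.Extension R S) (h : P.ker.FG) :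
    (⊤ : Submodule S P.Cotangent).spanFinrank ≤ P.ker.spanFinrank := by
  have hmap : Submodule.map Algebra.Extension.Cotangent.mk ⊤ =
      (⊤ : Submodule P.Ring P.Cotangent) := by
    rw [Submodule.map_top, LinearMap.range_eq_top.mpr Algebra.Extension.Cotangent.mk_surjective]
  have hle : (⊤ : Submodule P.Ring P.Cotangent).spanFinrank ≤ P.ker.spanFinrank := by
    rw [← hmap, ← P.ker.spanFinrank_top]
    exact Submodule.spanFinrank_map_le_of_fg _ ((Submodule.fg_top _).mpr h)
  rwa [Submodule.spanFinrank, ← Submodule.spanRank_restrictScalars_eq P.algebraMap_surjective,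
    Submodule.restrictScalars_top]

theorem spanFinrank_ker_lt {A B : Type*} [CommRing A] [CommRing B]
    [IsDomain B] [IsPrincipalIdealRing B] [IsLocalRing B] [Algebra A B]
    (P : Algebra.Extension A B) [IsNoetherianRing P.Ring] [IsLocalRing P.Ring]
    (hB : ¬ IsField B) :
    P.ker.spanFinrank < Module.finrank (ResidueField P.Ring) (CotangentSpace P.Ring) := by
  have : P.ker.IsPrime := RingHom.ker_isPrime _
  have : IsLocalHom (algebraMap P.Ring B) := P.algebraMap_surjective.isLocalHom _
  obtain ⟨b, hb⟩ := (IsPrincipalIdealRing.principal (maximalIdeal B)).principal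
  obtain ⟨t, rfl⟩ := P.algebraMap_surjective b
  have hcomap : (maximalIdeal B).comap (algebraMap P.Ring B) = maximalIdeal P.Ring :=
    maximalIdeal_comap _
  refine spanFinrank_lt_of_maximalIdeal_le_sup P.ker (t := t) ?_ (fun h => ?_) ?_
  · rw [← hcomap, Ideal.mem_comap, hb]
    exact Ideal.mem_span_singleton_self _
  · refine hB (isField_iff_maximalIdeal_eq.mpr ?_)
    rw [hb, RingHom.mem_ker.mp h, Submodule.span_zero_singleton]
  · rw [← hcomap, hb, ← Set.image_singleton, Ideal.submodule_span_eq, ← Ideal.map_span,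
      Ideal.comap_map_of_surjective _ P.algebraMap_surjective, sup_comm]
    exact le_rfl

-- The rank of the cotangent module of `P` is bounded by the number of generators of `P.ker`, which
-- is less than the embedding dimension of `P.Ring`, hence at most the rank of `Ω[P.Ring⁄A]`.
theorem subsingleton_h1Cotangent_of_formallySmooth_extension {A B : Type*} [CommRing A] [CommRing B]
    [IsDomain B] [IsPrincipalIdealRing B] [IsLocalRing B] [Algebra A B]
    (P : Algebra.Extension A B) [IsNoetherianRing P.Ring] [IsLocalRing P.Ring]
    [Algebra.FormallySmooth A P.Ring] [Module.Free P.Ring Ω[P.Ring⁄A]]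
    [Module.Finite P.Ring Ω[P.Ring⁄A]] (hB : ¬ IsField B)
    (hdim : Module.finrank (ResidueField P.Ring) (CotangentSpace P.Ring) ≤
      Module.finrank P.Ring Ω[P.Ring⁄A] + 1)
    (htors : Module.IsTorsion B Ω[B⁄A]) :
    Subsingleton (Algebra.H1Cotangent A B) := by
  have : Module.Finite B P.CotangentSpace := inferInstanceAs (Module.Finite B (TensorProduct ..))
  have : Module.Finite B P.Cotangent := finite_cotangent P P.ker.fg_of_isNoetherianRing
  refine P.cotangentComplex_injective_iff.mp (injective_of_spanFinrank_le_finrank _ ?_ ?_)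
  · have hfree : Module.finrank B P.CotangentSpace = Module.finrank P.Ring Ω[P.Ring⁄A] :=
      Module.finrank_baseChange
    have hgen := spanFinrank_cotangent_le P P.ker.fg_of_isNoetherianRing
    have hker := spanFinrank_ker_lt P hB
    omega
  · intro x
    obtain ⟨x, rfl⟩ := Submodule.Quotient.mk_surjective _ x
    obtain ⟨r, hr⟩ := @htors (P.toKaehler x)
    refine ⟨r, ?_⟩
    rw [Submonoid.smul_def, ← map_smul] at hr
    exact (Submodule.Quotient.mk_eq_zero _).mpr
      ((P.exact_cotangentComplex_toKaehler _).mp hr)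

theorem exists_surjective_localization_mvPolynomial (A B : Type*) [CommRing A] [CommRing B]
    [IsLocalRing B] [Algebra A B] [Algebra.EssFiniteType A B] :
    ∃ (σ : Finset B) (q : Ideal (MvPolynomial σ A)) (_ : q.IsPrime)
      (f : Localization.AtPrime q →ₐ[A] B), Function.Surjective f := by
  obtain ⟨σ, hσ⟩ := (Algebra.essFiniteType_iff A B).mp inferInstance
  rw [Algebra.adjoin_eq_range] at hσ
  let ψ : MvPolynomial σ A →ₐ[A] B := aeval Subtype.val
  let q := (maximalIdeal B).comap ψ
  have hq : q.IsPrime := Ideal.comap_isPrime ψ _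
  have hunit (s : q.primeCompl) : IsUnit (ψ s) := of_not_not s.2
  refine ⟨σ, q, hq, IsLocalization.liftAlgHom (M := q.primeCompl) hunit, fun b => ?_⟩
  obtain ⟨_, ⟨s, rfl⟩, hs, p, hp⟩ := hσ b
  refine ⟨IsLocalization.mk' _ p (⟨s, fun h => h hs⟩ : q.primeCompl), ?_⟩
  rw [IsLocalization.coe_liftAlgHom, IsLocalization.lift_mk'_spec]
  exact hp.trans (mul_comm _ _)

theorem finrank_cotangentSpace_le {A σ : Type*} [CommRing A] [IsRegularRing A]
    [Ring.KrullDimLE 1 A] [Fintype σ] (q : Ideal (MvPolynomial σ A)) [q.IsPrime] :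
    Module.finrank (ResidueField (Localization.AtPrime q))
      (CotangentSpace (Localization.AtPrime q)) ≤ Fintype.card σ + 1 := by
  have hdim : ringKrullDim (Localization.AtPrime q) ≤ (Fintype.card σ + 1 : ℕ) := calc
    ringKrullDim (Localization.AtPrime q) = q.height :=
      IsLocalization.AtPrime.ringKrullDim_eq_height q _
    _ ≤ ringKrullDim (MvPolynomial σ A) :=
      Ideal.height_le_ringKrullDim_of_ne_top (Ideal.IsPrime.ne_top ‹_›)
    _ = ringKrullDim A + Fintype.card σ := by
      rw [ringKrullDim_of_isNoetherianRing, Nat.card_eq_fintype_card]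
    _ ≤ (Fintype.card σ + 1 : ℕ) := by
      rw [add_comm (Fintype.card σ), Nat.cast_add]
      gcongr
      exact Order.krullDimLE_iff _ _ |>.mp inferInstance
  rw [← (IsRegularLocalRing.iff_finrank_cotangentSpace _).mp inferInstance] at hdim
  exact_mod_cast hdim

theorem nonempty_basis_kaehlerDifferential_localization {A σ : Type*} [CommRing A]
    (q : Ideal (MvPolynomial σ A)) [q.IsPrime] :
    Nonempty (Module.Basis σ (Localization.AtPrime q) Ω[Localization.AtPrime q⁄A]) :=
  have : Algebra.FormallyEtale (MvPolynomial σ A) (Localization.AtPrime q) :=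
    .of_isLocalization q.primeCompl
  ⟨((KaehlerDifferential.mvPolynomialBasis A σ).baseChange _).map
    (KaehlerDifferential.tensorKaehlerEquivOfFormallyEtale ..)⟩

theorem subsingleton_h1Cotangent_of_essFiniteType {A B : Type*} [CommRing A] [IsRegularRing A]
    [Ring.KrullDimLE 1 A] [CommRing B] [IsDomain B] [IsDiscreteValuationRing B] [Algebra A B]
    [Algebra.EssFiniteType A B] (htors : Module.IsTorsion B Ω[B⁄A]) :
    Subsingleton (Algebra.H1Cotangent A B) := by
  obtain ⟨σ, q, hq, f, hf⟩ := exists_surjective_localization_mvPolynomial A B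
  obtain ⟨b⟩ := nonempty_basis_kaehlerDifferential_localization q
  have := Module.Free.of_basis b
  have := Module.Finite.of_basis b
  have hrank := Module.finrank_eq_card_basis b
  have : Algebra.FormallySmooth (MvPolynomial σ A) (Localization.AtPrime q) :=
    .of_isLocalization q.primeCompl
  have hsmooth := Algebra.FormallySmooth.comp A (MvPolynomial σ A) (Localization.AtPrime q)
  let P : Algebra.Extension A B := .ofSurjective f hf
  have : IsNoetherianRing P.Ring := inferInstanceAs (IsNoetherianRing (Localization.AtPrime q))
  have : IsLocalRing P.Ring := inferInstanceAs (IsLocalRing (Localization.AtPrime q))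
  have : Algebra.FormallySmooth A P.Ring := hsmooth
  have : Module.Free P.Ring Ω[P.Ring⁄A] := ‹_›
  have : Module.Finite P.Ring Ω[P.Ring⁄A] := ‹_›
  refine subsingleton_h1Cotangent_of_formallySmooth_extension P ?_ ?_ htors
  · exact IsDiscreteValuationRing.not_isField B
  · exact (finrank_cotangentSpace_le q).trans_eq (congrArg (· + 1) hrank.symm)

theorem exists_mul_eq_mul_of_isPrime {C : Type*} [CommRing C] [IsDedekindDomain C] {q : Ideal C}
    [q.IsPrime] (hq : q ≠ ⊥) (c d : C) : ∃ x, ∃ s ∉ q, c * x = d * s ∨ d * x = c * s := by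
  let D := Localization.AtPrime q
  have := IsLocalization.AtPrime.isDiscreteValuationRing_of_dedekind_domain C hq D
  have hinj : Function.Injective (algebraMap C D) :=
    IsLocalization.injective _ q.primeCompl_le_nonZeroDivisors
  obtain ⟨e, he⟩ := ValuationRing.cond (algebraMap C D c) (algebraMap C D d)
  obtain ⟨⟨x, s⟩, hxs⟩ := IsLocalization.surj q.primeCompl e
  refine ⟨x, s, s.2, he.imp (fun h => hinj ?_) (fun h => hinj ?_)⟩ <;>
  · rw [map_mul, map_mul, ← h, ← hxs]
    ring

theorem isLocalization_atPrime_comap_maximalIdeal {C B : Type*} [CommRing C] [IsDedekindDomain C]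
    [CommRing B] [IsDomain B] [IsLocalRing B] [Algebra C B] [FaithfulSMul C B]
    (hq : (maximalIdeal B).comap (algebraMap C B) ≠ ⊥)
    (hfrac : ∀ z : B, ∃ c d : C, d ≠ 0 ∧ z * algebraMap C B d = algebraMap C B c) :
    IsLocalization.AtPrime B ((maximalIdeal B).comap (algebraMap C B)) := by
  have hinj := FaithfulSMul.algebraMap_injective C B
  refine ⟨⟨fun y => of_not_not y.2, fun z => ?_, fun h => ⟨1, by rw [hinj h]⟩⟩⟩
  obtain ⟨c, d, hd, hzd⟩ := hfrac z
  have hd' : algebraMap C B d ≠ 0 := (map_ne_zero_iff _ hinj).mpr hd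
  obtain ⟨x, s, hs, h | h⟩ := exists_mul_eq_mul_of_isPrime hq c d
  · have hzx : z * algebraMap C B x = algebraMap C B s := mul_left_cancel₀ hd' <| by
      rw [← map_mul, ← h, map_mul, ← hzd]
      ring
    have hx : IsUnit (algebraMap C B x) :=
      isUnit_of_mul_isUnit_right (hzx ▸ of_not_not hs : IsUnit (z * algebraMap C B x))
    exact ⟨(s, ⟨x, fun h => h hx⟩), hzx⟩
  · refine ⟨(x, ⟨s, hs⟩), mul_left_cancel₀ hd' ?_⟩
    rw [← map_mul, h, map_mul, ← hzd]
    ring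

theorem comap_maximalIdeal_ne_bot {C B : Type*} [CommRing C] [CommRing B] [IsLocalRing B]
    [NoZeroDivisors B] [Algebra C B] [FaithfulSMul C B] (hB : ¬ IsField B)
    (hfrac : ∀ z : B, ∃ c d : C, d ≠ 0 ∧ z * algebraMap C B d = algebraMap C B c) :
    (maximalIdeal B).comap (algebraMap C B) ≠ ⊥ := by
  intro hbot
  refine hB (isField_iff_maximalIdeal_eq.mpr (eq_bot_iff.mpr fun z hz => ?_))
  obtain ⟨c, d, hd, hzd⟩ := hfrac z
  have hc : c ∈ (maximalIdeal B).comap (algebraMap C B) := by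
    rw [Ideal.mem_comap, ← hzd]
    exact Ideal.mul_mem_right _ _ hz
  rw [hbot, Ideal.mem_bot] at hc
  rw [hc, map_zero] at hzd
  exact (mul_eq_zero.mp hzd).resolve_right
    ((map_ne_zero_iff _ (FaithfulSMul.algebraMap_injective C B)).mpr hd)

theorem isTorsion_kaehlerDifferential (A K B L : Type*) [CommRing A] [Field K] [Algebra A K]
    [IsFractionRing A K] [Field L] [Algebra K L] [Algebra.IsSeparable K L] [Algebra A L]
    [IsScalarTower A K L] [CommRing B] [Algebra B L] [IsFractionRing B L] [Algebra A B]
    [IsScalarTower A B L] : Module.IsTorsion B Ω[B⁄A] := by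
  have : Algebra.FormallyUnramified A K := .of_isLocalization (nonZeroDivisors A)
  have : Algebra.FormallyUnramified K L := .of_isSeparable K L
  have : Algebra.FormallyUnramified A L := .comp A K L
  have hloc := KaehlerDifferential.isLocalizedModule_map A B L (nonZeroDivisors B)
  intro x
  exact (IsLocalizedModule.eq_zero_iff (nonZeroDivisors B) (KaehlerDifferential.map A A B L)).mp
    (Subsingleton.elim _ _)

theorem exists_algHom_integralClosure (A B L : Type*) [CommRing A] [Field L] [Algebra A L]
    [CommRing B] [IsIntegrallyClosed B] [Algebra B L] [IsFractionRing B L] [Algebra A B]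
    [IsScalarTower A B L] :
    ∃ g : integralClosure A L →ₐ[A] B, ∀ c, algebraMap B L (g c) = c := by
  have hBL : Function.Injective (IsScalarTower.toAlgHom A B L) := IsFractionRing.injective B L
  have hle : integralClosure A L ≤ (IsScalarTower.toAlgHom A B L).range := fun c hc =>
    IsIntegrallyClosed.isIntegral_iff.mp (IsIntegral.tower_top (A := B) hc)
  let e := AlgEquiv.ofInjective _ hBL
  exact ⟨e.symm.toAlgHom.comp (Subalgebra.inclusion hle), fun c =>
    congrArg Subtype.val (e.apply_symm_apply (Subalgebra.inclusion hle c))⟩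

theorem subsingleton_h1Cotangent_of_valuationRing (A K B L : Type*) [CommRing A]
    [IsDedekindDomain A] [Field K] [Algebra A K] [IsFractionRing A K] [Field L] [Algebra K L]
    [FiniteDimensional K L] [Algebra.IsSeparable K L] [Algebra A L] [IsScalarTower A K L]
    [CommRing B] [IsDomain B] [ValuationRing B] [Algebra B L] [IsFractionRing B L] [Algebra A B]
    [IsScalarTower A B L] (hB : ¬ IsField B) : Subsingleton (Algebra.H1Cotangent A B) := by
  let C := integralClosure A L
  have : IsDedekindDomain C := integralClosure.isDedekindDomain A K L
  have : IsFractionRing C L := IsIntegralClosure.isFractionRing_of_finite_extension A K L C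
  have : Module.Finite A C := IsIntegralClosure.finite A K L C
  obtain ⟨g, hg⟩ := exists_algHom_integralClosure A B L
  let : Algebra C B := g.toRingHom.toAlgebra
  have : IsScalarTower A C B := .of_algebraMap_eq fun r => (g.commutes r).symm
  have hinj : Function.Injective (algebraMap C B) := fun c d h =>
    Subtype.ext <| by rw [← hg c, ← hg d]; exact congrArg _ h
  have : FaithfulSMul C B := (faithfulSMul_iff_algebraMap_injective C B).mpr hinj
  have hfrac (z : B) : ∃ c d : C, d ≠ 0 ∧ z * algebraMap C B d = algebraMap C B c := by
    obtain ⟨c, d, hd, hcd⟩ := IsFractionRing.div_surjective (A := C) (algebraMap B L z)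
    have hd0 : d ≠ 0 := nonZeroDivisors.ne_zero hd
    refine ⟨c, d, hd0, IsFractionRing.injective B L ?_⟩
    change algebraMap B L (z * g d) = algebraMap B L (g c)
    rw [map_mul, hg, hg, ← hcd]
    exact div_mul_cancel₀ _ (fun h => hd0 (Subtype.ext h))
  have hq : (maximalIdeal B).comap (algebraMap C B) ≠ ⊥ :=
    comap_maximalIdeal_ne_bot hB hfrac
  have := isLocalization_atPrime_comap_maximalIdeal hq hfrac
  have := IsLocalization.AtPrime.isDiscreteValuationRing_of_dedekind_domain C hq B
  have : Algebra.EssFiniteType C B :=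
    .of_isLocalization _ ((maximalIdeal B).comap (algebraMap C B)).primeCompl
  have : Algebra.EssFiniteType A B := .comp A C B
  exact subsingleton_h1Cotangent_of_essFiniteType (isTorsion_kaehlerDifferential A K B L)

end Discrete

section Integers

/-- The logarithms of the non-zero values of `v`. -/
def logValueGroup {K : Type*} [Field K] (v : Valuation K ℝ≥0) : AddSubgroup ℝ where
  carrier := {r | ∃ c, (v c : ℝ) = Real.exp r}
  zero_mem' := ⟨1, by rw [map_one, NNReal.coe_one, Real.exp_zero]⟩
  add_mem' := by
    rintro r s ⟨c, hc⟩ ⟨d, hd⟩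
    exact ⟨c * d, by rw [map_mul, NNReal.coe_mul, hc, hd, Real.exp_add]⟩
  neg_mem' := by
    rintro r ⟨c, hc⟩
    exact ⟨c⁻¹, by rw [map_inv₀, NNReal.coe_inv, hc, Real.exp_neg]⟩

theorem log_mem_logValueGroup {K : Type*} [Field K] (v : Valuation K ℝ≥0) {c : K} (hc : v c ≠ 0) :
    Real.log (v c) ∈ logValueGroup v :=
  ⟨c, (Real.exp_log (NNReal.coe_pos.mpr (pos_iff_ne_zero.mpr hc))).symm⟩

theorem dense_logValueGroup {K : Type*} [Field K] (v : Valuation K ℝ≥0) [v.IsNontrivial]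
    [DenselyOrdered (Set.range v)] : Dense (logValueGroup v : Set ℝ) := by
  obtain ⟨x, hx0, hx1⟩ := Valuation.IsNontrivial.exists_val_nontrivial (v := v)
  refine (logValueGroup v).dense_of_no_min (fun hbot => ?_) ?_
  · have hx := log_mem_logValueGroup v hx0
    rw [hbot, AddSubgroup.mem_bot, Real.log_eq_zero, NNReal.coe_eq_zero, NNReal.coe_eq_one] at hx
    rcases hx with hx | hx | hx
    · exact hx0 hx
    · exact hx1 hx
    · exact (neg_one_lt_zero.trans_le (v x).coe_nonneg).ne' hx
  · rintro ⟨r, ⟨⟨c, hc⟩, hr⟩, hmin⟩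
    have h1c : (⟨1, ⟨1, map_one v⟩⟩ : Set.range v) < ⟨v c, ⟨c, rfl⟩⟩ := by
      change (1 : ℝ) < v c
      rw [hc]
      exact Real.one_lt_exp_iff.mpr hr
    obtain ⟨⟨_, ⟨d, rfl⟩⟩, h1d : (1 : ℝ) < v d, hdc : (v d : ℝ) < v c⟩ := exists_between h1c
    have hd0 : v d ≠ 0 := (one_pos.trans (NNReal.coe_lt_coe.mp h1d)).ne'
    have hdr : Real.log (v d) < r :=
      (Real.log_lt_iff_lt_exp (one_pos.trans h1d)).mpr (hc ▸ hdc)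
    exact (hmin ⟨log_mem_logValueGroup v hd0, Real.log_pos h1d⟩).not_gt hdr

theorem denseRange_valuation {K : Type*} [Field K] (v : Valuation K ℝ≥0) [v.IsNontrivial]
    [DenselyOrdered (Set.range v)] : DenseRange v := by
  refine dense_of_exists_between fun r s hrs => ?_
  obtain ⟨t, hrt, hts⟩ := exists_between hrs
  have ht : (0 : ℝ) < t := NNReal.coe_pos.mpr (pos_of_gt hrt)
  obtain ⟨x, ⟨c, hc⟩, htx, hxs⟩ :=
    (dense_logValueGroup v).exists_between (Real.log_lt_log ht (NNReal.coe_lt_coe.mpr hts))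
  refine ⟨v c, ⟨c, rfl⟩, hrt.trans (NNReal.coe_lt_coe.mp ?_), NNReal.coe_lt_coe.mp ?_⟩
  · rw [hc]
    exact (Real.log_lt_iff_lt_exp ht).mp htx
  · rw [hc]
    exact (Real.lt_log_iff_exp_lt (ht.trans hts)).mp hxs

theorem not_isField_of_integers {F O : Type*} [Field F] [CommRing O] [Algebra O F]
    {v : Valuation F ℝ≥0} [v.IsNontrivial] (hO : v.Integers O) : ¬ IsField O := by
  intro hfield
  have := hO.hom_inj.isDomain
  have := hO.isFractionRing
  obtain ⟨x, hx0, hx1⟩ := Valuation.IsNontrivial.exists_val_nontrivial (v := v)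
  obtain ⟨r, rfl⟩ := (IsFractionRing.surjective_iff_isField (R := O) (K := F)).mpr hfield x
  have hr : r ≠ 0 := by
    rintro rfl
    exact hx0 (by rw [map_zero, map_zero])
  obtain ⟨s, hs⟩ := hfield.mul_inv_cancel hr
  exact hx1 (hO.isUnit_iff_valuation_eq_one.mp (.of_mul_eq_one s hs))

variable {A K B L : Type*} [CommRing A] [Field K] [Algebra A K] [Field L] [Algebra K L]
  [FiniteDimensional K L] [Algebra.IsSeparable K L] [Algebra A L] [IsScalarTower A K L]
  [CommRing B] [Algebra B L] [Algebra A B] [IsScalarTower A B L]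

theorem subsingleton_h1Cotangent_of_isPrincipalIdealRing [IsPrincipalIdealRing A]
    (w : Valuation L ℝ≥0) [w.IsNontrivial] (hA : (w.comap (algebraMap K L)).Integers A)
    (hB : w.Integers B) : Subsingleton (Algebra.H1Cotangent A B) := by
  have := hA.isFractionRing
  have := hB.isFractionRing
  have : IsDomain A := hA.hom_inj.isDomain
  have : IsDomain B := hB.hom_inj.isDomain
  have := ValuationRing.of_integers _ hB
  exact subsingleton_h1Cotangent_of_valuationRing A K B L (not_isField_of_integers hB)

theorem subsingleton_h1Cotangent_of_integers (w : Valuation L ℝ≥0)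
    [(w.comap (algebraMap K L)).IsNontrivial]
    (hA : (w.comap (algebraMap K L)).Integers A) (hB : w.Integers B) :
    Subsingleton (Algebra.H1Cotangent A B) := by
  by_cases h : DenselyOrdered (Set.range (w.comap (algebraMap K L)))
  · exact subsingleton_h1Cotangent_of_denseRange w (denseRange_valuation _) hA hB
  · obtain ⟨x, hx⟩ := Valuation.IsNontrivial.exists_val_nontrivial (v := w.comap (algebraMap K L))
    have : w.IsNontrivial := ⟨⟨algebraMap K L x, hx⟩⟩
    have := hA.isPrincipalIdealRing_iff_not_denselyOrdered.mpr h
    exact subsingleton_h1Cotangent_of_isPrincipalIdealRing w hA hB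

/-- The exponential `r ↦ exp (-r)` on `WithTop ℝ`, with `exp (-⊤) = 0`; it turns real-valued
additive valuations into multiplicative ones. -/
def expNeg : WithTop ℝ → ℝ≥0
  | ⊤ => 0
  | (r : ℝ) => ⟨Real.exp (-r), (Real.exp_pos _).le⟩

theorem expNeg_zero : expNeg 0 = 1 := NNReal.eq (Real.exp_eq_one_iff _ |>.mpr neg_zero)

theorem expNeg_add (r s : WithTop ℝ) : expNeg (r + s) = expNeg r * expNeg s := by
  match r, s with
  | ⊤, s => rw [top_add]; exact (zero_mul _).symm
  | (r : ℝ), ⊤ => exact (mul_zero _).symm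
  | (r : ℝ), (s : ℝ) =>
    exact NNReal.eq ((congrArg Real.exp (neg_add r s)).trans (Real.exp_add (-r) (-s)))

theorem expNeg_strictAnti : StrictAnti expNeg := by
  intro r s hrs
  match r, s with
  | ⊤, s => exact absurd hrs not_top_lt
  | (r : ℝ), ⊤ => exact Real.exp_pos (-r)
  | (r : ℝ), (s : ℝ) => exact Real.exp_lt_exp.mpr (neg_lt_neg (WithTop.coe_lt_coe.mp hrs))

/-- The multiplicative valuation `x ↦ exp (-v x)` attached to a real-valued additive valuation. -/
def expNegValuation {F : Type*} [Field F] (v : AddValuation F (WithTop ℝ)) :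
    Valuation F ℝ≥0 where
  toFun x := expNeg (v x)
  map_zero' := by rw [v.map_zero]; rfl
  map_one' := by rw [v.map_one, expNeg_zero]
  map_mul' x y := by rw [v.map_mul, expNeg_add]
  map_add_le_max' x y := by
    rw [← expNeg_strictAnti.antitone.map_min]
    exact expNeg_strictAnti.antitone (v.map_add x y)

theorem isNontrivial_expNegValuation {F : Type*} [Field F] {v : AddValuation F (WithTop ℝ)} {x : F}
    (hx : x ≠ 0) (hvx : v x ≠ 0) : (expNegValuation v).IsNontrivial where
  exists_val_nontrivial := ⟨x, (Valuation.ne_zero_iff _).mpr hx, fun h =>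
    hvx (expNeg_strictAnti.injective (h.trans expNeg_zero.symm))⟩

theorem expNegValuation_le_one_iff {F : Type*} [Field F] {v : AddValuation F (WithTop ℝ)} {x : F} :
    expNegValuation v x ≤ 1 ↔ 0 ≤ v x := by
  rw [← expNeg_zero]
  exact expNeg_strictAnti.le_iff_ge

theorem integers_unitBall {F : Type*} [Field F] (v : AddValuation F (WithTop ℝ)) :
    (expNegValuation v).Integers v.unitBall where
  hom_inj := Subtype.val_injective
  map_le_one x := expNegValuation_le_one_iff.mpr x.2
  exists_of_le_one _ hx := ⟨⟨_, expNegValuation_le_one_iff.mp hx⟩, rfl⟩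

end Integers

/-- Let `(K, v_K)` be a field with a non-trivial real-valued valuation, let `L`
be a finite separable field extension of `K`, and let `v_L` be a real-valued valuation on `L`
extending `v_K`, with rings of integers `K°` and `L°`.  Then `H₁(𝕃_{L°/K°}) = 0`. -/
theorem h1Cotangent_integers_eq_zero_of_finite_separable
    {K L : Type*} [Field K] [Field L] [Algebra K L]
    [FiniteDimensional K L] [Algebra.IsSeparable K L]
    (vK : AddValuation K (WithTop ℝ)) (vL : AddValuation L (WithTop ℝ))
    (hnt : vK.IsNontrivial)
    (hext : ∀ x : K, vL (algebraMap K L x) = vK x)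
    [Algebra vK.unitBall vL.unitBall]
    (hcomp : ∀ x : vK.unitBall,
      (algebraMap vK.unitBall vL.unitBall x : L) = algebraMap K L (x : K)) :
    Subsingleton (Algebra.H1Cotangent vK.unitBall vL.unitBall) := by
  have : IsScalarTower vK.unitBall vL.unitBall L := .of_algebraMap_eq fun x => (hcomp x).symm
  have hcomap : (expNegValuation vL).comap (algebraMap K L) = expNegValuation vK :=
    Valuation.ext fun x => congrArg expNeg (hext x)
  obtain ⟨x, hx, hvx⟩ := hnt
  have : ((expNegValuation vL).comap (algebraMap K L)).IsNontrivial :=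
    hcomap ▸ isNontrivial_expNegValuation hx hvx
  exact subsingleton_h1Cotangent_of_integers (expNegValuation vL)
    (hcomap ▸ integers_unitBall vK) (integers_unitBall vL)
end
end

section
/- Let (K, v_K) be a field with a non-trivial real-valued valuation, let f ∈ K°[T] be a monic irreducible polynomial whose formal derivative f′ is zero (so that L = K[T]/(f) is a finite inseparable field extension of K), and let v_L be a real-valued valuation on L extending v_K, with rings of integers K° and L°. Then H₁(𝕃_{L°/K°}) is a nonzero torsion-free L°-module, and the L-vector space L ⊗_{L°} H₁(𝕃_{L°/K°}) is one-dimensional. -/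
set_option synthInstance.maxHeartbeats 800000
set_option maxHeartbeats 1600000

noncomputable section

/-!
The formal derivative vanishes, so `K` has characteristic `p > 0`, and the Jacobi–Zariski sequence
of `𝔽_p → K° → L°` embeds `H₁(𝕃_{L°/K°})` into `L° ⊗ Ω_{K°/𝔽_p}` as soon as `H₁(𝕃_{V/𝔽_p}) = 0`
and `Ω_{V/𝔽_p}` is torsion-free for every valuation ring `V` of characteristic `p`. The latter holds
because, for a surjection `R → V` with kernel `I`, the square-zero extension `R/I² → V` has
sections over arbitrarily large subrings of `V`. Over `Vᵖ` there is one, as `p`-th powers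
lift canonically, and sections are extended by adjoining `p`-th roots one at a time: if `uᵖ ∈ E` and
`u ∉ E`, then finitely many integral elements of `E(u)` lie in a ring generated by integral elements
of `E` and a single integral `w ∉ E`. To find `w`, a Newton approximation of `u` by
elements `b` of `E` replaces the given elements by monomials `c tⁱ` in `t = u - b`, and
Euclid's algorithm on the exponents and values of monomials produces `w`.

The rank may be computed after localization, where `H₁(𝕃_{L/K}) = (f)/(f²)` since `df = 0`.
-/

open scoped TensorProduct

/-- Sections of the square-zero extension `R ⧸ (ker π)² → S` over arbitrarily large subalgebras
of `S`. A section is encoded by a subalgebra `R'` of `R`, whose image in `R ⧸ (ker π)²` is then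
mapped isomorphically onto `π(R')`. -/
def HasLocalSections {k R S : Type*} [CommRing k] [CommRing R] [CommRing S] [Algebra k R]
    [Algebra k S] (π : R →ₐ[k] S) : Prop :=
  ∀ T : Finset S, ∃ R' : Subalgebra k R,
    (∀ r ∈ R', π r = 0 → r ∈ RingHom.ker π ^ 2) ∧ (T : Set S) ⊆ π '' R'

section LocalSections

variable {k S ι : Type*} [CommRing k] [CommRing S] [Algebra k S]

open MvPolynomial in
lemma HasLocalSections.exists_aeval_mem_ker_sq {x : ι → S}
    (h : HasLocalSections (aeval (R := k) x)) {j : MvPolynomial ι k} (hj : aeval x j = 0) :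
    ∃ g : ι → MvPolynomial ι k, (∀ i, aeval x (g i) = x i) ∧
      aeval g j ∈ RingHom.ker (aeval (R := k) x) ^ 2 := by
  classical
  obtain ⟨R', hR', hT⟩ := h (j.vars.image x)
  have exists_lift (i) : ∃ q : MvPolynomial ι k, aeval x q = x i ∧ (i ∈ j.vars → q ∈ R') := by
    by_cases hi : i ∈ j.vars
    · obtain ⟨q, hq, hqx⟩ := hT (Finset.mem_coe.2 (Finset.mem_image_of_mem x hi))
      exact ⟨q, hqx, fun _ => hq⟩
    · exact ⟨X i, aeval_X x i, fun h => absurd h hi⟩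
  choose g aeval_g g_mem using exists_lift
  have supported_le : supported k j.vars ≤ R'.comap (aeval g) :=
    Algebra.adjoin_le <| Set.forall_mem_image.2 fun i hi => by simpa using g_mem i hi
  refine ⟨g, aeval_g, hR' _ (supported_le (mem_supported_vars j)) ?_⟩
  rw [comp_aeval_apply, funext aeval_g, hj]

variable {P : Algebra.Generators k S ι}

open Algebra.Extension in
lemma HasLocalSections.exists_apply_cotangentComplex_eq
    (h : HasLocalSections (MvPolynomial.aeval (R := k) P.val)) (x : P.toExtension.Cotangent) :
    ∃ ρ : P.toExtension.CotangentSpace →ₗ[S] P.toExtension.Cotangent,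
      ρ (P.toExtension.cotangentComplex x) = x := by
  obtain ⟨⟨j, hj⟩, rfl⟩ := Cotangent.mk_surjective x
  obtain ⟨g, aeval_g, hg⟩ :=
    h.exists_aeval_mem_ker_sq (Algebra.Generators.aeval_val_eq_zero hj)
  let γ : P.toExtension.Hom P.toExtension :=
    Algebra.Generators.Hom.toExtensionHom ⟨g, aeval_g⟩
  have map_eq_zero : Cotangent.map γ (.mk ⟨j, hj⟩) = 0 := by
    rw [Cotangent.map_mk, Cotangent.mk_eq_zero_iff]
    change MvPolynomial.aeval g j ∈ P.ker ^ 2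
    rwa [P.ker_eq_ker_aeval_val]
  refine ⟨(Hom.id _).sub γ, ?_⟩
  rw [← LinearMap.comp_apply, ← Cotangent.map_sub_map, LinearMap.sub_apply,
    map_eq_zero, sub_zero, Cotangent.map_id, LinearMap.id_apply]

lemma HasLocalSections.injective_cotangentComplex
    (h : HasLocalSections (MvPolynomial.aeval (R := k) P.val)) :
    Function.Injective P.toExtension.cotangentComplex := by
  refine (injective_iff_map_eq_zero _).2 fun x hx => ?_
  obtain ⟨ρ, hρ⟩ := h.exists_apply_cotangentComplex_eq x
  rw [← hρ, hx, map_zero]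

lemma HasLocalSections.isTorsionFree_kaehlerDifferential [IsDomain S]
    (h : HasLocalSections (MvPolynomial.aeval (R := k) P.val)) :
    Module.IsTorsionFree S (Ω[S⁄k]) := by
  refine .of_smul_eq_zero fun c ω hω => or_iff_not_imp_left.2 fun hc => ?_
  obtain ⟨y, rfl⟩ := P.toExtension.toKaehler_surjective ω
  rw [← map_smul] at hω
  obtain ⟨x, hx⟩ := (P.toExtension.exact_cotangentComplex_toKaehler _).1 hω
  obtain ⟨ρ, hρ⟩ := h.exists_apply_cotangentComplex_eq x
  rw [hx, map_smul] at hρ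
  have y_eq : P.toExtension.cotangentComplex (ρ y) = y :=
    smul_right_injective _ hc (by simpa only [← map_smul, hρ] using hx)
  exact (P.toExtension.exact_cotangentComplex_toKaehler _).2 ⟨_, y_eq⟩

end LocalSections

open Polynomial

section GaussBall

variable {L Γ₀ : Type*} [Field L] [LinearOrderedCommGroupWithZero Γ₀] (v : Valuation L Γ₀)

/-- The closed ball of radius `r` for the Gauss norm `f ↦ maxᵢ v(fᵢ) δⁱ` on `L[X]`, stated
coefficientwise so that no maximum has to be formed; it controls Taylor expansions on the disc of
radius `δ`. -/
def gaussBall (δ r : Γ₀) : AddSubgroup L[X] where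
  carrier := {f | ∀ i, v (f.coeff i) * δ ^ i ≤ r}
  zero_mem' i := by simp
  add_mem' {f g} hf hg i := by
    rw [coeff_add]
    rcases le_total (v (f.coeff i)) (v (g.coeff i)) with h | h
    · exact (mul_le_mul_left (v.map_add_le h le_rfl) _).trans (hg i)
    · exact (mul_le_mul_left (v.map_add_le le_rfl h) _).trans (hf i)
  neg_mem' {f} hf i := by simpa using hf i

variable {v} {δ r s : Γ₀} {f g : L[X]}

lemma gaussBall_mono (h : r ≤ s) : gaussBall v δ r ≤ gaussBall v δ s :=
  fun _ hf i => (hf i).trans h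

lemma gaussBall_anti {δ' : Γ₀} (h : δ' ≤ δ) : gaussBall v δ r ≤ gaussBall v δ' r :=
  fun _ hf i => (mul_le_mul_right (pow_le_pow_left' h i) _).trans (hf i)

lemma C_mul_X_pow_mem_gaussBall {a : L} {i : ℕ} (h : v a * δ ^ i ≤ r) :
    C a * X ^ i ∈ gaussBall v δ r := by
  intro j
  rw [coeff_C_mul_X_pow]
  split_ifs with hj
  · rwa [hj]
  · simp

lemma C_mem_gaussBall (a : L) : C a ∈ gaussBall v δ (v a) := by
  simpa using C_mul_X_pow_mem_gaussBall (i := 0) (by simp : v a * δ ^ 0 ≤ v a)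

lemma mul_mem_gaussBall (hf : f ∈ gaussBall v δ r) (hg : g ∈ gaussBall v δ s) :
    f * g ∈ gaussBall v δ (r * s) := by
  rw [f.as_sum_range_C_mul_X_pow, g.as_sum_range_C_mul_X_pow, Finset.sum_mul_sum]
  refine sum_mem fun i _ => sum_mem fun j _ => ?_
  rw [mul_mul_mul_comm, ← C_mul, ← pow_add]
  refine C_mul_X_pow_mem_gaussBall ?_
  rw [map_mul, pow_add, mul_mul_mul_comm]
  exact mul_le_mul' (hf i) (hg j)

lemma pow_mem_gaussBall (hf : f ∈ gaussBall v δ r) : ∀ n : ℕ, f ^ n ∈ gaussBall v δ (r ^ n)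
  | 0 => by simpa using C_mem_gaussBall (v := v) (δ := δ) 1
  | n + 1 => by simpa only [pow_succ] using mul_mem_gaussBall (pow_mem_gaussBall hf n) hf

lemma taylor_mem_gaussBall {c : L} (hc : v c ≤ δ) (hf : f ∈ gaussBall v δ r) :
    taylor c f ∈ gaussBall v δ r := by
  have X_add_C_mem : X + C c ∈ gaussBall v δ δ :=
    add_mem (by simpa using C_mul_X_pow_mem_gaussBall (i := 1) (by simp : v 1 * δ ^ 1 ≤ δ))
      (gaussBall_mono hc (C_mem_gaussBall c))
  rw [f.as_sum_range_C_mul_X_pow, map_sum]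
  refine sum_mem fun i _ => ?_
  rw [taylor_mul, taylor_C, taylor_pow, taylor_X]
  exact gaussBall_mono (hf i)
    (mul_mem_gaussBall (C_mem_gaussBall _) (pow_mem_gaussBall X_add_C_mem i))

lemma pow_sub_pow_mem_gaussBall (hg : g ∈ gaussBall v δ s) (hf : f ∈ gaussBall v δ s)
    (hfg : f - g ∈ gaussBall v δ r) (n : ℕ) :
    f ^ (n + 1) - g ^ (n + 1) ∈ gaussBall v δ (r * s ^ n) := by
  rw [← (Commute.all f g).mul_geom_sum₂]
  refine mul_mem_gaussBall hfg (sum_mem fun i hi => ?_)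
  have hin : i + (n - i) = n := Nat.add_sub_cancel' (Finset.mem_range_succ_iff.1 hi)
  rw [← hin, pow_add, add_tsub_cancel_right, hin]
  exact mul_mem_gaussBall (pow_mem_gaussBall hf _) (pow_mem_gaussBall hg _)

end GaussBall

section Newton

variable {L Γ₀ : Type*} [Field L] [LinearOrderedCommGroupWithZero Γ₀] {v : Valuation L Γ₀}

lemma pow_sub_pow_divX_mem_gaussBall {f : L[X]} {δ : Γ₀} (h₀ : v (f.coeff 0) ≤ v (f.coeff 1) * δ)
    (hf : f ∈ gaussBall v δ (v (f.coeff 1) * δ)) (n : ℕ) :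
    f ^ (n + 1) - divX f ^ (n + 1) * X ^ (n + 1) ∈
      gaussBall v δ (v (f.coeff 0) * (v (f.coeff 1) * δ) ^ n) := by
  have sub_eq : f - divX f * X = C (f.coeff 0) := sub_eq_of_eq_add' (divX_mul_X_add f).symm
  rw [← mul_pow]
  refine pow_sub_pow_mem_gaussBall ?_ hf (sub_eq ▸ C_mem_gaussBall _) n
  rw [← sub_sub_cancel f (divX f * X), sub_eq]
  exact sub_mem hf (gaussBall_mono h₀ (C_mem_gaussBall _))

variable {f : L[X]} {δ : Γ₀}

lemma valuation_coeff_pow_succ_self (h₀ : v (f.coeff 0) < v (f.coeff 1) * δ)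
    (hf : f ∈ gaussBall v δ (v (f.coeff 1) * δ)) (n : ℕ) :
    v ((f ^ (n + 1)).coeff (n + 1)) = v (f.coeff 1) ^ (n + 1) := by
  have hd := pow_sub_pow_divX_mem_gaussBall h₀.le hf n (n + 1)
  obtain ⟨h₁, hδ⟩ := mul_ne_zero_iff.1 (ne_zero_of_lt h₀)
  have coeff_divX : (divX f ^ (n + 1) * X ^ (n + 1)).coeff (n + 1) = f.coeff 1 ^ (n + 1) := by
    rw [coeff_mul_X_pow', if_pos le_rfl, Nat.sub_self, coeff_zero_eq_eval_zero, eval_pow,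
      ← coeff_zero_eq_eval_zero, coeff_divX]
  rw [coeff_sub, coeff_divX] at hd
  rw [← map_pow]
  refine v.map_eq_of_sub_lt (lt_of_mul_lt_mul_right (a := δ ^ (n + 1)) (hd.trans_lt ?_) zero_le)
  rw [map_pow, ← mul_pow, pow_succ' _ n]
  exact mul_lt_mul_of_pos_right h₀ (pow_pos (mul_pos (zero_lt_iff.2 h₁) (zero_lt_iff.2 hδ)) n)

lemma valuation_coeff_pow_succ_le (h₀ : v (f.coeff 0) < v (f.coeff 1) * δ)
    (hf : f ∈ gaussBall v δ (v (f.coeff 1) * δ)) (n : ℕ) :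
    v ((f ^ (n + 1)).coeff n) ≤ v (f.coeff 0) * v (f.coeff 1) ^ n := by
  have hd := pow_sub_pow_divX_mem_gaussBall h₀.le hf n n
  have hδ : 0 < δ ^ n := pow_pos (zero_lt_iff.2 (mul_ne_zero_iff.1 (ne_zero_of_lt h₀)).2) n
  rw [coeff_sub, coeff_mul_X_pow', if_neg (by simp), sub_zero, mul_pow, ← mul_assoc] at hd
  exact le_of_mul_le_mul_right hd hδ

end Newton

section TaylorCoeff

variable {R : Type*} [CommRing R]

lemma taylor_coeff_of_natDegree_le_succ {f : R[X]} {n : ℕ} (hf : f.natDegree ≤ n + 1) (u : R) :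
    (taylor u f).coeff n = f.coeff n + (n + 1) * f.coeff (n + 1) * u := by
  have natDegree_hasseDeriv : (hasseDeriv n f).natDegree ≤ 1 :=
    (natDegree_hasseDeriv_le f n).trans (by lia)
  rw [taylor_coeff, eval_eq_sum_range' (Nat.lt_succ_of_le natDegree_hasseDeriv)]
  simp [Finset.sum_range_succ, hasseDeriv_coeff, add_comm 1 n]

lemma natDegree_modByMonic_X_pow_sub_C_lt [Nontrivial R] {n : ℕ} (hn : 0 < n) (f : R[X]) (a : R) :
    (f %ₘ (X ^ n - C a)).natDegree < n := by
  have ne_one : X ^ n - C a ≠ 1 := ne_of_apply_ne natDegree <| by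
    simpa only [natDegree_X_pow_sub_C, natDegree_one] using hn.ne'
  simpa only [natDegree_X_pow_sub_C] using
    natDegree_modByMonic_lt f (monic_X_pow_sub_C a hn.ne') ne_one

lemma taylor_X_pow_sub_C (p : ℕ) [Fact p.Prime] [CharP R p] (u : R) :
    taylor u (X ^ p - C (u ^ p)) = X ^ p := by
  rw [map_sub, taylor_pow, taylor_X, taylor_C, add_pow_char, C_pow, add_sub_cancel_right]

lemma taylor_coeff_modByMonic_X_pow_sub_C (p : ℕ) [Fact p.Prime] [CharP R p] (u : R)
    (f : R[X]) {i : ℕ} (hi : i < p) :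
    (taylor u (f %ₘ (X ^ p - C (u ^ p)))).coeff i = (taylor u f).coeff i := by
  conv_rhs => rw [← modByMonic_add_div f (X ^ p - C (u ^ p))]
  rw [map_add, taylor_mul, taylor_X_pow_sub_C, coeff_add, coeff_X_pow_mul', if_neg hi.not_ge,
    add_zero]

end TaylorCoeff

section Inseparable

variable {E L Γ₀ : Type*} [Field E] [Field L] [Algebra E L] {p : ℕ} [Fact p.Prime] [CharP L p]
  {e : E} {u : L}

lemma exists_taylor_coeff_eq (hu : algebraMap E L e = u ^ p) (f : E[X]) {n : ℕ} (hn : n + 2 = p) :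
    ∃ a b : E, (taylor u (f.map (algebraMap E L))).coeff (n + 1) = algebraMap E L a ∧
      (taylor u (f.map (algebraMap E L))).coeff n = algebraMap E L b - algebraMap E L a * u := by
  have g_monic : (X ^ p - C e).Monic := monic_X_pow_sub_C e (Fact.out : p.Prime).ne_zero
  let g := f %ₘ (X ^ p - C e)
  have map_g : g.map (algebraMap E L) = f.map (algebraMap E L) %ₘ (X ^ p - C (u ^ p)) := by
    simp [g, map_modByMonic _ g_monic, hu]
  have natDegree_g : (g.map (algebraMap E L)).natDegree ≤ n + 1 := by
    rw [natDegree_map, ← Nat.lt_succ_iff]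
    exact (natDegree_modByMonic_X_pow_sub_C_lt (Fact.out : p.Prime).pos f e).trans_eq hn.symm
  have succ_eq_neg_one : (n + 1 : L) = -1 := by
    rw [eq_neg_iff_add_eq_zero, add_assoc, one_add_one_eq_two]
    exact_mod_cast (congrArg Nat.cast hn).trans (CharP.cast_eq_zero L p)
  refine ⟨g.coeff (n + 1), g.coeff n, ?_, ?_⟩
  · rw [← taylor_coeff_modByMonic_X_pow_sub_C p u _ (by lia), ← map_g,
      taylor_coeff_of_natDegree_le_succ (by lia),
      coeff_eq_zero_of_natDegree_lt (n := n + 1 + 1) (by lia)]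
    simp
  · rw [← taylor_coeff_modByMonic_X_pow_sub_C p u _ (by lia), ← map_g,
      taylor_coeff_of_natDegree_le_succ natDegree_g, succ_eq_neg_one]
    simp [sub_eq_add_neg]

variable [LinearOrderedCommGroupWithZero Γ₀] (v : Valuation L Γ₀)

/-- Modulo `X ^ p - e`, the power `f ^ (p - 1)` has degree at most `p - 1`, so its top Taylor
coefficient at `u` is a constant `a` of `E` and the next one is `b - a u` with `b` in `E`; the
approximation to `u` is `b / a`. -/
lemma exists_valuation_sub_mul_le (hu : algebraMap E L e = u ^ p) {f : E[X]} {δ : Γ₀}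
    (h₀ : v (aeval u f) < v (aeval u (derivative f)) * δ)
    (hf : taylor u (f.map (algebraMap E L)) ∈
      gaussBall v δ (v (aeval u (derivative f)) * δ)) :
    ∃ b : E, v (aeval u (derivative f)) * v (u - algebraMap E L b) ≤ v (aeval u f) := by
  obtain ⟨n, hn⟩ : ∃ n, n + 2 = p := ⟨p - 2, Nat.sub_add_cancel (Fact.out : p.Prime).two_le⟩
  obtain ⟨a, b, ha, hb⟩ := exists_taylor_coeff_eq hu (f ^ (n + 1)) hn
  have coeff_zero : (taylor u (f.map (algebraMap E L))).coeff 0 = aeval u f := by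
    rw [taylor_coeff_zero, eval_map_algebraMap]
  have coeff_one : (taylor u (f.map (algebraMap E L))).coeff 1 = aeval u (derivative f) := by
    rw [taylor_coeff_one, derivative_map, eval_map_algebraMap]
  rw [← coeff_zero, ← coeff_one] at h₀ ⊢
  rw [← coeff_one] at hf
  rw [Polynomial.map_pow, taylor_pow] at ha hb
  have valuation_a := valuation_coeff_pow_succ_self h₀ hf n
  have valuation_b := valuation_coeff_pow_succ_le h₀ hf n
  set η := v ((taylor u (f.map (algebraMap E L))).coeff 1)
  have hη : 0 < η := zero_lt_iff.2 (mul_ne_zero_iff.1 (ne_zero_of_lt h₀)).1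
  rw [ha] at valuation_a
  have a_ne_zero : algebraMap E L a ≠ 0 := v.ne_zero_iff.1 (valuation_a ▸ (pow_pos hη _).ne')
  rw [hb, ← mul_div_cancel_left₀ (algebraMap E L b) a_ne_zero, ← mul_div_assoc', ← mul_sub,
    map_mul, valuation_a, v.map_sub_swap, ← map_div₀, pow_succ' _ n, mul_right_comm] at valuation_b
  exact ⟨b / a, le_of_mul_le_mul_right valuation_b (pow_pos hη n)⟩

lemma valuation_natCast_eq_one {m : ℕ} (hm : ¬ p ∣ m) : v (m : L) = 1 := by
  have p_sub_one_ne_zero : p - 1 ≠ 0 := Nat.sub_ne_zero_of_lt (Fact.out : p.Prime).one_lt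
  have m_ne_zero : (m : ZMod p) ≠ 0 := mt (ZMod.natCast_eq_zero_iff m p).1 hm
  have m_pow : (m : L) ^ (p - 1) = 1 := by
    simpa using congrArg (ZMod.castHom dvd_rfl L) (ZMod.pow_card_sub_one_eq_one m_ne_zero)
  exact (pow_eq_one_iff_of_nonneg zero_le p_sub_one_ne_zero).1 (by rw [← map_pow, m_pow, map_one])

lemma taylor_derivative {R : Type*} [CommRing R] (f : R[X]) (u : R) :
    taylor u (derivative f) = derivative (taylor u f) := by
  simp [taylor_apply, derivative_comp]

lemma coeff_succ_mul_pow_le {f : L[X]} {δ r : Γ₀} (hf : f.natDegree < p)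
    (h : derivative f ∈ gaussBall v δ r) (i : ℕ) : v (f.coeff (i + 1)) * δ ^ i ≤ r := by
  by_cases hi : p ≤ i + 1
  · simp [coeff_eq_zero_of_natDegree_lt (hf.trans_le hi)]
  · have h_dvd : ¬ p ∣ i + 1 := Nat.not_dvd_of_pos_of_lt i.succ_pos (not_le.1 hi)
    have hi := h i
    rwa [coeff_derivative, ← Nat.cast_succ, map_mul, valuation_natCast_eq_one v h_dvd,
      mul_one] at hi

lemma mem_gaussBall_of_coeff_succ {f : L[X]} {δ r s : Γ₀}
    (h₀ : v (f.coeff 0) ≤ s) (h : ∀ i, v (f.coeff (i + 1)) * δ ^ i ≤ r) (hs : r * δ ≤ s) :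
    f ∈ gaussBall v δ s
  | 0 => by simpa using h₀
  | i + 1 => by
    rw [pow_succ, ← mul_assoc]
    exact (mul_le_mul_left (h i) δ).trans hs

lemma exists_taylor_mem_gaussBall (hu : algebraMap E L e = u ^ p) (f : E[X])
    (hf : f.natDegree < p) :
    ∃ b : E, taylor u (f.map (algebraMap E L)) ∈
      gaussBall v (v (u - algebraMap E L b)) (v (aeval u f)) := by
  induction hd : f.natDegree using Nat.strong_induction_on generalizing f with
  | _ d ih =>
  rcases d.eq_zero_or_pos with rfl | d_pos
  · refine ⟨0, ?_⟩
    rw [eq_C_of_natDegree_eq_zero hd, map_C, taylor_C, aeval_C]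
    exact C_mem_gaussBall _
  obtain ⟨b₀, hb₀⟩ := ih _ (hd ▸ natDegree_derivative_lt (hd ▸ d_pos.ne')) _
    ((natDegree_derivative_le f).trans_lt (by lia)) rfl
  set H := taylor u (f.map (algebraMap E L)) with H_def
  have coeff_zero : H.coeff 0 = aeval u f := by
    rw [taylor_coeff_zero, eval_map_algebraMap]
  rw [← derivative_map, taylor_derivative] at hb₀
  have coeff_succ_le := coeff_succ_mul_pow_le v (by simpa [natDegree_taylor] using hf) hb₀
  rcases le_or_gt (v (aeval u (derivative f)) * v (u - algebraMap E L b₀)) (v (aeval u f))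
    with h | h
  · exact ⟨b₀, mem_gaussBall_of_coeff_succ v (by rw [coeff_zero]) coeff_succ_le h⟩
  obtain ⟨b, hb⟩ := exists_valuation_sub_mul_le v hu h
    (mem_gaussBall_of_coeff_succ v (by rw [coeff_zero]; exact h.le) coeff_succ_le le_rfl)
  have hbb₀ : v (u - algebraMap E L b) ≤ v (u - algebraMap E L b₀) :=
    (lt_of_mul_lt_mul_left (hb.trans_lt h) zero_le).le
  exact ⟨b, mem_gaussBall_of_coeff_succ v (by rw [coeff_zero])
    (fun i => (mul_le_mul_right (pow_le_pow_left' hbb₀ i) _).trans (coeff_succ_le i)) hb⟩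

lemma exists_forall_map_taylor_mem_gaussBall (hu : algebraMap E L e = u ^ p) (s : Finset E[X])
    (hs : ∀ f ∈ s, f.natDegree < p) :
    ∃ b : E, ∀ f ∈ s, (taylor b f).map (algebraMap E L) ∈
      gaussBall v (v (u - algebraMap E L b)) (v (aeval u f)) := by
  choose! b hb using fun f hf => exists_taylor_mem_gaussBall v hu f (hs f hf)
  rcases s.eq_empty_or_nonempty with rfl | s_nonempty
  · exact ⟨0, by simp⟩
  obtain ⟨f₀, -, hf₀⟩ := s.exists_min_image (fun f => v (u - algebraMap E L (b f))) s_nonempty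
  refine ⟨b f₀, fun f hf => ?_⟩
  have taylor_eq : (taylor (b f₀) f).map (algebraMap E L) =
      taylor (algebraMap E L (b f₀) - u) (taylor u (f.map (algebraMap E L))) := by
    rw [map_taylor, taylor_taylor, sub_add_cancel]
  rw [taylor_eq]
  exact taylor_mem_gaussBall (v.map_sub_swap _ _).le (gaussBall_anti (hf₀ f hf) (hb f hf))

end Inseparable

section PrimeIndex

variable {M : Type*} [CommGroup M] {O : Submonoid M} {G : Subgroup M}

variable (O G) in
/-- The submonoid generated by `w` over `O ∩ G`; for `O` the integral elements of a valued field
and `G` the units of a subfield it consists of the integral monomials `c wʲ`. -/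
def monomialSubmonoid (w : M) : Submonoid M :=
  (O ⊓ G.toSubmonoid) ⊔ Submonoid.powers w

lemma mem_monomialSubmonoid {a w : M} :
    a ∈ monomialSubmonoid O G w ↔ ∃ c ∈ O, c ∈ G ∧ ∃ j : ℕ, c * w ^ j = a := by
  simp [monomialSubmonoid, Submonoid.mem_sup, Submonoid.mem_powers_iff, and_assoc]

lemma mem_monomialSubmonoid_of_div {a w : M} {j : ℕ} (hO : a / w ^ j ∈ O) (hG : a / w ^ j ∈ G) :
    a ∈ monomialSubmonoid O G w :=
  mem_monomialSubmonoid.2 ⟨_, hO, hG, j, div_mul_cancel _ _⟩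

lemma monomialSubmonoid_le {w r : M} (h : w ∈ monomialSubmonoid O G r) :
    monomialSubmonoid O G w ≤ monomialSubmonoid O G r :=
  sup_le le_sup_left ((Submonoid.powers_le).2 h)

variable (O G) in
/-- Ordering `M` by `x ≤ y ↔ y / x ∈ O`, the element `w` lies in `O \ G` and is not above the
square of any element of `O \ G`. From such elements a division step of Euclid's algorithm for
`monomialSubmonoid O G w` leads to such elements again. -/
structure IsSquareMinimal (w : M) : Prop where
  mem : w ∈ O
  notMem : w ∉ G
  div_sq_notMem : ∀ x ∈ O, x ∉ G → w / x ^ 2 ∉ O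

lemma IsSquareMinimal.of_div_mem {w r : M} (hw : IsSquareMinimal O G w) (hr : r ∈ O)
    (hrG : r ∉ G) (h : w / r ∈ O) : IsSquareMinimal O G r where
  mem := hr
  notMem := hrG
  div_sq_notMem x hx hxG hrx := hw.div_sq_notMem x hx hxG <| by
    simpa only [div_mul_div_cancel] using mul_mem h hrx

lemma exists_div_pow_two_pow_mem (h : ∀ w, ¬ IsSquareMinimal O G w) {a : M} (ha : a ∈ O)
    (haG : a ∉ G) : ∀ m : ℕ, ∃ x ∈ O, x ∉ G ∧ a / x ^ 2 ^ m ∈ O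
  | 0 => ⟨a, ha, haG, by simp⟩
  | m + 1 => by
    obtain ⟨x, hx, hxG, hax⟩ := exists_div_pow_two_pow_mem h ha haG m
    obtain ⟨y, hy, hyG, hxy⟩ : ∃ y ∈ O, y ∉ G ∧ x / y ^ 2 ∈ O := by
      by_contra! hmin
      exact h x ⟨hx, hxG, hmin⟩
    refine ⟨y, hy, hyG, ?_⟩
    rw [pow_succ', pow_mul, ← div_mul_div_cancel a (x ^ 2 ^ m), ← div_pow]
    exact mul_mem hax (pow_mem hxy _)

variable (hO : ∀ a, a ∈ O ∨ a⁻¹ ∈ O)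
include hO

lemma IsSquareMinimal.div_mem {w r : M} (hw : IsSquareMinimal O G w) (hr : r ∈ O) (hrG : r ∉ G)
    (h : w / r ∈ O) : w / r ∈ G := by
  by_contra hG
  rcases hO (r / (w / r)) with hle | hle
  · refine hw.div_sq_notMem _ h hG ?_
    convert! hle using 1
    rw [pow_two, ← div_div, div_div_self']
  · refine hw.div_sq_notMem _ hr hrG ?_
    rwa [inv_div, div_div, ← pow_two] at hle

lemma IsSquareMinimal.exists_mem_monomialSubmonoid {n : ℕ}
    (hG : ∀ a ∉ G, ∀ b, ∃ k < n, b / a ^ k ∈ G) {w b : M} (hw : IsSquareMinimal O G w)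
    (hb : b ∈ O) : ∃ r, IsSquareMinimal O G r ∧
      monomialSubmonoid O G w ≤ monomialSubmonoid O G r ∧ b ∈ monomialSubmonoid O G r := by
  classical
  by_cases hbw : b ∈ monomialSubmonoid O G w
  · exact ⟨w, hw, le_rfl, hbw⟩
  have exists_div_notMem : ∃ k, b / w ^ k ∉ O := by
    obtain ⟨k, -, hk⟩ := hG w hw.notMem b
    exact ⟨k, fun h => hbw (mem_monomialSubmonoid_of_div h hk)⟩
  obtain ⟨i, hi⟩ : ∃ i, Nat.find exists_div_notMem = i + 1 :=
    Nat.exists_eq_succ_of_ne_zero fun h => Nat.find_spec exists_div_notMem (by simpa [h] using hb)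
  have hr : b / w ^ i ∈ O := not_not.1 (Nat.find_min exists_div_notMem (by lia))
  have hrG : b / w ^ i ∉ G := fun h => hbw (mem_monomialSubmonoid_of_div hr h)
  have hwr : w / (b / w ^ i) ∈ O := by
    have h := (hO _).resolve_left (hi ▸ Nat.find_spec exists_div_notMem)
    rwa [inv_div, pow_succ', ← div_div_eq_mul_div] at h
  have hwD : w ∈ monomialSubmonoid O G (b / w ^ i) :=
    mem_monomialSubmonoid_of_div (j := 1) (by rwa [pow_one])
      (by rw [pow_one]; exact hw.div_mem hO hr hrG hwr)
  refine ⟨_, hw.of_div_mem hr hrG hwr, monomialSubmonoid_le hwD, ?_⟩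
  have self_mem : b / w ^ i ∈ monomialSubmonoid O G (b / w ^ i) :=
    le_sup_right (a := O ⊓ G.toSubmonoid) (Submonoid.mem_powers _)
  simpa only [div_mul_cancel] using mul_mem self_mem (pow_mem hwD i)

lemma exists_forall_div_mem (hG : G ≠ ⊤) (T : Finset M) (hT : ∀ a ∈ T, a ∈ O) :
    ∃ x ∈ O, x ∉ G ∧ ∀ a ∈ T, a ∉ G → a / x ∈ O := by
  classical
  induction T using Finset.induction_on with
  | empty =>
    obtain ⟨g, hg⟩ := not_forall.1 (mt (Subgroup.eq_top_iff' G).2 hG)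
    rcases hO g with h | h
    · exact ⟨g, h, hg, by simp⟩
    · exact ⟨g⁻¹, h, mt inv_mem_iff.1 hg, by simp⟩
  | insert b T _ ih =>
    rw [Finset.forall_mem_insert] at hT
    obtain ⟨x, hx, hxG, hxT⟩ := ih hT.2
    by_cases hbx : b ∈ G ∨ b / x ∈ O
    · exact ⟨x, hx, hxG, Finset.forall_mem_insert _ _ _ |>.2 ⟨hbx.resolve_left, hxT⟩⟩
    rw [not_or] at hbx
    have hxb : x / b ∈ O := inv_div b x ▸ (hO _).resolve_left hbx.2
    refine ⟨b, hT.1, hbx.1, Finset.forall_mem_insert _ _ _ |>.2 ⟨fun _ => ?_, fun a ha haG => ?_⟩⟩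
    · simp
    · simpa only [div_mul_div_cancel] using mul_mem (hxT a ha haG) hxb

/-- Euclid's algorithm stops at a square-minimal element of `O \ G`; if there is none, `w` may be
taken so small that `wⁿ` is below all elements of `T \ G`. -/
theorem exists_subset_monomialSubmonoid {n : ℕ} (hG : ∀ a ∉ G, ∀ b, ∃ k < n, b / a ^ k ∈ G)
    (hG' : G ≠ ⊤) (T : Finset M) (hT : ∀ a ∈ T, a ∈ O) :
    ∃ w ∈ O, w ∉ G ∧ ∀ a ∈ T, a ∈ monomialSubmonoid O G w := by
  classical
  by_cases! h : ∃ w, IsSquareMinimal O G w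
  · suffices ∃ w, IsSquareMinimal O G w ∧ ∀ a ∈ T, a ∈ monomialSubmonoid O G w from
      this.imp fun w hw => ⟨hw.1.mem, hw.1.notMem, hw.2⟩
    induction T using Finset.induction_on with
    | empty => simpa using h
    | insert b T _ ih =>
      rw [Finset.forall_mem_insert] at hT
      obtain ⟨w, hw, hwT⟩ := ih hT.2
      obtain ⟨r, hr, hwr, hbr⟩ := hw.exists_mem_monomialSubmonoid hO hG hT.1
      exact ⟨r, hr, Finset.forall_mem_insert _ _ _ |>.2 ⟨hbr, fun a ha => hwr (hwT a ha)⟩⟩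
  obtain ⟨x, hx, hxG, hxT⟩ := exists_forall_div_mem hO hG' T hT
  obtain ⟨w, hw, hwG, hxw⟩ := exists_div_pow_two_pow_mem h hx hxG n
  refine ⟨w, hw, hwG, fun a ha => ?_⟩
  by_cases haG : a ∈ G
  · exact mem_monomialSubmonoid.2 ⟨a, hT a ha, haG, 0, by simp⟩
  obtain ⟨k, hk, hak⟩ := hG w hwG a
  refine mem_monomialSubmonoid_of_div ?_ hak
  have haw : a / w ^ 2 ^ n ∈ O := by
    simpa only [div_mul_div_cancel] using mul_mem (hxT a ha haG) hxw
  have key := mul_mem haw (pow_mem hw (2 ^ n - k))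
  rwa [div_mul_eq_mul_div, ← pow_sub_mul_pow w (hk.trans n.lt_two_pow_self).le, mul_comm a,
    mul_div_mul_left_eq_div] at key

end PrimeIndex

section Monomials

variable {E L Γ₀ : Type*} [Field E] [Field L] [Algebra E L] {p : ℕ}

/-- The homomorphism `(c, i) ↦ c tⁱ` parametrizing the monomials in `t` over a subfield. -/
def monomialHom (E : Type*) {L : Type*} [Field E] [Field L] [Algebra E L] (t : Lˣ) :
    Eˣ × Multiplicative ℤ →* Lˣ :=
  (Units.map (algebraMap E L : E →* L)).coprod (zpowersHom Lˣ t)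

/-- The subgroup of those `(c, i)` for which the monomial `c tⁱ` lies in `E`; it takes the place of
`G` in `monomialSubmonoid`. -/
def constantMonomials (E : Type*) {L : Type*} [Field E] [Field L] [Algebra E L] (t : Lˣ) :
    Subgroup (Eˣ × Multiplicative ℤ) :=
  (Units.map (algebraMap E L : E →* L)).range.comap (monomialHom E t)

variable {t : Lˣ}

open IntermediateField in
lemma monomialHom_mem_adjoin (m : Eˣ × Multiplicative ℤ) :
    (monomialHom E t m : L) ∈ E⟮(t : L)⟯ := by
  simpa [monomialHom] using
    mul_mem (IntermediateField.algebraMap_mem _ _)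
      (zpow_mem (mem_adjoin_simple_self E (t : L)) m.2.toAdd)

lemma mem_constantMonomials {m : Eˣ × Multiplicative ℤ} :
    m ∈ constantMonomials E t ↔ (monomialHom E t m : L) ∈ (algebraMap E L).range := by
  refine ⟨fun ⟨c, hc⟩ => ⟨c, congrArg Units.val hc⟩, fun ⟨c, hc⟩ => ?_⟩
  have c_ne_zero : c ≠ 0 := by
    rintro rfl
    exact (monomialHom E t m).ne_zero (by rw [← hc, map_zero])
  exact ⟨Units.mk0 c c_ne_zero, Units.ext hc⟩

lemma mem_constantMonomials_of_dvd (ht : (t : L) ^ p ∈ (algebraMap E L).range)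
    {m : Eˣ × Multiplicative ℤ} (hm : (p : ℤ) ∣ m.2.toAdd) : m ∈ constantMonomials E t := by
  obtain ⟨k, hk⟩ := hm
  obtain ⟨e, he⟩ := ht
  refine mem_constantMonomials.2 ⟨m.1 * e ^ k, ?_⟩
  simp [monomialHom, hk, zpow_mul, he]

lemma exists_div_pow_mem_constantMonomials [Fact p.Prime]
    (ht : (t : L) ^ p ∈ (algebraMap E L).range) (a : Eˣ × Multiplicative ℤ)
    (ha : a ∉ constantMonomials E t) (b : Eˣ × Multiplicative ℤ) :
    ∃ k < p, b / a ^ k ∈ constantMonomials E t := by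
  have a_ne_zero : (a.2.toAdd : ZMod p) ≠ 0 := fun h =>
    ha (mem_constantMonomials_of_dvd ht ((ZMod.intCast_zmod_eq_zero_iff_dvd _ p).1 h))
  refine ⟨(b.2.toAdd / a.2.toAdd : ZMod p).val, ZMod.val_lt _,
    mem_constantMonomials_of_dvd ht ((ZMod.intCast_zmod_eq_zero_iff_dvd _ p).1 ?_)⟩
  simp [div_mul_cancel₀ _ a_ne_zero]

variable [LinearOrderedCommGroupWithZero Γ₀] (v : Valuation L Γ₀)

open IntermediateField in
lemma exists_forall_eq_mul_pow [Fact p.Prime] (ht : (t : L) ^ p ∈ (algebraMap E L).range)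
    (ht' : (t : L) ∉ (algebraMap E L).range) (s : Finset (E × ℕ))
    (hs : ∀ x ∈ s, v (algebraMap E L x.1 * t ^ x.2) ≤ 1) :
    ∃ w ∈ E⟮(t : L)⟯, v w ≤ 1 ∧ w ∉ (algebraMap E L).range ∧
      ∀ x ∈ s, ∃ c : E, v (algebraMap E L c) ≤ 1 ∧
        ∃ j : ℕ, algebraMap E L c * w ^ j = algebraMap E L x.1 * t ^ x.2 := by
  classical
  let O : Submonoid (Eˣ × Multiplicative ℤ) :=
    v.integer.toSubmonoid.comap ((Units.coeHom L).comp (monomialHom E t))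
  have mem_O (m) : m ∈ O ↔ v (monomialHom E t m : L) ≤ 1 := Iff.rfl
  have hO (m) : m ∈ O ∨ m⁻¹ ∈ O := by
    simpa only [mem_O, map_inv, Units.val_inv_eq_inv_val, map_inv₀] using
      (le_total (v (monomialHom E t m : L)) 1).imp_right inv_le_one_of_one_le₀
  have ne_top : constantMonomials E t ≠ ⊤ := fun h =>
    ht' (by simpa [mem_constantMonomials, monomialHom] using
      (Subgroup.eq_top_iff' _).1 h (1, Multiplicative.ofAdd 1))
  have exists_monomial (x : E × ℕ) (hx : x ∈ s) : ∃ m ∈ O, x.1 ≠ 0 →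
      (monomialHom E t m : L) = algebraMap E L x.1 * t ^ x.2 := by
    by_cases hx₀ : x.1 = 0
    · exact ⟨1, one_mem O, fun h => absurd hx₀ h⟩
    · have eq : (monomialHom E t (Units.mk0 x.1 hx₀, Multiplicative.ofAdd (x.2 : ℤ)) : L) =
        algebraMap E L x.1 * t ^ x.2 := by simp [monomialHom]
      exact ⟨_, (mem_O _).2 (eq ▸ hs x hx), fun _ => eq⟩
  choose! m m_mem hm using exists_monomial
  obtain ⟨w, hw, hwG, hwT⟩ := exists_subset_monomialSubmonoid hO
    (exists_div_pow_mem_constantMonomials ht) ne_top (s.image m) (Finset.forall_mem_image.2 m_mem)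
  refine ⟨monomialHom E t w, monomialHom_mem_adjoin w, hw, mt mem_constantMonomials.2 hwG,
    fun x hx => ?_⟩
  by_cases hx₀ : x.1 = 0
  · exact ⟨0, by simp, 0, by simp [hx₀]⟩
  obtain ⟨d, hd, hdG, j, hj⟩ :=
    mem_monomialSubmonoid.1 (hwT (m x) (Finset.mem_image_of_mem m hx))
  obtain ⟨c, hc⟩ := mem_constantMonomials.1 hdG
  refine ⟨c, hc ▸ hd, j, ?_⟩
  rw [hc, ← hm x hx hx₀, ← hj, map_mul, map_pow, Units.val_mul, Units.val_pow_eq_pow_val]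

end Monomials

section Pseudomonomials

variable {E L Γ₀ : Type*} [Field E] [Field L] [Algebra E L] {p : ℕ} [Fact p.Prime]

open IntermediateField

lemma exists_aeval_eq_of_mem_adjoin {e : E} {u x : L} (hu : algebraMap E L e = u ^ p)
    (hx : x ∈ E⟮u⟯) : ∃ f : E[X], f.natDegree < p ∧ aeval u f = x := by
  have u_alg : IsAlgebraic E u :=
    ⟨X ^ p - C e, X_pow_sub_C_ne_zero (Fact.out : p.Prime).pos e, by simp [hu]⟩
  rw [← IntermediateField.mem_toSubalgebra,
    IntermediateField.adjoin_simple_toSubalgebra_of_isAlgebraic u_alg] at hx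
  obtain ⟨f, rfl⟩ := Algebra.adjoin_mem_exists_aeval E u hx
  refine ⟨f %ₘ (X ^ p - C e),
    natDegree_modByMonic_X_pow_sub_C_lt (Fact.out : p.Prime).pos f e, ?_⟩
  exact aeval_modByMonic_eq_self_of_root (by simp [hu])

variable [CharP L p] [LinearOrderedCommGroupWithZero Γ₀] (v : Valuation L Γ₀)

lemma exists_forall_aeval_mem_closure {e : E} {u : L} (hu : algebraMap E L e = u ^ p)
    (hu' : u ∉ (algebraMap E L).range) (s : Finset E[X]) (hs : ∀ f ∈ s, f.natDegree < p)
    (hs' : ∀ f ∈ s, v (aeval u f) ≤ 1) :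
    ∃ w ∈ E⟮u⟯, v w ≤ 1 ∧ w ∉ (algebraMap E L).range ∧
      ∃ T : Finset E, (∀ c ∈ T, v (algebraMap E L c) ≤ 1) ∧
        ∀ f ∈ s, aeval u f ∈ Subring.closure (insert w (algebraMap E L '' T)) := by
  classical
  obtain ⟨b, hb⟩ := exists_forall_map_taylor_mem_gaussBall v hu s hs
  have hub : u - algebraMap E L b ∉ (algebraMap E L).range := fun h =>
    hu' (by simpa using add_mem h ⟨b, rfl⟩)
  obtain ⟨t, ht⟩ : ∃ t : Lˣ, (t : L) = u - algebraMap E L b :=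
    ⟨Units.mk0 _ fun h => hub (by rw [h]; exact zero_mem _), rfl⟩
  have t_pow : (t : L) ^ p ∈ (algebraMap E L).range :=
    ⟨e - b ^ p, by rw [ht, sub_pow_char, map_sub, map_pow, hu]⟩
  have adjoin_t_le : E⟮(t : L)⟯ ≤ E⟮u⟯ := adjoin_simple_le_iff.2 <|
    ht ▸ sub_mem (mem_adjoin_simple_self E u) (IntermediateField.algebraMap_mem _ b)
  rw [← ht] at hub
  let terms (f : E[X]) : Finset (E × ℕ) := (Finset.range p).image fun k => ((taylor b f).coeff k, k)
  have le_one : ∀ x ∈ s.biUnion terms, v (algebraMap E L x.1 * t ^ x.2) ≤ 1 := by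
    simp only [Finset.mem_biUnion, terms, Finset.mem_image]
    rintro _ ⟨f, hf, k, -, rfl⟩
    simpa only [coeff_map, ht, map_mul, map_pow] using (hb f hf k).trans (hs' f hf)
  obtain ⟨w, hwu, hw, hwE, hwT⟩ := exists_forall_eq_mul_pow v t_pow hub _ le_one
  choose! c c_le j hj using hwT
  refine ⟨w, adjoin_t_le hwu, hw, hwE, (s.biUnion terms).image c, Finset.forall_mem_image.2 c_le,
    fun f hf => ?_⟩
  have aeval_eq :
      aeval u f = ∑ k ∈ Finset.range p, algebraMap E L ((taylor b f).coeff k) * t ^ k := by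
    have natDegree_lt : (taylor b f).natDegree < p := (natDegree_taylor f b).trans_lt (hs f hf)
    simp only [← Algebra.smul_def]
    rw [← aeval_eq_sum_range' natDegree_lt, ht, ← eval_map_algebraMap (taylor b f), map_taylor,
      taylor_eval, sub_add_cancel, eval_map_algebraMap]
  rw [aeval_eq]
  refine sum_mem fun k hk => ?_
  have mem_terms : ((taylor b f).coeff k, k) ∈ s.biUnion terms :=
    Finset.mem_biUnion.2 ⟨f, hf, Finset.mem_image_of_mem _ hk⟩
  rw [← hj _ mem_terms]
  refine mul_mem (Subring.subset_closure (Or.inr ?_))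
    (pow_mem (Subring.subset_closure (Set.mem_insert _ _)) _)
  exact Set.mem_image_of_mem _ (Finset.mem_coe.2 (Finset.mem_image_of_mem c mem_terms))

theorem exists_subset_closure_insert {e : E} {u : L} (hu : algebraMap E L e = u ^ p)
    (hu' : u ∉ (algebraMap E L).range) (s : Finset L) (hs : ∀ x ∈ s, x ∈ E⟮u⟯)
    (hs' : ∀ x ∈ s, v x ≤ 1) :
    ∃ w ∈ E⟮u⟯, v w ≤ 1 ∧ w ∉ (algebraMap E L).range ∧
      ∃ T : Finset E, (∀ c ∈ T, v (algebraMap E L c) ≤ 1) ∧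
        (s : Set L) ⊆ Subring.closure (insert w (algebraMap E L '' T)) := by
  classical
  choose! f natDegree_f aeval_f using fun x hx => exists_aeval_eq_of_mem_adjoin hu (hs x hx)
  obtain ⟨w, hwu, hw, hwE, T, hT, h⟩ := exists_forall_aeval_mem_closure v hu hu' (s.image f)
    (Finset.forall_mem_image.2 natDegree_f)
    (Finset.forall_mem_image.2 fun x hx => (aeval_f x hx).symm ▸ hs' x hx)
  exact ⟨w, hwu, hw, hwE, T, hT, fun x hx => aeval_f x hx ▸ h _ (Finset.mem_image_of_mem f hx)⟩

end Pseudomonomials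

/-- A subring `R'` of `R` encoding a section of `R ⧸ (ker π)² → S` over `π(R')` as in
`HasLocalSections`, and containing all `p`-th powers: the section then takes `π(r)ᵖ` to the class
of `rᵖ`, so that it can be extended by `p`-th roots. -/
structure IsFrobeniusSection (p : ℕ) {R S : Type*} [CommRing R] [CommRing S] (π : R →+* S)
    (R' : Subring R) : Prop where
  pow_mem : ∀ r : R, r ^ p ∈ R'
  mem_ker_sq : ∀ r ∈ R', π r = 0 → r ∈ RingHom.ker π ^ 2

section FrobeniusSections

variable {p : ℕ} [Fact p.Prime] {R S : Type*} [CommRing R] [CommRing S]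

lemma isFrobeniusSection_frobenius_range [CharP R p] [IsReduced S] (π : R →+* S) :
    IsFrobeniusSection p π (frobenius R p).range where
  pow_mem r := ⟨r, rfl⟩
  mem_ker_sq := by
    rintro _ ⟨r, rfl⟩ hr
    rw [frobenius_def, map_pow] at hr
    exact Ideal.pow_le_pow_right (Fact.out : p.Prime).two_le
      (Ideal.pow_mem_pow (eq_zero_of_pow_eq_zero hr) p)

lemma exists_eval₂_eq_of_mem_closure_insert {R' : Subring R} {r c : R}
    (hc : c ∈ Subring.closure (insert r (R' : Set R))) :
    ∃ f : R'[X], f.eval₂ R'.subtype r = c := by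
  suffices Subring.closure (insert r (R' : Set R)) ≤ (eval₂RingHom R'.subtype r).range from this hc
  exact Subring.closure_le.2 (Set.insert_subset ⟨X, by simp⟩ fun c hc => ⟨C ⟨c, hc⟩, by simp⟩)

lemma IsFrobeniusSection.closure_insert [Nontrivial R] {π : R →+* S} {R' : Subring R}
    (h : IsFrobeniusSection p π R') {r : R}
    (hr : ∀ f : R'[X], f.degree < p → f.eval₂ (π.comp R'.subtype) (π r) = 0 →
      f.map (π.comp R'.subtype) = 0) :
    IsFrobeniusSection p π (Subring.closure (insert r (R' : Set R))) where
  pow_mem c := Subring.subset_closure (Or.inr (h.pow_mem c))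
  mem_ker_sq := by
    intro c hc hf
    obtain ⟨f, rfl⟩ := exists_eval₂_eq_of_mem_closure_insert hc
    let g : R'[X] := X ^ p - C ⟨r ^ p, h.pow_mem r⟩
    have g_monic : g.Monic := monic_X_pow_sub_C _ (Fact.out : p.Prime).ne_zero
    have eval_mod : (f %ₘ g).eval₂ R'.subtype r = f.eval₂ R'.subtype r := by
      conv_rhs => rw [← modByMonic_add_div f g]
      simp [g, eval₂_add, eval₂_mul]
    have mod_eq_zero : (f %ₘ g).map (π.comp R'.subtype) = 0 := by
      refine hr _ ((degree_modByMonic_lt f g_monic).trans_eq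
        (degree_X_pow_sub_C (Fact.out : p.Prime).pos _)) ?_
      rw [← hom_eval₂, eval_mod, hf]
    rw [← eval_mod, eval₂_eq_sum_range]
    refine sum_mem fun i _ => Ideal.mul_mem_right _ _ (h.mem_ker_sq _ (SetLike.coe_mem _) ?_)
    simpa using congrArg (coeff · i) mod_eq_zero

end FrobeniusSections

section FrobeniusSectionsOver

variable {p : ℕ} [Fact p.Prime]

lemma eq_zero_of_aeval_eq_zero_of_degree_lt {E L : Type*} [Field E] [Field L] [Algebra E L]
    [CharP L p] {e : E} {w : L} (hw : algebraMap E L e = w ^ p)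
    (hw' : w ∉ (algebraMap E L).range) {f : E[X]} (hf : f.degree < p) (h : aeval w f = 0) :
    f = 0 := by
  have irreducible : Irreducible (X ^ p - C e) :=
    X_pow_sub_C_irreducible_of_prime Fact.out fun b hb =>
      hw' ⟨b, frobenius_inj L p (by rw [frobenius_def, frobenius_def, ← map_pow, hb, hw])⟩
  have minpoly_eq : X ^ p - C e = minpoly E w :=
    minpoly.eq_of_irreducible_of_monic irreducible (by simp [hw])
      (monic_X_pow_sub_C e (Fact.out : p.Prime).ne_zero)
  by_contra f_ne_zero
  refine hf.not_ge ?_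
  rw [← degree_X_pow_sub_C (Fact.out : p.Prime).pos e, minpoly_eq]
  exact minpoly.degree_le_of_ne_zero E w f_ne_zero h

lemma bot_toSubfield_subfield {L : Type*} [Field L] (E : Subfield L) :
    (⊥ : IntermediateField E L).toSubfield = E :=
  IntermediateField.bot_toSubfield.trans E.fieldRange_subtype

/-- Frobenius sections over arbitrarily large subrings of `S ∩ E`, where `E` is a subfield of an
extension field `L` of `S`. -/
def HasFrobeniusSections (p : ℕ) {R S L : Type*} [CommRing R] [CommRing S] [Field L] [Algebra S L]
    (π : R →+* S) (E : Subfield L) : Prop :=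
  ∀ T : Finset S, (∀ y ∈ T, algebraMap S L y ∈ E) → ∃ R' : Subring R,
    IsFrobeniusSection p π R' ∧ (∀ r ∈ R', algebraMap S L (π r) ∈ E) ∧ (T : Set S) ⊆ π '' R'

variable {R S L Γ₀ : Type*} [CommRing R] [CommRing S] [Field L] [Algebra S L] [CharP L p]
  [LinearOrderedCommGroupWithZero Γ₀] {v : Valuation L Γ₀} {π : R →+* S}

lemma hasFrobeniusSections_frobenius_fieldRange [CharP R p] (hv : v.Integers S)
    (hπ : Function.Surjective π) : HasFrobeniusSections p π (frobenius L p).fieldRange := by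
  have : IsReduced S := isReduced_of_injective _ hv.hom_inj
  refine fun T hT => ⟨_, isFrobeniusSection_frobenius_range π, ?_, fun y hy => ?_⟩
  · rintro _ ⟨r, rfl⟩
    exact ⟨algebraMap S L (π r), by simp [frobenius_def]⟩
  · obtain ⟨x, hx⟩ := hT y hy
    rw [frobenius_def] at hx
    have x_le_one : v x ≤ 1 :=
      (pow_le_one_iff (Fact.out : p.Prime).ne_zero).1 (by simpa [← hx] using hv.map_le_one y)
    obtain ⟨z, rfl⟩ := hv.exists_of_le_one x_le_one
    obtain ⟨r, rfl⟩ := hπ z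
    exact ⟨_, ⟨r, rfl⟩, hv.hom_inj (by rw [frobenius_def, map_pow, map_pow, hx])⟩

lemma IsFrobeniusSection.closure_insert_of_notMem (hv : v.Integers S) {E : Subfield L}
    {R' : Subring R} (h : IsFrobeniusSection p π R') (hE : ∀ r ∈ R', algebraMap S L (π r) ∈ E)
    {r : R} (hr : algebraMap S L (π r) ∉ E) :
    IsFrobeniusSection p π (Subring.closure (insert r (R' : Set R))) := by
  have : Nontrivial R := nontrivial_of_ne r 0 fun h => hr (by simp [h])
  refine h.closure_insert fun f hf hfr => ?_
  let σ : R' →+* E :=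
    ((algebraMap S L).comp (π.comp R'.subtype)).codRestrict E fun r => hE r r.2
  have hσ : (algebraMap E L).comp σ = (algebraMap S L).comp (π.comp R'.subtype) := rfl
  have map_eq_zero : f.map σ = 0 := by
    refine eq_zero_of_aeval_eq_zero_of_degree_lt (p := p) (w := algebraMap S L (π r))
      (e := σ ⟨r ^ p, h.pow_mem r⟩) ?_ (fun ⟨x, hx⟩ => hr (hx ▸ x.2))
      (degree_map_le.trans_lt hf) ?_
    · rw [← RingHom.comp_apply, hσ]
      simp
    · rw [aeval_def, eval₂_map, hσ, ← hom_eval₂, hfr, map_zero]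
  refine map_injective _ hv.hom_inj ?_
  rw [Polynomial.map_map, ← hσ, ← Polynomial.map_map, map_eq_zero, Polynomial.map_zero,
    Polynomial.map_zero]

open IntermediateField in
lemma HasFrobeniusSections.adjoin_simple (hv : v.Integers S) (hπ : Function.Surjective π)
    {E : Subfield L} (h : HasFrobeniusSections p π E) {u : L} (hu : u ^ p ∈ E) :
    HasFrobeniusSections p π E⟮u⟯.toSubfield := by
  classical
  by_cases huE : u ∈ E
  · have u_mem_bot : u ∈ (⊥ : IntermediateField E L) := mem_bot.2 ⟨⟨u, huE⟩, rfl⟩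
    rwa [adjoin_simple_eq_bot_iff.2 u_mem_bot, bot_toSubfield_subfield]
  intro T hT
  obtain ⟨w, hwu, hw, hwE, C, hC, hTC⟩ := exists_subset_closure_insert v (E := E)
    (e := ⟨u ^ p, hu⟩) rfl (fun ⟨x, hx⟩ => huE (hx ▸ x.2)) (T.image (algebraMap S L))
    (Finset.forall_mem_image.2 hT) (Finset.forall_mem_image.2 fun y _ => hv.map_le_one y)
  obtain ⟨y, rfl⟩ := hv.exists_of_le_one hw
  obtain ⟨r, rfl⟩ := hπ y
  choose! lift hlift using fun c hc => hv.exists_of_le_one (hC c hc)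
  obtain ⟨R', hR', hRE, hCR⟩ := h (C.image lift)
    (Finset.forall_mem_image.2 fun c hc => by rw [hlift c hc]; exact c.2)
  have hr : algebraMap S L (π r) ∉ E := fun h => hwE ⟨⟨_, h⟩, rfl⟩
  refine ⟨_, hR'.closure_insert_of_notMem hv hRE hr, ?_, fun y hy => ?_⟩
  · suffices Subring.closure (insert r (R' : Set R)) ≤
        E⟮u⟯.toSubring.comap ((algebraMap S L).comp π) from this
    exact Subring.closure_le.2 (Set.insert_subset hwu fun c hc =>
      E⟮u⟯.algebraMap_mem ⟨_, hRE c hc⟩)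
  · have closure_le : Subring.closure (insert (algebraMap S L (π r)) (algebraMap E L '' C)) ≤
        (Subring.closure (insert r (R' : Set R))).map ((algebraMap S L).comp π) := by
      refine Subring.closure_le.2 (Set.insert_subset
        ⟨r, Subring.subset_closure (Set.mem_insert _ _), rfl⟩
        (Set.image_subset_iff.2 fun c hc => ?_))
      obtain ⟨q, hq, hqc⟩ := hCR (Finset.mem_coe.2 (Finset.mem_image_of_mem lift hc))
      exact ⟨q, Subring.subset_closure (Or.inr hq), by rw [RingHom.comp_apply, hqc, hlift c hc]⟩
    obtain ⟨q, hq, hqy⟩ := closure_le (hTC (Finset.mem_image_of_mem _ hy))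
    exact ⟨q, hq, hv.hom_inj hqy⟩

open IntermediateField in
theorem exists_isFrobeniusSection [CharP R p] (hv : v.Integers S)
    (hπ : Function.Surjective π) (T : Finset S) :
    ∃ R' : Subring R, IsFrobeniusSection p π R' ∧ (T : Set S) ⊆ π '' R' := by
  classical
  let F := (frobenius L p).fieldRange
  have h : HasFrobeniusSections p π (adjoin F (T.image (algebraMap S L) : Set L)).toSubfield := by
    refine induction_on_adjoin_finset _
      (fun E : IntermediateField F L => HasFrobeniusSections p π E.toSubfield) ?_
      fun E x _ hE => hE.adjoin_simple hv hπ (E.algebraMap_mem ⟨x ^ p, x, rfl⟩)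
    rw [bot_toSubfield_subfield]
    exact hasFrobeniusSections_frobenius_fieldRange hv hπ
  obtain ⟨R', hR', -, hT⟩ := h T fun y hy =>
    subset_adjoin F _ (Finset.mem_coe.2 (Finset.mem_image_of_mem _ hy))
  exact ⟨R', hR', hT⟩

end FrobeniusSectionsOver

section ValuationRings

lemma valuation_integers (S L : Type*) [CommRing S] [IsDomain S] [ValuationRing S] [Field L]
    [Algebra S L] [IsFractionRing S L] : (ValuationRing.valuation S L).Integers S where
  hom_inj := IsFractionRing.injective S L
  map_le_one x := (ValuationRing.mem_integer_iff S L _).2 ⟨x, rfl⟩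
  exists_of_le_one _ h := (ValuationRing.mem_integer_iff S L _).1 h

theorem hasLocalSections_of_surjective {p : ℕ} [Fact p.Prime] {R S : Type*} [CommRing R]
    [CommRing S] [IsDomain S] [ValuationRing S] [Algebra (ZMod p) R] [Algebra (ZMod p) S]
    {π : R →ₐ[ZMod p] S} (hπ : Function.Surjective π) : HasLocalSections π := by
  intro T
  have : Nontrivial R := hπ.nontrivial
  have : CharP R p := charP_of_injective_algebraMap (algebraMap (ZMod p) R).injective p
  have : CharP S p := charP_of_injective_algebraMap (algebraMap (ZMod p) S).injective p
  have : CharP (FractionRing S) p :=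
    charP_of_injective_algebraMap (IsFractionRing.injective S (FractionRing S)) p
  obtain ⟨R', hR', hT⟩ := exists_isFrobeniusSection (p := p)
    (valuation_integers S (FractionRing S)) (π := (π : R →+* S)) hπ T
  refine ⟨{ R' with algebraMap_mem' := fun c => ?_ }, hR'.mem_ker_sq, hT⟩
  change algebraMap (ZMod p) R c ∈ R'
  simpa only [← map_pow, ZMod.pow_card] using hR'.pow_mem (algebraMap (ZMod p) R c)

variable {p : ℕ} [Fact p.Prime] {S : Type*} [CommRing S] [IsDomain S] [ValuationRing S]
  [Algebra (ZMod p) S]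

lemma hasLocalSections_aeval_val {ι : Type*} (P : Algebra.Generators (ZMod p) S ι) :
    HasLocalSections (MvPolynomial.aeval (R := ZMod p) P.val) :=
  hasLocalSections_of_surjective P.aeval_val_surjective

instance subsingleton_h1Cotangent_zmod : Subsingleton (Algebra.H1Cotangent (ZMod p) S) :=
  (Algebra.Extension.subsingleton_h1Cotangent _).2
    (hasLocalSections_aeval_val (.self (ZMod p) S)).injective_cotangentComplex

instance flat_kaehlerDifferential_zmod : Module.Flat S (Ω[S⁄ZMod p]) := by
  rw [Module.Flat.flat_iff_torsion_eq_bot_of_isBezout, ← Submodule.isTorsionFree_iff_torsion_eq_bot]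
  exact (hasLocalSections_aeval_val (.self (ZMod p) S)).isTorsionFree_kaehlerDifferential

theorem isTorsionFree_h1Cotangent (p : ℕ) [Fact p.Prime] (A B : Type*) [CommRing A] [IsDomain A]
    [ValuationRing A] [CharP A p] [CommRing B] [IsDomain B] [ValuationRing B] [CharP B p]
    [Algebra A B] : Module.IsTorsionFree B (Algebra.H1Cotangent A B) := by
  let : Algebra (ZMod p) A := ZMod.algebra A p
  let : Algebra (ZMod p) B := ZMod.algebra B p
  have : IsScalarTower (ZMod p) A B := IsScalarTower.of_algebraMap_eq' (RingHom.ext_zmod _ _)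
  have injective_δ : Function.Injective (Algebra.H1Cotangent.δ (ZMod p) A B) := by
    refine (injective_iff_map_eq_zero _).2 fun x hx => ?_
    obtain ⟨y, rfl⟩ := (Algebra.H1Cotangent.exact_map_δ (ZMod p) A B x).1 hx
    rw [Subsingleton.elim y 0, map_zero]
  exact Function.Injective.moduleIsTorsionFree _ injective_δ (map_smul _)

end ValuationRings

section Finrank
open Algebra.Extension

lemma finrank_tensorProduct_h1Cotangent_of_isLocalization {A B K L : Type*} [CommRing A]
    [CommRing B] [CommRing K] [CommRing L] [Algebra A B] [Algebra A K] [Algebra A L] [Algebra B L]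
    [Algebra K L] [IsScalarTower A B L] [IsScalarTower A K L] [Module.Flat K L]
    (M : Submonoid A) [IsLocalization M K] (N : Submonoid B) [IsLocalization N L] :
    Module.finrank L (L ⊗[B] Algebra.H1Cotangent A B) =
      Module.finrank L (Algebra.H1Cotangent K L) := by
  have : Algebra.FormallyEtale A K := Algebra.FormallyEtale.of_isLocalization M
  have bijective_map : Function.Bijective (Algebra.H1Cotangent.map A K L L) := by
    refine ⟨(injective_iff_map_eq_zero _).2 fun x hx => ?_, fun y =>
      (Algebra.H1Cotangent.exact_map_δ A K L y).1 (Subsingleton.elim _ _)⟩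
    obtain ⟨z, rfl⟩ := (Algebra.H1Cotangent.exact_liftBaseChange_map_of_flat A K L x).1 hx
    rw [Subsingleton.elim z 0, map_zero]
  rw [(Algebra.tensorH1CotangentOfIsLocalization A L N).finrank_eq,
    (LinearEquiv.ofBijective _ bijective_map).finrank_eq]

lemma cotangentComplex_eq_zero_of_ker_eq_span_singleton {R S : Type*} [CommRing R] [CommRing S]
    [Algebra R S] {P : Algebra.Extension R S} {a : P.Ring} (ha : P.ker = Ideal.span {a})
    (hD : KaehlerDifferential.D R P.Ring a = 0) : P.cotangentComplex = 0 := by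
  ext x
  obtain ⟨⟨y, hy⟩, rfl⟩ := Cotangent.mk_surjective x
  obtain ⟨b, rfl⟩ := Ideal.mem_span_singleton.1 (ha ▸ hy)
  have algebraMap_eq_zero : algebraMap P.Ring S a = 0 := ha.ge (Ideal.mem_span_singleton_self a)
  rw [cotangentComplex_mk, Derivation.leibniz, hD, smul_zero, add_zero, TensorProduct.tmul_smul,
    ← algebraMap_smul S a, algebraMap_eq_zero, zero_smul, LinearMap.zero_apply]

lemma finrank_cotangent_of_ker_eq_span_singleton {R S : Type*} [CommRing R] [Field S] [Algebra R S]
    {P : Algebra.Extension R S} [IsDomain P.Ring] {a : P.Ring} (ha : P.ker = Ideal.span {a})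
    (ha' : a ≠ 0) : Module.finrank S P.Cotangent = 1 := by
  have a_mem : a ∈ P.ker := ha ▸ Ideal.mem_span_singleton_self a
  refine (finrank_eq_one_iff_of_nonzero' (.mk ⟨a, a_mem⟩) fun h => ?_).2 fun x => ?_
  · have a_sq_dvd : a ^ 2 ∣ a ^ 1 := by
      have a_mem_sq : a ∈ P.ker ^ 2 := (Cotangent.mk_eq_zero_iff _).1 h
      rwa [pow_one, ← Ideal.mem_span_singleton, ← Ideal.span_singleton_pow, ← ha]
    have not_isUnit : ¬IsUnit a := fun h =>
      RingHom.ker_ne_top (algebraMap P.Ring S) (Ideal.eq_top_of_isUnit_mem _ a_mem h)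
    exact absurd ((pow_dvd_pow_iff ha' not_isUnit).1 a_sq_dvd) (by decide)
  · obtain ⟨⟨y, hy⟩, rfl⟩ := Cotangent.mk_surjective x
    obtain ⟨b, rfl⟩ := Ideal.mem_span_singleton'.1 (ha ▸ hy)
    refine ⟨algebraMap P.Ring S b, ?_⟩
    rw [algebraMap_smul, ← map_smul]
    rfl

lemma finrank_h1Cotangent_adjoinRoot {K : Type*} [Field K] {f : K[X]} [hf : Fact (Irreducible f)]
    (hf' : derivative f = 0) :
    Module.finrank (AdjoinRoot f) (Algebra.H1Cotangent K (AdjoinRoot f)) = 1 := by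
  let P : Algebra.Extension K (AdjoinRoot f) :=
    .ofSurjective (AdjoinRoot.mkₐ f) AdjoinRoot.mk_surjective
  have : Algebra.FormallySmooth K P.Ring := inferInstanceAs (Algebra.FormallySmooth K K[X])
  have : IsDomain P.Ring := inferInstanceAs (IsDomain K[X])
  have ker_eq : P.ker = Ideal.span {f} := by
    ext g
    exact AdjoinRoot.mk_eq_zero.trans Ideal.mem_span_singleton.symm
  have D_eq_zero : KaehlerDifferential.D K P.Ring f = 0 :=
    (KaehlerDifferential.polynomialEquiv K).map_eq_zero_iff.1
      ((KaehlerDifferential.polynomialEquiv_D K f).trans hf')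
  have bijective_ι : Function.Bijective P.h1Cotangentι := ⟨h1Cotangentι_injective, fun x =>
    ⟨⟨x, by rw [cotangentComplex_eq_zero_of_ker_eq_span_singleton ker_eq D_eq_zero]; rfl⟩, rfl⟩⟩
  rw [← P.equivH1CotangentOfFormallySmooth.finrank_eq,
    (LinearEquiv.ofBijective _ bijective_ι).finrank_eq]
  exact finrank_cotangent_of_ker_eq_span_singleton ker_eq hf.out.ne_zero

end Finrank

lemma exists_prime_charP_of_derivative_eq_zero {R : Type*} [CommRing R] [IsDomain R] {f : R[X]}
    (hf : f.natDegree ≠ 0) (hf' : derivative f = 0) : ∃ p, p.Prime ∧ CharP R p := by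
  obtain ⟨p, hp⟩ := CharP.exists R
  refine ⟨p, (CharP.char_is_prime_or_zero R p).resolve_right ?_, hp⟩
  rintro rfl
  have : CharZero R := CharP.charP_to_charZero R
  exact hf (derivative_eq_zero.1 hf')

section UnitBall

variable {L : Type*} [Field L] (v : AddValuation L (WithTop ℝ))

lemma mem_or_inv_mem_unitBall (x : L) : x ∈ v.unitBall ∨ x⁻¹ ∈ v.unitBall := by
  by_cases hx : x = 0
  · exact Or.inl (hx ▸ zero_mem _)
  by_contra! h
  have sum_neg : v x + v x⁻¹ < 0 + 0 :=
    WithTop.add_lt_add (lt_of_not_ge h.1) (lt_of_not_ge h.2)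
  rw [← AddValuation.map_mul, mul_inv_cancel₀ hx, AddValuation.map_one, add_zero] at sum_neg
  exact lt_irrefl _ sum_neg

instance valuationRing_unitBall : ValuationRing v.unitBall where
  cond' a b := by
    by_cases hb : (b : L) = 0
    · exact ⟨0, Or.inl (Subtype.ext (by simp [hb]))⟩
    by_cases ha : (a : L) = 0
    · exact ⟨0, Or.inr (Subtype.ext (by simp [ha]))⟩
    rcases mem_or_inv_mem_unitBall v ((b : L) / a) with h | h
    · exact ⟨⟨_, h⟩, Or.inl (Subtype.ext (mul_div_cancel₀ _ ha))⟩
    · exact ⟨⟨_, h⟩, Or.inr (Subtype.ext <| by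
        change (b : L) * ((b : L) / a)⁻¹ = a
        rw [inv_div, mul_div_cancel₀ _ hb])⟩

instance isFractionRing_unitBall : IsFractionRing v.unitBall L := by
  refine IsFractionRing.of_field _ _ fun x => ?_
  rcases mem_or_inv_mem_unitBall v x with h | h
  · exact ⟨⟨x, h⟩, 1, by rw [map_one, div_one]; rfl⟩
  · exact ⟨1, ⟨x⁻¹, h⟩, by rw [map_one, one_div]; exact (inv_inv x).symm⟩

end UnitBall

theorem h1Cotangent_integers_of_inseparable_general {K : Type*} [Field K]
    {f : Polynomial K} [hirr : Fact (Irreducible f)] (hder : Polynomial.derivative f = 0)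
    (A B : Type*) [CommRing A] [IsDomain A] [ValuationRing A] [Algebra A K] [IsFractionRing A K]
    [CommRing B] [IsDomain B] [ValuationRing B] [Algebra B (AdjoinRoot f)]
    [IsFractionRing B (AdjoinRoot f)] [Algebra A B] [IsScalarTower A B (AdjoinRoot f)] :
    Nontrivial (Algebra.H1Cotangent A B) ∧
    (∀ (r : B) (m : Algebra.H1Cotangent A B), r • m = 0 → r = 0 ∨ m = 0) ∧
    Module.finrank (AdjoinRoot f)
      (TensorProduct B (AdjoinRoot f) (Algebra.H1Cotangent A B)) = 1 := by
  have finrank_eq_one := (finrank_tensorProduct_h1Cotangent_of_isLocalization (K := K)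
    (nonZeroDivisors A) (nonZeroDivisors B)).trans (finrank_h1Cotangent_adjoinRoot hder)
  refine ⟨?_, ?_, finrank_eq_one⟩
  · by_contra h
    rw [not_nontrivial_iff_subsingleton] at h
    exact zero_ne_one (Module.finrank_zero_of_subsingleton.symm.trans finrank_eq_one)
  · obtain ⟨p, hp, _⟩ :=
      exists_prime_charP_of_derivative_eq_zero hirr.out.natDegree_pos.ne' hder
    have : Fact p.Prime := ⟨hp⟩
    have : CharP (AdjoinRoot f) p :=
      charP_of_injective_algebraMap (algebraMap K (AdjoinRoot f)).injective p
    have : CharP A p := (RingHom.charP_iff _ (IsFractionRing.injective A K) p).2 inferInstance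
    have : CharP B p :=
      (RingHom.charP_iff _ (IsFractionRing.injective B (AdjoinRoot f)) p).2 inferInstance
    have := isTorsionFree_h1Cotangent p A B
    exact fun r m => smul_eq_zero.1

/-- Let `(K, v_K)` be a field with a non-trivial real-valued valuation, let
`f ∈ K°[T]` be a monic irreducible polynomial with zero formal derivative (so that
`L = K[T]/(f)` is a finite inseparable field extension of `K`), and let `v_L` be a real-valued
valuation on `L` extending `v_K`, with rings of integers `K°` and `L°`.  Then `H₁(𝕃_{L°/K°})`
is a nonzero torsion-free `L°`-module, and the `L`-vector space `L ⊗_{L°} H₁(𝕃_{L°/K°})` is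
one-dimensional. -/
theorem h1Cotangent_integers_of_inseparable
    {K : Type*} [Field K]
    (vK : AddValuation K (WithTop ℝ)) (hnt : vK.IsNontrivial)
    (f : Polynomial K) (hmonic : f.Monic) [hirr : Fact (Irreducible f)]
    (hder : Polynomial.derivative f = 0)
    (hcoeff : ∀ i : ℕ, 0 ≤ vK (f.coeff i))
    (vL : AddValuation (AdjoinRoot f) (WithTop ℝ))
    (hext : ∀ x : K, vL (algebraMap K (AdjoinRoot f) x) = vK x)
    [Algebra vK.unitBall vL.unitBall]
    (hcomp : ∀ x : vK.unitBall,
      (algebraMap vK.unitBall vL.unitBall x : AdjoinRoot f) =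
        algebraMap K (AdjoinRoot f) (x : K)) :
    Nontrivial (Algebra.H1Cotangent vK.unitBall vL.unitBall) ∧
    (∀ (r : vL.unitBall) (m : Algebra.H1Cotangent vK.unitBall vL.unitBall),
      r • m = 0 → r = 0 ∨ m = 0) ∧
    Module.finrank (AdjoinRoot f)
      (TensorProduct vL.unitBall (AdjoinRoot f)
        (Algebra.H1Cotangent vK.unitBall vL.unitBall)) = 1 := by
  have : IsScalarTower vK.unitBall vL.unitBall (AdjoinRoot f) :=
    .of_algebraMap_eq fun x => (hcomp x).symm
  exact h1Cotangent_integers_of_inseparable_general hder vK.unitBall vL.unitBall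
end
end
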